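/- arXiv:0912.2152 — 3 statements merged into one kernel-verified Lean document; each statement's English description precedes it below -/
import Mathlib

section
/- Let k be a field, d an odd integer with d ≥ 5, and m an integer with d+1 < m; set a = (d+1)/2. In R = k[x_1,…,x_m,z_1,z_2] let I = I_{a,2,m−1} + x_1x_m·I_{a−1,3,m−2} and J = I_{a−1,2,m−2} + z_1z_2·I_{a−2,3,m−3}, and let J̄ denote the image of J in R/I, an ideal of R/I regarded as an R/I-module. Then: (1) there exists a unique R/I-linear map φ : J̄ → R/I such that φ(v + I) = 0 for every v ∈ I_{a−1,2,m−2} and φ(z_1z_2w + I) = x_1x_{m−1}x_m·w + I for every w ∈ I_{a−2,3,m−3}; and (2) the R/I-module Hom_{R/I}(J̄, R/I) is generated by the inclusion map ι : J̄ → R/I together with φ. -/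
/-- The variable `x_t` (1-indexed, for `1 ≤ t ≤ n`) of the polynomial ring
`k[x_1, …, x_n]`, realized as `MvPolynomial (Fin n) k`. -/
noncomputable def Xv (k : Type*) [Field k] (n t : ℕ) : MvPolynomial (Fin n) k :=
  if h : 1 ≤ t ∧ t ≤ n then MvPolynomial.X ⟨t - 1, by omega⟩ else 0

/-- The ideal `I_{a,p,q}` of `k[x_1, …, x_n]`, generated by the squarefree monomials
`x_{t_1} ⋯ x_{t_a}` with `p ≤ t_1 < t_2 < ⋯ < t_a ≤ q` and `t_{j+1} ≥ t_j + 2`. -/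
noncomputable def idealI (k : Type*) [Field k] (n a p q : ℕ) :
    Ideal (MvPolynomial (Fin n) k) :=
  Ideal.span { f | ∃ t : ℕ → ℕ, p ≤ t 0 ∧ t (a - 1) ≤ q ∧
    (∀ j, j + 1 < a → t j + 2 ≤ t (j + 1)) ∧
    f = ∏ j ∈ Finset.range a, Xv k n (t j) }

set_option synthInstance.maxHeartbeats 1000000
set_option maxHeartbeats 1000000

/-!
`I` is the Stanley–Reisner ideal of a triangulated sphere on `x_1, …, x_m`, coned over `z_1` and
`z_2`: the link of a vertex in the boundary of a cyclic polytope, whose faces Gale's evenness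
condition describes by covers with edges of a path. Any face avoiding a vertex `x_t` lies in a face
that no longer is one after adding `x_t`; hence a linear map into `R / I` sends each monomial
generator to a multiple of itself, and on the `z_1 z_2`-part, after subtracting a multiple of the
inclusion so that the map kills `I_{a-1,2,m-2}`, to a multiple of `x_1 x_{m-1} x_m` times the
generator `w`. The quotients agree coefficientwise for two generators that span a common face, and
any two generators of the link of a face are joined by a chain of such pairs: in the run at which
two sparse sets first differ, read from above, the lowest element can be moved down by one. So the
quotients glue to a single multiplier on each part, and these are the coefficients of `ι` and `φ`.
-/

section

open Finset MvPolynomial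

section SparseSets

/-- A set of integers without two consecutive elements, the index set of a generator of
`I_{a,p,q}`. -/
def IsSparse (s : Finset ℕ) : Prop :=
  ∀ x ∈ s, x + 1 ∉ s

/-- `B` is covered by at most `n` edges `{i, i + 1}` of the infinite path on `ℕ`; an edge is encoded
by its smaller endpoint. -/
def PairCoverable (n : ℕ) (B : Finset ℕ) : Prop :=
  ∃ E : Finset ℕ, #E ≤ n ∧ ∀ x ∈ B, ∃ i ∈ E, x = i ∨ x = i + 1

lemma IsSparse.subset {s t : Finset ℕ} (ht : IsSparse t) (hst : s ⊆ t) : IsSparse s :=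
  fun x hx hx' => ht x (hst hx) (hst hx')

lemma IsSparse.insert_of_notMem {s : Finset ℕ} {x : ℕ} (hs : IsSparse s) (hx : x + 1 ∉ s)
    (hx' : ∀ y ∈ s, y + 1 ≠ x) : IsSparse (insert x s) := by
  intro y hy hy'
  rcases mem_insert.1 hy with rfl | hy <;> rcases mem_insert.1 hy' with h | h
  · omega
  · exact hx h
  · exact hx' y hy h
  · exact hs y hy h

lemma PairCoverable.mono {n : ℕ} {B C : Finset ℕ} (hC : PairCoverable n C) (hBC : B ⊆ C) :
    PairCoverable n B :=
  let ⟨E, hE, hcov⟩ := hC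
  ⟨E, hE, fun x hx => hcov x (hBC hx)⟩

lemma PairCoverable.insert_pair {n : ℕ} {B C : Finset ℕ} (hB : PairCoverable n B) (i : ℕ)
    (hC : ∀ x ∈ C, x ∈ B ∨ x = i ∨ x = i + 1) : PairCoverable (n + 1) C := by
  obtain ⟨E, hE, hcov⟩ := hB
  refine ⟨insert i E, (card_insert_le i E).trans (by omega), fun x hx => ?_⟩
  rcases hC x hx with h | h
  · obtain ⟨j, hj, hxj⟩ := hcov x h
    exact ⟨j, mem_insert_of_mem hj, hxj⟩
  · exact ⟨i, mem_insert_self i E, h⟩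

lemma card_image_add_two_mul (b n : ℕ) : #((range n).image fun j => b + 2 * j) = n := by
  rw [card_image_of_injective _ fun i j hij => by simpa using hij, card_range]

lemma pairCoverable_Ico (p n : ℕ) : PairCoverable n (Ico p (p + 2 * n)) := by
  refine ⟨(range n).image fun j => p + 2 * j, (card_image_add_two_mul p n).le, fun x hx => ?_⟩
  rw [mem_Ico] at hx
  exact ⟨p + 2 * ((x - p) / 2), mem_image_of_mem _ (mem_range.2 (by omega)), by omega⟩

lemma IsSparse.card_le {n : ℕ} {s : Finset ℕ} (hs : IsSparse s) (hn : PairCoverable n s) :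
    #s ≤ n := by
  obtain ⟨E, hE, hcov⟩ := hn
  choose! edge h_edge h_mem using hcov
  refine (card_le_card_of_injOn edge h_edge fun x hx y hy hxy => ?_).trans hE
  have hx' := h_mem x hx
  have hy' := h_mem y hy
  have hxy₁ : x + 1 ≠ y := fun h => hs x hx (h ▸ hy)
  have hyx₁ : y + 1 ≠ x := fun h => hs y hy (h ▸ hx)
  omega

lemma exists_isSparse_cover (B : Finset ℕ) :
    ∃ s ⊆ B, IsSparse s ∧ ∀ x ∈ B, ∃ i ∈ s, x = i ∨ x = i + 1 := by
  induction B using Finset.induction_on_max with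
  | empty => exact ⟨∅, subset_rfl, by simp [IsSparse], by simp⟩
  | insert b B hb ih =>
    obtain ⟨s, hsB, hs, hcov⟩ := ih
    by_cases hbs : ∃ i ∈ s, b = i + 1
    · obtain ⟨i, hi, rfl⟩ := hbs
      exact ⟨s, hsB.trans (subset_insert _ _), hs,
        forall_mem_insert _ _ _ |>.2 ⟨⟨i, hi, Or.inr rfl⟩, hcov⟩⟩
    · push Not at hbs
      refine ⟨insert b s, insert_subset_insert b hsB,
        hs.insert_of_notMem (fun h => by have := hb _ (hsB h); omega) fun y hy => (hbs y hy).symm,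
        forall_mem_insert _ _ _ |>.2 ⟨⟨b, mem_insert_self b s, Or.inl rfl⟩, fun x hx => ?_⟩⟩
      obtain ⟨i, hi, hxi⟩ := hcov x hx
      exact ⟨i, mem_insert_of_mem hi, hxi⟩

lemma exists_isSparse_of_not_pairCoverable {n : ℕ} {B : Finset ℕ} (hB : ¬ PairCoverable n B) :
    ∃ s ⊆ B, IsSparse s ∧ #s = n + 1 := by
  obtain ⟨s, hsB, hs, hcov⟩ := exists_isSparse_cover B
  have hn : n + 1 ≤ #s := by
    by_contra h
    exact hB ⟨s, by omega, hcov⟩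
  obtain ⟨t, hts, ht⟩ := exists_subset_card_eq hn
  exact ⟨t, hts.trans hsB, hs.subset hts, ht⟩

instance : DecidablePred IsSparse := fun s =>
  inferInstanceAs (Decidable (∀ x ∈ s, x + 1 ∉ s))

/-- The index sets `{t_1 < ⋯ < t_n}` of the generators of `I_{n,p,q}`. -/
def sparseSets (p q n : ℕ) : Finset (Finset ℕ) :=
  ((Icc p q).powersetCard n).filter IsSparse

lemma mem_sparseSets {p q n : ℕ} {s : Finset ℕ} :
    s ∈ sparseSets p q n ↔ (s ⊆ Icc p q ∧ #s = n) ∧ IsSparse s := by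
  rw [sparseSets, mem_filter, mem_powersetCard]

lemma exists_mem_sparseSets {p q n : ℕ} {s : Finset ℕ} (hpq : ∀ x ∈ s, p ≤ x ∧ x ≤ q)
    (hs : IsSparse s) (hn : n ≤ #s) : ∃ t ∈ sparseSets p q n, t ⊆ s := by
  obtain ⟨t, hts, ht⟩ := exists_subset_card_eq hn
  exact ⟨t, mem_sparseSets.2 ⟨⟨fun x hx => mem_Icc.2 (hpq x (hts hx)), ht⟩, hs.subset hts⟩, hts⟩

lemma sparseSets_mono {p p' q q' n : ℕ} (hp : p' ≤ p) (hq : q ≤ q') :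
    sparseSets p q n ⊆ sparseSets p' q' n :=
  filter_subset_filter _ (powersetCard_mono (Icc_subset_Icc hp hq))

lemma insert_mem_sparseSets_left {p q n x : ℕ} {s : Finset ℕ} (hs : s ∈ sparseSets p q n)
    (hxp : x + 2 ≤ p) (hxq : x ≤ q) : insert x s ∈ sparseSets x q (n + 1) := by
  obtain ⟨⟨hsp, hsn⟩, h_sparse⟩ := mem_sparseSets.1 hs
  have h_range : ∀ y ∈ s, p ≤ y ∧ y ≤ q := fun y hy => mem_Icc.1 (hsp hy)
  refine mem_sparseSets.2 ⟨⟨insert_subset (left_mem_Icc.2 hxq) fun y hy => ?_,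
    (card_insert_of_notMem fun h => ?_).trans (by rw [hsn])⟩,
    h_sparse.insert_of_notMem (fun h => ?_) fun y hy => ?_⟩
  · exact mem_Icc.2 ⟨by have := h_range y hy; omega, (h_range y hy).2⟩
  all_goals
    have := h_range _ (by assumption)
    omega

lemma insert_mem_sparseSets_right {p q n x : ℕ} {s : Finset ℕ} (hs : s ∈ sparseSets p q n)
    (hpx : p ≤ x) (hqx : q + 2 ≤ x) : insert x s ∈ sparseSets p x (n + 1) := by
  obtain ⟨⟨hsp, hsn⟩, h_sparse⟩ := mem_sparseSets.1 hs
  have h_range : ∀ y ∈ s, p ≤ y ∧ y ≤ q := fun y hy => mem_Icc.1 (hsp hy)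
  refine mem_sparseSets.2 ⟨⟨insert_subset (right_mem_Icc.2 hpx) fun y hy => ?_,
    (card_insert_of_notMem fun h => ?_).trans (by rw [hsn])⟩,
    h_sparse.insert_of_notMem (fun h => ?_) fun y hy => ?_⟩
  · exact mem_Icc.2 ⟨(h_range y hy).1, by have := h_range y hy; omega⟩
  all_goals
    have := h_range _ (by assumption)
    omega

end SparseSets

section Faces

/-- The faces of a triangulated sphere on the vertices `1, …, m`: after deleting one of the two
neighbours `1` and `m` of the vertex `0` in the cycle `0, 1, …, m`, at most `n` edges of the path
`1, …, m` cover the rest. By Gale's evenness condition this is the link of `0` in the boundary of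
the cyclic polytope of dimension `2 n + 2` with vertices `0, …, m`. -/
def IsFace (m n : ℕ) (B : Finset ℕ) : Prop :=
  PairCoverable n (B.erase 1) ∨ PairCoverable n (B.erase m)

lemma IsFace.mono {m n : ℕ} {B C : Finset ℕ} (hC : IsFace m n C) (hBC : B ⊆ C) : IsFace m n B :=
  hC.imp (·.mono (erase_subset_erase 1 hBC)) (·.mono (erase_subset_erase m hBC))

lemma IsSparse.splice {s t : Finset ℕ} (hs : IsSparse s) (ht : IsSparse t) (y : ℕ) :
    IsSparse (s.filter (· < y) ∪ t.filter (y < ·)) := by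
  intro x hx hx'
  simp only [mem_union, mem_filter] at hx hx'
  rcases hx with ⟨hx, hxy⟩ | ⟨hx, hxy⟩ <;> rcases hx' with ⟨hx', hxy'⟩ | ⟨hx', hxy'⟩
  · exact hs x hx hx'
  · omega
  · omega
  · exact ht x hx hx'

lemma card_filter_lt_add_card_filter_gt {s : Finset ℕ} {y : ℕ} (hy : y ∉ s) :
    #(s.filter (· < y)) + #(s.filter (y < ·)) = #s := by
  rw [← card_filter_add_card_filter_not (s := s) (· < y)]
  congr 2
  refine filter_congr fun x hx => ?_
  have : x ≠ y := fun h => hy (h ▸ hx)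
  omega

lemma card_splice_add_card_splice {s t : Finset ℕ} {y : ℕ} (hs : y ∉ s) (ht : y ∉ t) :
    #(s.filter (· < y) ∪ t.filter (y < ·)) + #(t.filter (· < y) ∪ s.filter (y < ·)) =
      #s + #t := by
  have h_disj : ∀ u v : Finset ℕ, Disjoint (u.filter (· < y)) (v.filter (y < ·)) := fun u v =>
    disjoint_left.2 fun x hx hx' => by
      have := (mem_filter.1 hx).2
      have := (mem_filter.1 hx').2
      omega
  rw [card_union_of_disjoint (h_disj s t), card_union_of_disjoint (h_disj t s),
    ← card_filter_lt_add_card_filter_gt hs, ← card_filter_lt_add_card_filter_gt ht]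
  omega

lemma not_isFace_of_isSparse {m n : ℕ} {B s t : Finset ℕ} (hs : IsSparse s) (ht : IsSparse t)
    (hsB : s ⊆ B.erase 1) (htB : t ⊆ B.erase m) (hsn : n < #s) (htn : n < #t) :
    ¬ IsFace m n B := by
  rintro (h | h)
  · exact hsn.not_ge (hs.card_le (h.mono hsB))
  · exact htn.not_ge (ht.card_le (h.mono htB))

lemma not_isFace_of_mem_sparseSets {m n : ℕ} (hm : 0 < m) {B s t : Finset ℕ}
    (hs : s ∈ sparseSets 2 m (n + 1)) (ht : t ∈ sparseSets 1 (m - 1) (n + 1)) (hsB : s ⊆ B)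
    (htB : t ⊆ B) : ¬ IsFace m n B := by
  obtain ⟨⟨hsm, hsn⟩, hs⟩ := mem_sparseSets.1 hs
  obtain ⟨⟨htm, htn⟩, ht⟩ := mem_sparseSets.1 ht
  refine not_isFace_of_isSparse hs ht (subset_erase.2 ⟨hsB, fun h => ?_⟩)
    (subset_erase.2 ⟨htB, fun h => ?_⟩) (by omega) (by omega)
  · have := mem_Icc.1 (hsm h)
    omega
  · have := mem_Icc.1 (htm h)
    omega

lemma exists_sparseSets_of_isSparse {m n : ℕ} {D : Finset ℕ} (hD : IsSparse D)
    (hDm : D ⊆ Icc 1 m) (hn : n + 2 ≤ #D) :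
    (∃ s ∈ sparseSets 2 (m - 1) (n + 1), s ⊆ D) ∨
      ∃ s ∈ sparseSets 3 (m - 2) n, insert 1 (insert m s) ⊆ D := by
  have h_le : ∀ x ∈ D, 1 ≤ x ∧ x ≤ m := fun x hx => mem_Icc.1 (hDm hx)
  have h_erase : ∀ i, n + 1 ≤ #(D.erase i) := fun i => by
    have := pred_card_le_card_erase (s := D) (a := i)
    omega
  by_cases h : 1 ∈ D ∧ m ∈ D
  · have h_card : n ≤ #((D.erase 1).erase m) := by
      have := h_erase 1
      have := pred_card_le_card_erase (s := D.erase 1) (a := m)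
      omega
    have h_subset : (D.erase 1).erase m ⊆ D := (erase_subset _ _).trans (erase_subset _ _)
    obtain ⟨s, hs, hsD⟩ := exists_mem_sparseSets (p := 3) (q := m - 2) (fun x hx => by
      simp only [mem_erase] at hx
      have hx2 : x ≠ 1 + 1 := fun hx2 => hD 1 h.1 (hx2 ▸ hx.2.2)
      have hxm : x + 1 ≠ m := fun hxm => hD x hx.2.2 (hxm ▸ h.2)
      have := h_le x hx.2.2
      omega) (hD.subset h_subset) h_card
    exact Or.inr ⟨s, hs, insert_subset h.1 (insert_subset h.2 (hsD.trans h_subset))⟩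
  · obtain ⟨i, hi⟩ : ∃ i, ∀ x ∈ D.erase i, 2 ≤ x ∧ x ≤ m - 1 := by
      rcases not_and_or.1 h with h | h
      on_goal 1 => refine ⟨m, fun x hx => ?_⟩
      on_goal 2 => refine ⟨1, fun x hx => ?_⟩
      all_goals
        have := ne_of_mem_of_not_mem (mem_of_mem_erase hx) h
        have := ne_of_mem_erase hx
        have := h_le x (mem_of_mem_erase hx)
        omega
    obtain ⟨s, hs, hsD⟩ := exists_mem_sparseSets hi (hD.subset (erase_subset i D)) (h_erase i)
    exact Or.inl ⟨s, hs, hsD.trans (erase_subset _ _)⟩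

-- A sparse set avoiding `1` and one avoiding `m` both miss some `y`. Exchanging their parts above
-- `y` gives a sparse set avoiding `1` and `m`, and another one; their sizes add up to
-- `2 * (n + 1)`.
lemma exists_sparseSets_of_not_isFace {m n : ℕ} (hm : 2 * n + 3 ≤ m) {B : Finset ℕ}
    (hBm : B ⊆ Icc 1 m) (hB : ¬ IsFace m n B) :
    (∃ s ∈ sparseSets 2 (m - 1) (n + 1), s ⊆ B) ∨
      ∃ s ∈ sparseSets 3 (m - 2) n, insert 1 (insert m s) ⊆ B := by
  rw [IsFace, not_or] at hB
  obtain ⟨s, hsB, hs, hsn⟩ := exists_isSparse_of_not_pairCoverable hB.1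
  obtain ⟨t, htB, ht, htn⟩ := exists_isSparse_of_not_pairCoverable hB.2
  have hsB' : s ⊆ B := hsB.trans (erase_subset _ _)
  have htB' : t ⊆ B := htB.trans (erase_subset _ _)
  obtain ⟨y, hym, hy⟩ : ∃ y ∈ Icc 1 m, y ∉ s ∪ t := by
    refine exists_mem_notMem_of_card_lt_card ((card_union_le s t).trans_lt ?_)
    rw [Nat.card_Icc]
    omega
  rw [mem_union, not_or] at hy
  rw [mem_Icc] at hym
  have h_card := card_splice_add_card_splice hy.1 hy.2
  by_cases hA : n + 1 ≤ #(s.filter (· < y) ∪ t.filter (y < ·))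
  · obtain ⟨r, hr, hrA⟩ := exists_mem_sparseSets (p := 2) (q := m - 1) (fun x hx => by
      simp only [mem_union, mem_filter] at hx
      rcases hx with ⟨hx, hxy⟩ | ⟨hx, hxy⟩
      · have := mem_Icc.1 (hBm (hsB' hx))
        have := ne_of_mem_erase (hsB hx)
        omega
      · have := mem_Icc.1 (hBm (htB' hx))
        have := ne_of_mem_erase (htB hx)
        omega) (hs.splice ht y) hA
    exact Or.inl ⟨r, hr, hrA.trans (union_subset ((filter_subset _ _).trans hsB')
      ((filter_subset _ _).trans htB'))⟩
  · have hDB : t.filter (· < y) ∪ s.filter (y < ·) ⊆ B :=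
      union_subset ((filter_subset _ _).trans htB') ((filter_subset _ _).trans hsB')
    exact (exists_sparseSets_of_isSparse (ht.splice hs y) (hDB.trans hBm) (n := n)
      (by omega)).imp (fun ⟨r, hr, hrD⟩ => ⟨r, hr, hrD.trans hDB⟩)
      fun ⟨r, hr, hrD⟩ => ⟨r, hr, hrD.trans hDB⟩

lemma not_isFace_iff {m n : ℕ} (hm : 2 * n + 3 ≤ m) {B : Finset ℕ} (hBm : B ⊆ Icc 1 m) :
    ¬ IsFace m n B ↔ (∃ s ∈ sparseSets 2 (m - 1) (n + 1), s ⊆ B) ∨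
      ∃ s ∈ sparseSets 3 (m - 2) n, insert 1 (insert m s) ⊆ B := by
  refine ⟨exists_sparseSets_of_not_isFace hm hBm, ?_⟩
  rintro (⟨s, hs, hsB⟩ | ⟨s, hs, hsB⟩)
  · exact not_isFace_of_mem_sparseSets (by omega) (sparseSets_mono le_rfl (by omega) hs)
      (sparseSets_mono (by omega) le_rfl hs) hsB hsB
  · refine not_isFace_of_mem_sparseSets (by omega)
      (insert_mem_sparseSets_right (x := m) (sparseSets_mono (by omega) le_rfl hs) (by omega)
        (by omega))
      (insert_mem_sparseSets_left (x := 1) (sparseSets_mono le_rfl (by omega) hs) le_rfl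
        (by omega))
      ((subset_insert 1 _).trans hsB)
      ((insert_subset_insert 1 (subset_insert m s)).trans hsB)

end Faces

section NonfacesByInsertion

lemma exists_isSparse_pairCoverable_union_of_subset_range {n : ℕ} {B : Finset ℕ}
    (hB : B ⊆ range (2 * n)) :
    ∃ t ⊆ Ico 1 (2 * n), IsSparse t ∧ #t = n ∧ PairCoverable n (B ∪ t) := by
  refine ⟨(range n).image fun j => 1 + 2 * j, image_subset_iff.2 fun j hj => ?_,
    fun x hx hx' => ?_, card_image_add_two_mul 1 n,
    (pairCoverable_Ico 0 n).mono (union_subset (fun x hx => ?_)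
      (image_subset_iff.2 fun j hj => ?_))⟩
  · rw [mem_range] at hj
    exact mem_Ico.2 (by omega)
  · obtain ⟨j, -, rfl⟩ := mem_image.1 hx
    obtain ⟨i, -, hi⟩ := mem_image.1 hx'
    omega
  · have := mem_range.1 (hB hx)
    exact mem_Ico.2 (by omega)
  · rw [mem_range] at hj
    exact mem_Ico.2 (by omega)

lemma PairCoverable.filter_lt_sub_one {n L : ℕ} {B : Finset ℕ} (hB : PairCoverable (n + 1) B)
    (hL : L ∈ B) : PairCoverable n (B.filter (· < L - 1)) := by
  obtain ⟨E, hE, hcov⟩ := hB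
  obtain ⟨i, hi, hLi⟩ := hcov L hL
  refine ⟨E.erase i, by rw [card_erase_of_mem hi]; omega, fun x hx => ?_⟩
  rw [mem_filter] at hx
  obtain ⟨j, hj, hxj⟩ := hcov x hx.1
  exact ⟨j, mem_erase.2 ⟨by omega, hj⟩, hxj⟩

lemma exists_isSparse_pairCoverable_union {n L : ℕ} {B : Finset ℕ} (hBL : B ⊆ range (L + 1))
    (hnL : 2 * n ≤ L) (hB : PairCoverable n B) :
    ∃ t ⊆ Ico 1 L, IsSparse t ∧ #t = n ∧ PairCoverable n (B ∪ t) := by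
  induction L using Nat.strong_induction_on generalizing n B with
  | h L ih =>
  rcases n with _ | n
  · exact ⟨∅, empty_subset _, by simp [IsSparse], rfl, by rwa [union_empty]⟩
  by_cases hL : L ∈ B
  · obtain ⟨t, htL, ht, htn, hBt⟩ := ih (L - 2) (by omega)
      (fun x hx => mem_range.2 (by have := (mem_filter.1 hx).2; omega)) (by omega)
      (hB.filter_lt_sub_one hL)
    have htL' : ∀ x ∈ t, 1 ≤ x ∧ x < L - 2 := fun x hx => mem_Ico.1 (htL hx)
    refine ⟨insert (L - 1) t, insert_subset (mem_Ico.2 (by omega)) (htL.trans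
      (Ico_subset_Ico_right (by omega))), ht.insert_of_notMem (fun h => ?_) fun y hy => ?_,
      by rw [card_insert_of_notMem fun h => by have := htL' _ h; omega, htn],
      hBt.insert_pair (L - 1) fun x hx => ?_⟩
    · have := htL' _ h
      omega
    · have := htL' _ hy
      omega
    simp only [mem_union, mem_insert, mem_filter] at hx ⊢
    rcases hx with hx | rfl | hx
    · have := mem_range.1 (hBL hx)
      by_cases hxL : x < L - 1
      · exact Or.inl (Or.inl ⟨hx, hxL⟩)
      · omega
    · exact Or.inr (Or.inl rfl)
    · exact Or.inl (Or.inr hx)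
  have hBL' : B ⊆ range L := fun x hx => mem_range.2 (by
    have := mem_range.1 (hBL hx)
    have := ne_of_mem_of_not_mem hx hL
    omega)
  obtain rfl | hnL' := hnL.eq_or_lt
  · exact exists_isSparse_pairCoverable_union_of_subset_range hBL'
  · obtain ⟨t, htL, ht⟩ := ih (L - 1) (by omega) (by rwa [Nat.sub_add_cancel (by omega)])
      (by omega) hB
    exact ⟨t, htL.trans (Ico_subset_Ico_right (by omega)), ht⟩

/-- The vertex of the cycle `0, 1, …, m` that is reached from `u` after `i + 1` steps. -/
def cycleVertex (m u i : ℕ) : ℕ :=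
  if i + u < m then i + u + 1 else i + u - m

/-- The position of `y` on the path obtained by removing `u` from the cycle `0, 1, …, m`; the
inverse of `cycleVertex m u`. -/
def cyclePosition (m u y : ℕ) : ℕ :=
  if u < y then y - (u + 1) else y + (m - u)

lemma cycleVertex_eq_iff {m u i y : ℕ} (hu : u ≤ m) (hi : i < m) (hy : y ≤ m) :
    cycleVertex m u i = y ↔ cyclePosition m u y = i := by
  unfold cycleVertex cyclePosition
  split_ifs <;> omega

lemma cycleVertex_le {m u i : ℕ} (hu : u ≤ m) (hi : i < m) :
    cycleVertex m u i ≤ m ∧ cycleVertex m u i ≠ u := by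
  unfold cycleVertex
  split_ifs <;> omega

lemma cyclePosition_lt {m u y : ℕ} (hu : u ≤ m) (hy : y ≤ m) (hyu : y ≠ u) :
    cyclePosition m u y < m := by
  unfold cyclePosition
  split_ifs <;> omega

lemma PairCoverable.image_cyclePosition {m n u : ℕ} {D : Finset ℕ} (hD : PairCoverable n D)
    (hDm : D ⊆ Icc 1 m) (huD : u ∉ D) : PairCoverable n (D.image (cyclePosition m u)) := by
  obtain ⟨E, hE, hcov⟩ := hD
  refine ⟨E.image fun j => if u ≤ j then j - (u + 1) else j + (m - u),
    card_image_le.trans hE, forall_mem_image.2 fun y hy => ?_⟩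
  obtain ⟨j, hj, hyj⟩ := hcov y hy
  have := mem_Icc.1 (hDm hy)
  have := ne_of_mem_of_not_mem hy huD
  refine ⟨_, mem_image_of_mem _ hj, ?_⟩
  unfold cyclePosition
  split_ifs <;> omega

lemma IsFace.pairCoverable_image_cyclePosition {m n u : ℕ} {B : Finset ℕ} (hB : IsFace m n B)
    (hBm : B ⊆ Icc 1 m) (hum : u ∈ Icc 1 m) (huB : u ∉ B) :
    PairCoverable (n + 1) ((insert 0 B).image (cyclePosition m u)) := by
  rw [mem_Icc] at hum
  have h_erase : ∀ v i, PairCoverable n (B.erase v) →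
      (∀ y, (y = 0 ∨ y = v ∧ v ∈ B) → cyclePosition m u y = i ∨ cyclePosition m u y = i + 1) →
      PairCoverable (n + 1) ((insert 0 B).image (cyclePosition m u)) := by
    intro v i hv h_edge
    refine (hv.image_cyclePosition ((erase_subset v B).trans hBm)
      fun h => huB (mem_of_mem_erase h)).insert_pair i (forall_mem_image.2 fun y hy => ?_)
    rcases mem_insert.1 hy with rfl | hy
    · exact Or.inr (h_edge 0 (Or.inl rfl))
    · by_cases hyv : y = v
      · exact Or.inr (h_edge y (Or.inr ⟨hyv, hyv ▸ hy⟩))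
      · exact Or.inl (mem_image_of_mem _ (mem_erase.2 ⟨hyv, hy⟩))
  rcases hB with hB | hB
  · refine h_erase 1 (m - u) hB ?_
    rintro y (rfl | ⟨rfl, hyB⟩)
    · unfold cyclePosition
      split_ifs <;> omega
    · have := ne_of_mem_of_not_mem hyB huB
      unfold cyclePosition
      split_ifs <;> omega
  · refine h_erase m (m - u - 1) hB ?_
    rintro y (rfl | ⟨rfl, hyB⟩)
    · unfold cyclePosition
      split_ifs <;> omega
    · have := ne_of_mem_of_not_mem hyB huB
      unfold cyclePosition
      split_ifs <;> omega

lemma isFace_of_pairCoverable_image_cyclePosition {m n u : ℕ} {C : Finset ℕ}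
    (hCm : C ⊆ Icc 1 m) (hum : u ∈ Icc 1 m) (huC : u ∉ C)
    (hC : PairCoverable (n + 1) ((insert 0 C).image (cyclePosition m u))) : IsFace m n C := by
  rw [mem_Icc] at hum
  obtain ⟨E, hE, hcov⟩ := hC
  obtain ⟨i, hi, h0i⟩ := hcov _ (mem_image_of_mem _ (mem_insert_self 0 C))
  have h_erase : ∀ v, (∀ y ∈ C.erase v, cyclePosition m u y ≠ i ∧ cyclePosition m u y ≠ i + 1) →
      PairCoverable n (C.erase v) := by
    intro v hv
    refine ⟨(E.erase i).image (cycleVertex m u),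
      card_image_le.trans (by rw [card_erase_of_mem hi]; omega), fun y hy => ?_⟩
    have hyC := mem_of_mem_erase hy
    obtain ⟨j, hj, hyj⟩ := hcov _ (mem_image_of_mem _ (mem_insert_of_mem hyC))
    have := hv y hy
    refine ⟨_, mem_image_of_mem _ (mem_erase.2 ⟨by rintro rfl; omega, hj⟩), ?_⟩
    have := mem_Icc.1 (hCm hyC)
    have := ne_of_mem_of_not_mem hyC huC
    unfold cycleVertex
    unfold cyclePosition at hyj
    split_ifs at hyj ⊢ <;> omega
  have h0 : cyclePosition m u 0 = m - u := by
    unfold cyclePosition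
    split_ifs <;> omega
  refine h0i.imp (fun h => h_erase 1 fun y hy => ?_) (fun h => h_erase m fun y hy => ?_) <;>
  · rw [mem_erase] at hy
    have := mem_Icc.1 (hCm hy.2)
    have := ne_of_mem_of_not_mem hy.2 huC
    unfold cyclePosition at *
    split_ifs at * <;> omega

lemma card_le_card_erase_erase {s : Finset ℕ} {x y : ℕ} (h : x ∈ s → y ∉ s) :
    #s ≤ #((s.erase x).erase y) + 1 := by
  by_cases hx : x ∈ s
  · rw [erase_eq_of_notMem fun hy => h hx (mem_of_mem_erase hy)]
    have := pred_card_le_card_erase (s := s) (a := x)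
    omega
  · rw [erase_eq_of_notMem hx]
    have := pred_card_le_card_erase (s := s) (a := y)
    omega

lemma isSparse_insert_image_cycleVertex {m u : ℕ} {t : Finset ℕ} (hum : u ∈ Icc 1 m)
    (htm : t ⊆ Ico 1 (m - 1)) (ht : IsSparse t) :
    IsSparse (insert u (t.image (cycleVertex m u))) ∧
      (0 ∈ insert u (t.image (cycleVertex m u)) → m ∉ insert u (t.image (cycleVertex m u))) := by
  rw [mem_Icc] at hum
  have htm' : ∀ i ∈ t, 1 ≤ i ∧ i + 1 < m := fun i hi => by
    have := mem_Ico.1 (htm hi)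
    omega
  have h_cycle : ∀ x ∈ insert u (t.image (cycleVertex m u)),
      ∀ y ∈ insert u (t.image (cycleVertex m u)), ¬ (y = x + 1 ∨ y = 0 ∧ x = m) := by
    simp only [mem_insert, mem_image]
    rintro _ (rfl | ⟨i, hi, rfl⟩) _ (rfl | ⟨j, hj, rfl⟩) hxy
    · omega
    · have := htm' j hj
      unfold cycleVertex at hxy
      split_ifs at hxy <;> omega
    · have := htm' i hi
      unfold cycleVertex at hxy
      split_ifs at hxy <;> omega
    · have hij : j ≠ i + 1 := fun h => ht i hi (h ▸ hj)
      have := htm' i hi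
      have := htm' j hj
      unfold cycleVertex at hxy
      rcases hxy with hxy | ⟨hxy, hxm⟩
      · split_ifs at hxy <;> omega
      · split_ifs at hxy hxm <;> omega
  exact ⟨fun x hx hx' => h_cycle x hx _ hx' (Or.inl rfl),
    fun h0 hm => h_cycle m hm 0 h0 (Or.inr ⟨rfl, rfl⟩)⟩

lemma card_insert_image_cycleVertex {m u : ℕ} {t : Finset ℕ} (hum : u ≤ m)
    (htm : ∀ i ∈ t, i < m) : #(insert u (t.image (cycleVertex m u))) = #t + 1 := by
  rw [card_insert_of_notMem, card_image_of_injOn]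
  · intro i hi j hj hij
    have := htm i hi
    have := htm j hj
    unfold cycleVertex at hij
    split_ifs at hij <;> omega
  · intro h
    obtain ⟨i, hi, hiu⟩ := mem_image.1 h
    exact (cycleVertex_le hum (htm i hi)).2 hiu

lemma not_isFace_of_erase_zero_subset {m n : ℕ} {B s : Finset ℕ} (hs : IsSparse s)
    (h0m : 0 ∈ s → m ∉ s) (hsn : n + 2 ≤ #s) (hsB : s.erase 0 ⊆ B) : ¬ IsFace m n B := by
  have h_sparse : ∀ x, IsSparse ((s.erase 0).erase x) := fun x =>
    hs.subset ((erase_subset _ _).trans (erase_subset _ _))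
  refine not_isFace_of_isSparse (h_sparse 1) (h_sparse m) (erase_subset_erase 1 hsB)
    (erase_subset_erase m hsB) ?_ ?_
  · have := card_le_card_erase_erase (y := 1) (hs 0)
    omega
  · have := card_le_card_erase_erase h0m
    omega

lemma IsFace.exists_not_isFace_insert {m n u : ℕ} (hm : 2 * n + 3 ≤ m) {B : Finset ℕ}
    (hB : IsFace m n B) (hBm : B ⊆ Icc 1 m) (hum : u ∈ Icc 1 m) (huB : u ∉ B) :
    ∃ C ⊆ Icc 1 m, B ⊆ C ∧ IsFace m n C ∧ ¬ IsFace m n (insert u C) := by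
  have hum' := mem_Icc.1 hum
  have h_cover := hB.pairCoverable_image_cyclePosition hBm hum huB
  obtain ⟨t, htm, ht, htn, h_union⟩ := exists_isSparse_pairCoverable_union (L := m - 1)
    (fun i hi => by
      obtain ⟨y, hy, rfl⟩ := mem_image.1 hi
      rw [mem_range]
      rcases mem_insert.1 hy with rfl | hy
      · have := cyclePosition_lt hum'.2 (Nat.zero_le m) (by omega)
        omega
      · have := cyclePosition_lt hum'.2 (mem_Icc.1 (hBm hy)).2 (ne_of_mem_of_not_mem hy huB)
        omega) (by omega) h_cover
  have htm' : ∀ i ∈ t, i < m := fun i hi => by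
    have := mem_Ico.1 (htm hi)
    omega
  obtain ⟨h_sparse, h0m⟩ := isSparse_insert_image_cycleVertex hum htm ht
  have h_vertex : ∀ y ∈ (t.image (cycleVertex m u)).erase 0,
      y ∈ Icc 1 m ∧ y ≠ u ∧ cyclePosition m u y ∈ t := by
    intro y hy
    obtain ⟨hy0, hy⟩ := mem_erase.1 hy
    obtain ⟨i, hi, rfl⟩ := mem_image.1 hy
    have h_le := cycleVertex_le hum'.2 (htm' i hi)
    refine ⟨mem_Icc.2 (by omega), h_le.2, ?_⟩
    rwa [(cycleVertex_eq_iff hum'.2 (htm' i hi) h_le.1).1 rfl]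
  refine ⟨B ∪ (t.image (cycleVertex m u)).erase 0,
    union_subset hBm fun y hy => (h_vertex y hy).1, subset_union_left,
    isFace_of_pairCoverable_image_cyclePosition
      (union_subset hBm fun y hy => (h_vertex y hy).1) hum ?_ (h_union.mono ?_),
    not_isFace_of_erase_zero_subset h_sparse h0m (by
      rw [card_insert_image_cycleVertex hum'.2 htm']; omega) (by
      rw [erase_insert_of_ne (by omega)]; exact insert_subset_insert u subset_union_right)⟩
  · rw [mem_union, not_or]
    exact ⟨huB, fun h => (h_vertex u h).2.1 rfl⟩
  · rw [← insert_union, image_union]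
    exact union_subset_union_right (image_subset_iff.2 fun y hy => (h_vertex y hy).2.2)

end NonfacesByInsertion

section Exchange

lemma IsSparse.card_filter_le_card_filter {s E : Finset ℕ} (hs : IsSparse s) (hE : #E ≤ #s)
    (hcov : ∀ x ∈ s, ∃ i ∈ E, x = i ∨ x = i + 1) (P Q : ℕ → Prop) [DecidablePred P]
    [DecidablePred Q] (hPQ : ∀ x ∈ s, ∀ i, x = i ∨ x = i + 1 → P i → Q x) :
    #(E.filter P) ≤ #(s.filter Q) := by
  have h_not : #(s.filter (¬ Q ·)) ≤ #(E.filter (¬ P ·)) := by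
    refine (hs.subset (filter_subset _ s)).card_le ⟨_, le_rfl, fun x hx => ?_⟩
    rw [mem_filter] at hx
    obtain ⟨i, hi, hxi⟩ := hcov x hx.1
    exact ⟨i, mem_filter.2 ⟨hi, fun h => hx.2 (hPQ x hx.1 i hxi h)⟩, hxi⟩
  have := card_filter_add_card_filter_not (s := s) Q
  have := card_filter_add_card_filter_not (s := E) P
  omega

lemma exists_run_start (s : Finset ℕ) {e : ℕ} (he : e ∈ s) :
    ∃ b k, e = b + 2 * k ∧ (∀ j ≤ k, b + 2 * j ∈ s) ∧ ∀ y ∈ s, y + 2 ≠ b := by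
  induction e using Nat.strong_induction_on with
  | h e ih =>
  by_cases h : ∃ y ∈ s, y + 2 = e
  · obtain ⟨y, hy, rfl⟩ := h
    obtain ⟨b, k, rfl, h_run, hb⟩ := ih y (by omega) hy
    refine ⟨b, k + 1, by ring, fun j hj => ?_, hb⟩
    obtain hj | rfl := Nat.lt_or_eq_of_le hj
    · exact h_run j (by omega)
    · exact he
  · push Not at h
    exact ⟨e, 0, rfl, fun j hj => by rwa [Nat.le_zero.1 hj], h⟩

lemma lt_run_start {p q n b k : ℕ} {v u : Finset ℕ} (hv : v ∈ sparseSets p q n)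
    (hu : u ∈ sparseSets p q n) (h_run : ∀ j ≤ k, b + 2 * j ∈ v) (heu : b + 2 * k ∉ u)
    (h_agree : ∀ x, b + 2 * k < x → (x ∈ v ↔ x ∈ u)) : p < b := by
  obtain ⟨⟨-, hvn⟩, -⟩ := mem_sparseSets.1 hv
  obtain ⟨⟨hup, hun⟩, hu⟩ := mem_sparseSets.1 hu
  by_contra! hbp
  have hu_le : #(u.filter (¬ b + 2 * k < ·)) ≤ k := by
    refine (hu.subset (filter_subset _ u)).card_le ((pairCoverable_Ico b k).mono fun x hx => ?_)
    rw [mem_filter] at hx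
    have := mem_Icc.1 (hup hx.1)
    have := ne_of_mem_of_not_mem hx.1 heu
    rw [mem_Ico]
    omega
  have hv_ge : k + 1 ≤ #(v.filter (¬ b + 2 * k < ·)) := by
    rw [← card_image_add_two_mul b (k + 1)]
    refine card_le_card (image_subset_iff.2 fun j hj => ?_)
    rw [mem_range] at hj
    exact mem_filter.2 ⟨h_run j (by omega), by omega⟩
  have h_above : #(v.filter (b + 2 * k < ·)) = #(u.filter (b + 2 * k < ·)) := by
    congr 1
    ext x
    simp only [mem_filter]
    exact and_congr_left (h_agree x)
  have := card_filter_add_card_filter_not (s := v) (b + 2 * k < ·)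
  have := card_filter_add_card_filter_not (s := u) (b + 2 * k < ·)
  omega

lemma card_filter_lt_add_run_add_card_filter_lt_le {b k : ℕ} {v u : Finset ℕ}
    (h_run : ∀ j ≤ k, b + 2 * j ∈ v) (h_agree : ∀ x, b + 2 * k < x → (x ∈ v ↔ x ∈ u)) :
    #(v.filter (· < b)) + (k + 1) + #(u.filter (b + 2 * k < ·)) ≤ #v := by
  have h_run_mem : ∀ x ∈ (range (k + 1)).image (fun j => b + 2 * j),
      x ∈ v ∧ b ≤ x ∧ x ≤ b + 2 * k :=
    forall_mem_image.2 fun j hj => by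
      rw [mem_range] at hj
      exact ⟨h_run j (by omega), by omega⟩
  rw [← card_image_add_two_mul b (k + 1), ← card_union_of_disjoint, ← card_union_of_disjoint]
  · refine card_le_card (union_subset (union_subset (filter_subset _ v) fun x hx =>
      (h_run_mem x hx).1) fun x hx => ?_)
    rw [mem_filter] at hx
    exact (h_agree x hx.2).2 hx.1
  · refine disjoint_left.2 fun x hx hx' => ?_
    have := (mem_filter.1 hx').2
    rcases mem_union.1 hx with hx | hx
    · have := (mem_filter.1 hx).2
      omega
    · have := h_run_mem x hx
      omega
  · refine disjoint_left.2 fun x hx hx' => ?_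
    have := (mem_filter.1 hx).2
    have := h_run_mem x hx'
    omega

-- Below `b - 1` take the edges covering `c ∪ v`, above `b + 2 * k` those covering `c ∪ u`, and in
-- between every other edge. There are at most `n` of them because each cover has exactly one edge
-- at each element of `v`, respectively `u`.
lemma pairCoverable_insert_run_start {n b k : ℕ} {c v u : Finset ℕ} (hv : IsSparse v)
    (hu : IsSparse u) (hvn : #v = n) (hun : #u = n) (hcv : PairCoverable n (c ∪ v))
    (hcu : PairCoverable n (c ∪ u)) (hb : 0 < b) (h_run : ∀ j ≤ k, b + 2 * j ∈ v)
    (heu : b + 2 * k ∉ u) (h_agree : ∀ x, b + 2 * k < x → (x ∈ v ↔ x ∈ u)) :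
    PairCoverable n (insert (b - 1) (c ∪ v)) := by
  obtain ⟨E, hE, hE_cov⟩ := hcv
  obtain ⟨D, hD, hD_cov⟩ := hcu
  have hE_card : #(E.filter (· < b - 1)) ≤ #(v.filter (· < b)) :=
    hv.card_filter_le_card_filter (by omega) (fun x hx => hE_cov x (mem_union_right c hx)) _ _
      fun x _ i hxi hi => by omega
  have hD_card : #(D.filter (b + 2 * k ≤ ·)) ≤ #(u.filter (b + 2 * k < ·)) :=
    hu.card_filter_le_card_filter (by omega) (fun x hx => hD_cov x (mem_union_right c hx)) _ _
      fun x hx i hxi hi => by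
        have := ne_of_mem_of_not_mem hx heu
        omega
  have hv_card := card_filter_lt_add_run_add_card_filter_lt_le h_run h_agree
  refine ⟨E.filter (· < b - 1) ∪ (range (k + 1)).image (fun j => b - 1 + 2 * j) ∪
    D.filter (b + 2 * k ≤ ·), ?_, fun x hx => ?_⟩
  · refine (card_union_le _ _).trans ((Nat.add_le_add_right (card_union_le _ _) _).trans ?_)
    rw [card_image_add_two_mul]
    omega
  · simp only [mem_union, mem_filter]
    rcases lt_or_ge x (b - 1) with hxb | hxb
    · obtain ⟨i, hi, hxi⟩ := hE_cov x (mem_of_mem_insert_of_ne hx (by omega))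
      exact ⟨i, Or.inl (Or.inl ⟨hi, by omega⟩), hxi⟩
    rcases le_or_gt x (b + 2 * k) with hxe | hxe
    · exact ⟨b - 1 + 2 * ((x - (b - 1)) / 2),
        Or.inl (Or.inr (mem_image_of_mem _ (mem_range.2 (by omega)))), by omega⟩
    · have hxcu : x ∈ c ∪ u := by
        rw [mem_union, ← h_agree x hxe, ← mem_union]
        exact mem_of_mem_insert_of_ne hx (by omega)
      obtain ⟨i, hi, hxi⟩ := hD_cov x hxcu
      exact ⟨i, Or.inr ⟨hi, by omega⟩, hxi⟩

-- `w` is `v` with the start `b` of the run `b, b + 2, …, e` moved down to `b - 1`.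
lemma exists_sparseSets_sum_lt {p q n e : ℕ} {c v u : Finset ℕ} (hv : v ∈ sparseSets p q n)
    (hu : u ∈ sparseSets p q n) (hcv : PairCoverable n (c ∪ v)) (hcu : PairCoverable n (c ∪ u))
    (hev : e ∈ v) (heu : e ∉ u) (h_agree : ∀ x, e < x → (x ∈ v ↔ x ∈ u)) :
    ∃ w ∈ sparseSets p q n, PairCoverable n (c ∪ v ∪ w) ∧ ∑ x ∈ w, x < ∑ x ∈ v, x := by
  obtain ⟨b, k, rfl, h_run, h_start⟩ := exists_run_start v hev
  have hpb := lt_run_start hv hu h_run heu h_agree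
  obtain ⟨⟨hvp, hvn⟩, hv⟩ := mem_sparseSets.1 hv
  obtain ⟨⟨-, hun⟩, hu⟩ := mem_sparseSets.1 hu
  have hbv : b ∈ v := h_run 0 (Nat.zero_le k)
  have hbv' : b - 1 ∉ v.erase b := fun h =>
    hv (b - 1) (mem_of_mem_erase h) (by rwa [Nat.sub_add_cancel (by omega)])
  refine ⟨insert (b - 1) (v.erase b), mem_sparseSets.2 ⟨⟨insert_subset ?_
    ((erase_subset b v).trans hvp), ?_⟩, (hv.subset (erase_subset b v)).insert_of_notMem ?_ ?_⟩,
    (pairCoverable_insert_run_start hv hu hvn hun hcv hcu (by omega) h_run heu h_agree).mono ?_,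
    ?_⟩
  · have := mem_Icc.1 (hvp hbv)
    exact mem_Icc.2 (by omega)
  · rw [card_insert_of_notMem hbv', card_erase_add_one hbv, hvn]
  · rw [Nat.sub_add_cancel (by omega)]
    exact notMem_erase b v
  · intro y hy hyb
    exact h_start y (mem_of_mem_erase hy) (by omega)
  · rw [union_insert, union_eq_left.2 ((erase_subset b v).trans subset_union_right)]
  · rw [sum_insert hbv', ← add_sum_erase v (fun x => x) hbv]
    exact Nat.add_lt_add_right (by omega) _

lemma eq_of_pairCoverable_union {α : Type*} {p q n : ℕ} {c : Finset ℕ} {g : Finset ℕ → α}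
    (hg : ∀ v ∈ sparseSets p q n, ∀ u ∈ sparseSets p q n, PairCoverable n (c ∪ v ∪ u) → g v = g u)
    {v u : Finset ℕ} (hv : v ∈ sparseSets p q n) (hu : u ∈ sparseSets p q n)
    (hcv : PairCoverable n (c ∪ v)) (hcu : PairCoverable n (c ∪ u)) : g v = g u := by
  induction h_sum : ∑ x ∈ v, x + ∑ x ∈ u, x using Nat.strong_induction_on generalizing v u with
  | h N ih =>
  subst h_sum
  obtain h_empty | h_nonempty := (symmDiff v u).eq_empty_or_nonempty
  · rw [symmDiff_eq_bot.1 h_empty]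
  set e := (symmDiff v u).max' h_nonempty
  have h_agree : ∀ x, e < x → (x ∈ v ↔ x ∈ u) := fun x hx => by
    have hx' : x ∉ symmDiff v u := fun h => (le_max' _ x h).not_gt hx
    rw [mem_symmDiff] at hx'
    tauto
  rcases mem_symmDiff.1 (max'_mem _ h_nonempty) with ⟨hev, heu⟩ | ⟨heu, hev⟩
  · obtain ⟨w, hw, hvw, h_lt⟩ := exists_sparseSets_sum_lt hv hu hcv hcu hev heu h_agree
    exact (hg v hv w hw hvw).trans (ih _ (Nat.add_lt_add_right h_lt _) hw hu
      (hvw.mono (union_subset_union_left subset_union_left)) hcu rfl)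
  · obtain ⟨w, hw, huw, h_lt⟩ := exists_sparseSets_sum_lt hu hv hcu hcv heu hev
      fun x hx => (h_agree x hx).symm
    exact (ih _ (Nat.add_lt_add_left h_lt _) hv hw hcv
      (huw.mono (union_subset_union_left subset_union_left)) rfl).trans (hg u hu w hw huw).symm

end Exchange

section Connectedness

lemma IsFace.pairCoverable_union {m n : ℕ} (hm : 2 ≤ m) {b v : Finset ℕ}
    (hv : v ∈ sparseSets 2 (m - 2) n) (h : IsFace m n (b ∪ v)) :
    PairCoverable n ((if m ∈ b then b.erase m else b.erase 1) ∪ v) := by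
  obtain ⟨⟨hvm, -⟩, -⟩ := mem_sparseSets.1 hv
  have h1 : 1 ∉ v := fun h => by have := mem_Icc.1 (hvm h); omega
  have hmv : m ∉ v := fun h => by have := mem_Icc.1 (hvm h); omega
  split_ifs with hmb
  · rcases h with h | h
    · obtain ⟨⟨-, h_card⟩, h_sparse⟩ := mem_sparseSets.1
        (insert_mem_sparseSets_right (x := m) hv hm (by omega))
      have := h_sparse.card_le (h.mono (subset_erase.2
        ⟨insert_subset (mem_union_left v hmb) subset_union_right, by
          rw [mem_insert, not_or]; exact ⟨by omega, h1⟩⟩))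
      omega
    · rwa [erase_union_distrib, erase_eq_of_notMem hmv] at h
  · rcases h with h | h
    · rwa [erase_union_distrib, erase_eq_of_notMem h1] at h
    · rw [erase_union_distrib, erase_eq_of_notMem hmb, erase_eq_of_notMem hmv] at h
      exact h.mono (union_subset_union_left (erase_subset 1 b))

lemma PairCoverable.isFace_union {m n : ℕ} {b d : Finset ℕ}
    (h : PairCoverable n ((if m ∈ b then b.erase m else b.erase 1) ∪ d)) :
    IsFace m n (b ∪ d) := by
  split_ifs at h
  · exact Or.inr (h.mono (by
      rw [erase_union_distrib]; exact union_subset_union_right (erase_subset m d)))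
  · exact Or.inl (h.mono (by
      rw [erase_union_distrib]; exact union_subset_union_right (erase_subset 1 d)))

lemma eq_of_isFace_union {α : Type*} {m n : ℕ} (hm : 2 ≤ m) {b : Finset ℕ} {g : Finset ℕ → α}
    (hg : ∀ v ∈ sparseSets 2 (m - 2) n, ∀ u ∈ sparseSets 2 (m - 2) n,
      IsFace m n (b ∪ v ∪ u) → g v = g u)
    {v u : Finset ℕ} (hv : v ∈ sparseSets 2 (m - 2) n) (hu : u ∈ sparseSets 2 (m - 2) n)
    (hbv : IsFace m n (b ∪ v)) (hbu : IsFace m n (b ∪ u)) : g v = g u :=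
  eq_of_pairCoverable_union
    (fun v hv u hu h => hg v hv u hu (by
      rw [union_assoc] at h ⊢; exact h.isFace_union))
    hv hu (hbv.pairCoverable_union hm hv) (hbu.pairCoverable_union hm hu)

lemma insert_one_insert_mem_sparseSets {m n : ℕ} (hm : 4 ≤ m) {w : Finset ℕ}
    (hw : w ∈ sparseSets 3 (m - 3) n) :
    insert 1 (insert (m - 1) w) ∈ sparseSets 1 (m - 1) (n + 2) :=
  insert_mem_sparseSets_left (insert_mem_sparseSets_right hw (by omega) (by omega)) le_rfl
    (by omega)

lemma not_isFace_of_corner_subset {m n : ℕ} (hm : 4 ≤ m) {B v w : Finset ℕ}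
    (hv : v ∈ sparseSets 2 (m - 2) (n + 1)) (hw : w ∈ sparseSets 3 (m - 3) n)
    (hB : {1, m - 1, m} ⊆ B) (hvB : v ⊆ B) (hwB : w ⊆ B) : ¬ IsFace m (n + 1) B := by
  simp only [insert_subset_iff, singleton_subset_iff] at hB
  exact not_isFace_of_mem_sparseSets (by omega)
    (insert_mem_sparseSets_right hv (by omega) (by omega))
    (insert_one_insert_mem_sparseSets hm hw)
    (insert_subset hB.2.2 hvB) (insert_subset hB.1 (insert_subset hB.2.1 hwB))

lemma IsFace.pairCoverable_corner_union {m n : ℕ} (hm : 4 ≤ m) {b w : Finset ℕ}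
    (hb : {1, m - 1, m} ⊆ b) (hw : w ∈ sparseSets 3 (m - 3) n) (h : IsFace m (n + 1) (b ∪ w)) :
    PairCoverable n (b ∩ Icc 2 (m - 2) ∪ w) := by
  obtain ⟨⟨hwm, -⟩, -⟩ := mem_sparseSets.1 hw
  simp only [insert_subset_iff, singleton_subset_iff] at hb
  rcases h with ⟨E, hE, hcov⟩ | h
  · obtain ⟨i, hi, hmi⟩ := hcov m (mem_erase.2 ⟨by omega, mem_union_left w hb.2.2⟩)
    refine ⟨E.erase i, by rw [card_erase_of_mem hi]; omega, fun x hx => ?_⟩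
    have hx' : x ∈ b ∪ w ∧ 2 ≤ x ∧ x ≤ m - 2 := by
      rcases mem_union.1 hx with hx | hx
      · exact ⟨mem_union_left w (mem_inter.1 hx).1, mem_Icc.1 (mem_inter.1 hx).2⟩
      · have := mem_Icc.1 (hwm hx)
        exact ⟨mem_union_right b hx, by omega⟩
    obtain ⟨j, hj, hxj⟩ := hcov x (mem_erase.2 ⟨by omega, hx'.1⟩)
    exact ⟨j, mem_erase.2 ⟨by omega, hj⟩, hxj⟩
  · obtain ⟨⟨h_range, h_card⟩, h_sparse⟩ := mem_sparseSets.1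
      (insert_one_insert_mem_sparseSets hm hw)
    have := h_sparse.card_le (h.mono (subset_erase.2 ⟨insert_subset (mem_union_left w hb.1)
      (insert_subset (mem_union_left w hb.2.1) subset_union_right), fun h_mem => by
        have := mem_Icc.1 (h_range h_mem)
        omega⟩))
    omega

lemma PairCoverable.isFace_corner_union {m n : ℕ} {b d : Finset ℕ} (hb : b ⊆ Icc 1 m)
    (h : PairCoverable n (b ∩ Icc 2 (m - 2) ∪ d)) : IsFace m (n + 1) (b ∪ d) := by
  refine Or.inl (h.insert_pair (m - 1) fun x hx => ?_)
  obtain ⟨hx1, hx⟩ := mem_erase.1 hx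
  simp only [mem_union, mem_inter, mem_Icc]
  rcases mem_union.1 hx with hx | hx
  · have := mem_Icc.1 (hb hx)
    by_cases hxm : x ≤ m - 2
    · exact Or.inl (Or.inl ⟨hx, by omega⟩)
    · omega
  · exact Or.inl (Or.inr hx)

lemma eq_of_isFace_corner_union {α : Type*} {m n : ℕ} (hm : 4 ≤ m) {b : Finset ℕ}
    (hb : {1, m - 1, m} ⊆ b) (hbm : b ⊆ Icc 1 m) {g : Finset ℕ → α}
    (hg : ∀ v ∈ sparseSets 3 (m - 3) n, ∀ u ∈ sparseSets 3 (m - 3) n,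
      IsFace m (n + 1) (b ∪ v ∪ u) → g v = g u)
    {v u : Finset ℕ} (hv : v ∈ sparseSets 3 (m - 3) n) (hu : u ∈ sparseSets 3 (m - 3) n)
    (hbv : IsFace m (n + 1) (b ∪ v)) (hbu : IsFace m (n + 1) (b ∪ u)) : g v = g u :=
  eq_of_pairCoverable_union
    (fun v hv u hu h => hg v hv u hu (by
      rw [union_assoc] at h ⊢; exact h.isFace_corner_union hbm))
    hv hu (hbv.pairCoverable_corner_union hm hb hv) (hbu.pairCoverable_corner_union hm hb hu)

lemma exists_sparseSets_inner_of_not_isFace {m n : ℕ} (hm : 2 * n + 3 ≤ m) {B : Finset ℕ}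
    (hBm : B ⊆ Icc 1 m) (hB : ¬ IsFace m n B) : ∃ v ∈ sparseSets 2 (m - 2) n, v ⊆ B := by
  rcases (not_isFace_iff hm hBm).1 hB with ⟨s, hs, hsB⟩ | ⟨s, hs, hsB⟩
  · obtain ⟨⟨hsm, hsn⟩, hs⟩ := mem_sparseSets.1 hs
    have h_card := pred_card_le_card_erase (s := s) (a := m - 1)
    obtain ⟨v, hv, hvs⟩ := exists_mem_sparseSets (p := 2) (q := m - 2) (n := n) (fun x hx => by
      have := mem_Icc.1 (hsm (mem_of_mem_erase hx))
      have := ne_of_mem_erase hx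
      omega) (hs.subset (erase_subset (m - 1) s)) (by omega)
    exact ⟨v, hv, hvs.trans ((erase_subset _ s).trans hsB)⟩
  · exact ⟨s, sparseSets_mono (by omega) le_rfl hs,
      ((subset_insert m s).trans (subset_insert 1 _)).trans hsB⟩

end Connectedness

section SquarefreeMonomial

variable {σ : Type*}

/-- The exponent vector of the squarefree monomial `∏ i ∈ A, X i`. -/
noncomputable def sqfreeExp (A : Finset σ) : σ →₀ ℕ :=
  ∑ i ∈ A, Finsupp.single i 1

/-- The squarefree monomial with variables indexed by `A`. -/
noncomputable def sqfreeMonomial (k : Type*) [CommSemiring k] (A : Finset σ) : MvPolynomial σ k :=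
  ∏ i ∈ A, X i

variable {k : Type*} [CommRing k] {A B : Finset σ}

lemma sqfreeMonomial_eq_monomial : sqfreeMonomial k A = monomial (sqfreeExp A) 1 :=
  (monomial_sum_one A fun i => Finsupp.single i 1).symm

lemma sqfreeMonomial_empty : sqfreeMonomial k (∅ : Finset σ) = 1 :=
  Finset.prod_empty

lemma sqfreeMonomial_union [DecidableEq σ] (hAB : Disjoint A B) :
    sqfreeMonomial k (A ∪ B) = sqfreeMonomial k A * sqfreeMonomial k B :=
  Finset.prod_union hAB

lemma sqfreeExp_apply [DecidableEq σ] (i : σ) : sqfreeExp A i = if i ∈ A then 1 else 0 := by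
  simp only [sqfreeExp, Finsupp.finsetSum_apply, Finsupp.single_apply, Finset.sum_ite_eq']

lemma support_sqfreeExp : (sqfreeExp A).support = A := by
  classical
  ext i
  simp only [Finsupp.mem_support_iff, sqfreeExp_apply, ne_eq, ite_eq_right_iff, one_ne_zero,
    imp_false, not_not]

lemma sqfreeExp_le_iff {e : σ →₀ ℕ} : sqfreeExp A ≤ e ↔ A ⊆ e.support := by
  classical
  refine ⟨fun h => ?_, fun h i => ?_⟩
  · rw [← support_sqfreeExp (A := A)]
    exact Finsupp.support_mono h
  · rw [sqfreeExp_apply]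
    split_ifs with hi
    · exact Nat.one_le_iff_ne_zero.2 (Finsupp.mem_support_iff.1 (h hi))
    · exact Nat.zero_le _

lemma support_add_sqfreeExp [DecidableEq σ] (e : σ →₀ ℕ) :
    (e + sqfreeExp A).support = e.support ∪ A := by
  rw [Finsupp.support_add_eq_union, support_sqfreeExp]

lemma coeff_add_sqfreeExp_mul (e : σ →₀ ℕ) (f : MvPolynomial σ k) :
    coeff (e + sqfreeExp A) (sqfreeMonomial k A * f) = coeff e f := by
  rw [sqfreeMonomial_eq_monomial, add_comm, coeff_monomial_mul, one_mul]

/-- The Stanley–Reisner ideal of the simplicial complex `Δ`. -/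
noncomputable def stanleyReisnerIdeal (k : Type*) [CommRing k] (Δ : LowerSet (Finset σ)) :
    Ideal (MvPolynomial σ k) :=
  Ideal.span (sqfreeMonomial k '' {A | A ∉ Δ})

variable {Δ : LowerSet (Finset σ)}

lemma mem_span_sqfreeMonomial {𝒢 : Set (Finset σ)} {f : MvPolynomial σ k} :
    f ∈ Ideal.span (sqfreeMonomial k '' 𝒢) ↔
      ∀ e, coeff e f ≠ 0 → ∃ A ∈ 𝒢, A ⊆ e.support := by
  have h_image : sqfreeMonomial k '' 𝒢 = (fun e => monomial e (1 : k)) '' (sqfreeExp '' 𝒢) := by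
    rw [Set.image_image]
    exact Set.image_congr fun A _ => sqfreeMonomial_eq_monomial
  rw [h_image, mem_ideal_span_monomial_image]
  simp only [mem_support_iff, Set.exists_mem_image, sqfreeExp_le_iff]

lemma mem_stanleyReisnerIdeal {f : MvPolynomial σ k} :
    f ∈ stanleyReisnerIdeal k Δ ↔ ∀ e, e.support ∈ Δ → coeff e f = 0 := by
  rw [stanleyReisnerIdeal, mem_span_sqfreeMonomial]
  refine forall_congr' fun e => ⟨fun h he => ?_, fun h he => ⟨_, fun h' => he (h h'), subset_rfl⟩⟩
  by_contra hf
  obtain ⟨A, hA, hAe⟩ := h hf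
  exact hA (Δ.lower hAe he)

lemma span_sqfreeMonomial_eq_stanleyReisnerIdeal {𝒢 : Set (Finset σ)}
    (h𝒢 : ∀ B, B ∉ Δ ↔ ∃ A ∈ 𝒢, A ⊆ B) :
    Ideal.span (sqfreeMonomial k '' 𝒢) = stanleyReisnerIdeal k Δ := by
  ext f
  rw [mem_span_sqfreeMonomial, mem_stanleyReisnerIdeal]
  refine forall_congr' fun e => ?_
  rw [← h𝒢, ← not_imp_not, not_not, not_not]

lemma sqfreeMonomial_mul_mem_stanleyReisnerIdeal [DecidableEq σ] (hAB : A ∪ B ∉ Δ) :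
    sqfreeMonomial k A * sqfreeMonomial k B ∈ stanleyReisnerIdeal k Δ := by
  refine mem_stanleyReisnerIdeal.2 fun e he => ?_
  rw [sqfreeMonomial_eq_monomial, sqfreeMonomial_eq_monomial, monomial_mul, coeff_monomial,
    if_neg]
  rintro rfl
  rw [support_add_sqfreeExp, support_sqfreeExp] at he
  exact hAB he

lemma mem_support_of_sqfreeMonomial_mul_mem [DecidableEq σ] {u : σ}
    (hΔ : ∀ B ∈ Δ, u ∉ B → ∃ C ∈ Δ, B ⊆ C ∧ insert u C ∉ Δ) {p : MvPolynomial σ k}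
    (hp : ∀ C ∈ Δ, insert u C ∉ Δ →
      ∃ D ⊆ C, sqfreeMonomial k D * p ∈ stanleyReisnerIdeal k Δ)
    {e : σ →₀ ℕ} (he : e.support ∈ Δ) (hpe : coeff e p ≠ 0) : u ∈ e.support := by
  by_contra hue
  obtain ⟨C, hC, heC, huC⟩ := hΔ _ he hue
  obtain ⟨D, hDC, hD⟩ := hp C hC huC
  refine hpe ?_
  rw [← coeff_add_sqfreeExp_mul (A := D)]
  refine mem_stanleyReisnerIdeal.1 hD _ (Δ.lower ?_ hC)
  rw [support_add_sqfreeExp]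
  exact union_subset heC hDC

lemma span_sqfreeMonomial_mul_span [DecidableEq σ] {𝒢 : Set (Finset σ)}
    (h𝒢 : ∀ B ∈ 𝒢, Disjoint A B) :
    Ideal.span {sqfreeMonomial k A} * Ideal.span (sqfreeMonomial k '' 𝒢) =
      Ideal.span (sqfreeMonomial k '' ((A ∪ ·) '' 𝒢)) := by
  rw [Ideal.span_mul_span', Set.singleton_mul, Set.image_image, Set.image_image]
  exact congrArg _ (Set.image_congr fun B hB => (sqfreeMonomial_union (h𝒢 B hB)).symm)

lemma sqfreeMonomial_mul_mem_of_add_mul_mem [DecidableEq σ] {𝒱 𝒲 : Set (Finset σ)}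
    {y z : Finset σ} (hz : ∀ B ∈ Δ, B ∪ z ∈ Δ)
    (hy : ∀ A ∈ 𝒱, ∀ C ∈ 𝒲, ∀ B, y ⊆ B → A ⊆ B ∪ z → C ⊆ B → B ∉ Δ) {v w : MvPolynomial σ k}
    (hv : v ∈ Ideal.span (sqfreeMonomial k '' 𝒱)) (hw : w ∈ Ideal.span (sqfreeMonomial k '' 𝒲))
    (hvw : v + sqfreeMonomial k z * w ∈ stanleyReisnerIdeal k Δ) :
    sqfreeMonomial k y * w ∈ stanleyReisnerIdeal k Δ := by
  refine mem_stanleyReisnerIdeal.2 fun e he => ?_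
  rw [sqfreeMonomial_eq_monomial, coeff_monomial_mul', one_mul]
  refine ite_eq_right_iff.2 fun hye => ?_
  obtain ⟨e, rfl⟩ := exists_add_of_le hye
  rw [add_tsub_cancel_left]
  rw [add_comm, support_add_sqfreeExp] at he
  by_contra hwe
  have h_zero := mem_stanleyReisnerIdeal.1 hvw (e + sqfreeExp z) (by
    rw [support_add_sqfreeExp]
    exact hz _ (Δ.lower subset_union_left he))
  rw [coeff_add, coeff_add_sqfreeExp_mul] at h_zero
  have hve : coeff (e + sqfreeExp z) v ≠ 0 := fun h => hwe (by rwa [h, zero_add] at h_zero)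
  obtain ⟨A, hA, hAe⟩ := mem_span_sqfreeMonomial.1 hv _ hve
  obtain ⟨C, hC, hCe⟩ := mem_span_sqfreeMonomial.1 hw _ hwe
  rw [support_add_sqfreeExp] at hAe
  exact hy A hA C hC _ subset_union_right
    (hAe.trans (union_subset_union_left subset_union_left)) (hCe.trans subset_union_left) he

end SquarefreeMonomial

section Gluing

lemma exists_lift_of_linearMap {R ι : Type*} [CommRing R] {I M : Ideal R} (f : M →ₗ[R] R ⧸ I)
    {s : Finset ι} {r : ι → R} (hr : ∀ i ∈ s, r i ∈ M) :
    ∃ F : ι → R, ∀ i (hi : i ∈ s), ∀ c, Ideal.Quotient.mk I (c * F i) = f (c • ⟨r i, hr i hi⟩) := by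
  choose! F hF using fun i (hi : i ∈ s) => Ideal.Quotient.mk_surjective (f ⟨r i, hr i hi⟩)
  refine ⟨F, fun i hi c => ?_⟩
  rw [map_smul, ← hF i hi]
  rfl

lemma eq_mk_mul_of_span {R : Type*} [CommRing R] {I : Ideal R} {s : Set R}
    {f : Ideal.span s →ₗ[R] R ⧸ I} {c : R}
    (hf : ∀ x (hx : x ∈ s), f ⟨x, Ideal.subset_span hx⟩ = Ideal.Quotient.mk I (c * x)) :
    ∀ x, f x = Ideal.Quotient.mk I (c * x) :=
  LinearMap.congr_fun (g := ((Ideal.Quotient.mkₐ R I).toLinearMap ∘ₗ LinearMap.mulLeft R c) ∘ₗ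
    Submodule.subtype _) (LinearMap.ext_on (Submodule.span_span_coe_preimage ..)
      fun x hx => hf x hx)

variable {σ τ k : Type*} [CommRing k]

lemma exists_coeff_eq {c : (σ →₀ ℕ) → k} {T : Set (σ →₀ ℕ)} (hT : T.Finite)
    (hc : ∀ e, c e ≠ 0 → e ∈ T) : ∃ f : MvPolynomial σ k, ∀ e, coeff e f = c e := by
  classical
  refine ⟨∑ e ∈ hT.toFinset, monomial e (c e), fun e => ?_⟩
  simp only [coeff_sum, coeff_monomial, Finset.sum_ite_eq', Set.Finite.mem_toFinset,
    ite_eq_left_iff]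
  exact fun he => not_not.1 fun h => he (hc e (Ne.symm h))

variable [DecidableEq σ] {Δ : LowerSet (Finset σ)} {𝒢 : Finset τ} {γ : τ → Finset σ}
  {y : Finset σ}

lemma coeff_add_sqfreeExp_eq_of_syzygy {A B : Finset σ} (hA : Disjoint y A) (hB : Disjoint y B)
    {p q : MvPolynomial σ k}
    (h_syzygy : sqfreeMonomial k B * p - sqfreeMonomial k A * q ∈ stanleyReisnerIdeal k Δ)
    {e : σ →₀ ℕ} (he : e.support ∪ y ∪ A ∪ B ∈ Δ) :
    coeff (e + sqfreeExp (y ∪ A)) p = coeff (e + sqfreeExp (y ∪ B)) q := by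
  have h_comm : e + sqfreeExp (y ∪ B) + sqfreeExp A = e + sqfreeExp (y ∪ A) + sqfreeExp B := by
    rw [sqfreeExp, sqfreeExp, sqfreeExp, sqfreeExp, sum_union hA, sum_union hB]
    abel
  have h_zero := mem_stanleyReisnerIdeal.1 h_syzygy (e + sqfreeExp (y ∪ A) + sqfreeExp B)
    (by rwa [support_add_sqfreeExp, support_add_sqfreeExp, ← union_assoc])
  rwa [coeff_sub, coeff_add_sqfreeExp_mul, ← h_comm, coeff_add_sqfreeExp_mul, sub_eq_zero]
    at h_zero

-- The coefficient of `β` at `e` is read off from any `F i` with `e.support ∪ y ∪ γ i ∈ Δ`; by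
-- connectedness all these `i` give the same value.
lemma exists_mul_sub_mem_stanleyReisnerIdeal (hy : ∀ i ∈ 𝒢, Disjoint y (γ i))
    {F : τ → MvPolynomial σ k}
    (h_syzygy : ∀ i ∈ 𝒢, ∀ j ∈ 𝒢, sqfreeMonomial k (γ j) * F i - sqfreeMonomial k (γ i) * F j ∈
      stanleyReisnerIdeal k Δ)
    (h_support : ∀ i ∈ 𝒢, ∀ e, e.support ∈ Δ → coeff e (F i) ≠ 0 → y ∪ γ i ⊆ e.support)
    (h_connected : ∀ B, y ⊆ B → ∀ g : τ → k,
      (∀ i ∈ 𝒢, ∀ j ∈ 𝒢, B ∪ γ i ∪ γ j ∈ Δ → g i = g j) →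
      ∀ i ∈ 𝒢, ∀ j ∈ 𝒢, B ∪ γ i ∈ Δ → B ∪ γ j ∈ Δ → g i = g j) :
    ∃ β, ∀ i ∈ 𝒢, F i - sqfreeMonomial k (y ∪ γ i) * β ∈ stanleyReisnerIdeal k Δ := by
  classical
  let c : (σ →₀ ℕ) → k := fun e => if h : ∃ i ∈ 𝒢, e.support ∪ y ∪ γ i ∈ Δ then
    coeff (e + sqfreeExp (y ∪ γ h.choose)) (F h.choose) else 0
  have hc : ∀ e, ∀ i ∈ 𝒢, e.support ∪ y ∪ γ i ∈ Δ →
      coeff (e + sqfreeExp (y ∪ γ i)) (F i) = c e := by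
    intro e i hi hei
    have h : ∃ i ∈ 𝒢, e.support ∪ y ∪ γ i ∈ Δ := ⟨i, hi, hei⟩
    rw [show c e = _ from dif_pos h]
    exact h_connected (e.support ∪ y) subset_union_right
      (fun i => coeff (e + sqfreeExp (y ∪ γ i)) (F i)) (fun i hi j hj hij =>
        coeff_add_sqfreeExp_eq_of_syzygy (hy i hi) (hy j hj) (h_syzygy i hi j hj) hij)
      i hi _ h.choose_spec.1 hei h.choose_spec.2
  obtain ⟨β, hβ⟩ := exists_coeff_eq (c := c)
    (T := ⋃ i ∈ 𝒢, (· + sqfreeExp (y ∪ γ i)) ⁻¹' (F i).support)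
    (𝒢.finite_toSet.biUnion fun i _ =>
      (F i).support.finite_toSet.preimage (add_left_injective _).injOn) fun e he => by
        obtain ⟨i, hi, hei⟩ : ∃ i ∈ 𝒢, e.support ∪ y ∪ γ i ∈ Δ := by
          by_contra h
          exact he (dif_neg h)
        rw [← hc e i hi hei] at he
        exact Set.mem_biUnion hi (mem_support_iff.2 he)
  refine ⟨β, fun i hi => mem_stanleyReisnerIdeal.2 fun e he => ?_⟩
  rw [coeff_sub, sub_eq_zero]
  by_cases hie : y ∪ γ i ⊆ e.support
  · obtain ⟨e, rfl⟩ := exists_add_of_le (sqfreeExp_le_iff.2 hie)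
    rw [add_comm] at he ⊢
    rw [support_add_sqfreeExp, ← union_assoc] at he
    rw [coeff_add_sqfreeExp_mul, hβ, hc e i hi he]
  · rw [not_not.1 (mt (h_support i hi e he) hie), sqfreeMonomial_eq_monomial,
      coeff_monomial_mul', if_neg (mt sqfreeExp_le_iff.1 hie)]

lemma exists_eq_mk_mul_of_connected {M : Ideal (MvPolynomial σ k)}
    (hM : M = Ideal.span (sqfreeMonomial k '' (γ '' 𝒢)))
    {f : M →ₗ[MvPolynomial σ k] MvPolynomial σ k ⧸ stanleyReisnerIdeal k Δ}
    (hf : ∀ x : M, (x : MvPolynomial σ k) ∈ stanleyReisnerIdeal k Δ → f x = 0)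
    (hy : ∀ i ∈ 𝒢, Disjoint y (γ i))
    (hyf : ∀ u ∈ y, ∀ C ∈ Δ, insert u C ∉ Δ → ∃ D ⊆ C, ∀ x, sqfreeMonomial k D • f x = 0)
    (hΔ : ∀ i ∈ 𝒢, ∀ u ∈ y ∪ γ i, ∀ B ∈ Δ, u ∉ B → ∃ C ∈ Δ, B ⊆ C ∧ insert u C ∉ Δ)
    (h_connected : ∀ B, y ⊆ B → ∀ g : τ → k,
      (∀ i ∈ 𝒢, ∀ j ∈ 𝒢, B ∪ γ i ∪ γ j ∈ Δ → g i = g j) →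
      ∀ i ∈ 𝒢, ∀ j ∈ 𝒢, B ∪ γ i ∈ Δ → B ∪ γ j ∈ Δ → g i = g j) :
    ∃ β, ∀ x : M, f x = Ideal.Quotient.mk _ (β * (sqfreeMonomial k y * x)) := by
  subst hM
  obtain ⟨F, hF⟩ := exists_lift_of_linearMap f (s := 𝒢) (r := fun i => sqfreeMonomial k (γ i))
    fun i hi => Ideal.subset_span ⟨_, ⟨i, hi, rfl⟩, rfl⟩
  have h_syzygy : ∀ i ∈ 𝒢, ∀ j ∈ 𝒢, sqfreeMonomial k (γ j) * F i - sqfreeMonomial k (γ i) * F j ∈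
      stanleyReisnerIdeal k Δ := fun i hi j hj => by
    rw [← Ideal.Quotient.eq, hF i hi, hF j hj]
    exact congrArg f (Subtype.ext (mul_comm _ _))
  have h_kill : ∀ i ∈ 𝒢, ∀ u ∈ y ∪ γ i, ∀ C ∈ Δ, insert u C ∉ Δ →
      ∃ D ⊆ C, sqfreeMonomial k D * F i ∈ stanleyReisnerIdeal k Δ := fun i hi u hu C hC huC => by
    rcases mem_union.1 hu with hu | hu
    · obtain ⟨D, hDC, hD⟩ := hyf u hu C hC huC
      exact ⟨D, hDC, by rw [← Ideal.Quotient.eq_zero_iff_mem, hF i hi, map_smul, hD]⟩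
    · refine ⟨C, subset_rfl, ?_⟩
      rw [← Ideal.Quotient.eq_zero_iff_mem, hF i hi]
      exact hf _ (sqfreeMonomial_mul_mem_stanleyReisnerIdeal fun h => huC
        (Δ.lower (insert_subset (mem_union_right C hu) subset_union_left) h))
  obtain ⟨β, hβ⟩ := exists_mul_sub_mem_stanleyReisnerIdeal hy h_syzygy
    (fun i hi e he hpe u hu =>
      mem_support_of_sqfreeMonomial_mul_mem (hΔ i hi u hu) (h_kill i hi u hu) he hpe) h_connected
  refine ⟨β, fun x => ?_⟩
  rw [← mul_assoc]
  refine eq_mk_mul_of_span (fun p hp => ?_) x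
  obtain ⟨_, ⟨i, hi, rfl⟩, rfl⟩ := hp
  have h_value := hF i hi 1
  rw [one_mul, one_smul] at h_value
  rw [← h_value, Ideal.Quotient.eq, mul_assoc, ← sqfreeMonomial_union (hy i hi), mul_comm β]
  exact hβ i hi

end Gluing

section HomQuotient

variable {R : Type*} [CommRing R] {I V W : Ideal R} {Z Y : R} {K : Ideal (R ⧸ I)}

lemma exists_eq_mk_add_mul (hK : K = (V + Ideal.span {Z} * W).map (Ideal.Quotient.mk I)) (u : K) :
    ∃ v ∈ V, ∃ w ∈ W, (u : R ⧸ I) = Ideal.Quotient.mk I (v + Z * w) := by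
  obtain ⟨x, hx, hxu⟩ := (Ideal.mem_map_iff_of_surjective _ Ideal.Quotient.mk_surjective).1
    (hK.le u.2)
  obtain ⟨v, hv, y, hy, rfl⟩ := Submodule.mem_sup.1 hx
  obtain ⟨w, hw, rfl⟩ := Ideal.mem_span_singleton_mul.1 hy
  exact ⟨v, hv, w, hw, hxu.symm⟩

lemma exists_linearMap_mk_add_mul (hK : K = (V + Ideal.span {Z} * W).map (Ideal.Quotient.mk I))
    (hY : ∀ v ∈ V, ∀ w ∈ W, v + Z * w ∈ I → Y * w ∈ I) :
    ∃ φ : K →ₗ[R ⧸ I] R ⧸ I, ∀ u : K, ∀ v ∈ V, ∀ w ∈ W,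
      (u : R ⧸ I) = Ideal.Quotient.mk I (v + Z * w) → φ u = Ideal.Quotient.mk I (Y * w) := by
  choose v hv w hw huv using exists_eq_mk_add_mul hK
  have h_unique : ∀ u : K, ∀ v' ∈ V, ∀ w' ∈ W, (u : R ⧸ I) = Ideal.Quotient.mk I (v' + Z * w') →
      Ideal.Quotient.mk I (Y * w u) = Ideal.Quotient.mk I (Y * w') := by
    intro u v' hv' w' hw' hu
    rw [huv u, Ideal.Quotient.eq] at hu
    rw [Ideal.Quotient.eq, ← mul_sub]
    refine hY (v u - v') (V.sub_mem (hv u) hv') _ (W.sub_mem (hw u) hw') ?_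
    rwa [mul_sub, sub_add_sub_comm]
  refine ⟨{ toFun := fun u => Ideal.Quotient.mk I (Y * w u), map_add' := fun x y => ?_,
            map_smul' := fun c x => ?_ }, h_unique⟩
  · rw [← map_add, ← mul_add]
    refine h_unique _ _ (V.add_mem (hv x) (hv y)) _ (W.add_mem (hw x) (hw y)) ?_
    rw [Submodule.coe_add, huv x, huv y, ← map_add, mul_add, add_add_add_comm]
  · obtain ⟨c, rfl⟩ := Ideal.Quotient.mk_surjective c
    rw [RingHom.id_apply, smul_eq_mul, ← map_mul, mul_left_comm]
    refine h_unique _ _ (V.mul_mem_left c (hv x)) _ (W.mul_mem_left c (hw x)) ?_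
    rw [Submodule.coe_smul, huv x, smul_eq_mul, ← map_mul, mul_add, mul_left_comm Z c]

lemma mk_mem_map_add (hK : K = (V + Ideal.span {Z} * W).map (Ideal.Quotient.mk I)) {v : R}
    (hv : v ∈ V) : Ideal.Quotient.mk I v ∈ K :=
  hK ▸ Ideal.mem_map_of_mem _ (Ideal.mem_sup_left hv)

lemma mk_mul_mem_map_add (hK : K = (V + Ideal.span {Z} * W).map (Ideal.Quotient.mk I)) {w : R}
    (hw : w ∈ W) : Ideal.Quotient.mk I (Z * w) ∈ K :=
  hK ▸ Ideal.mem_map_of_mem _ (Ideal.mem_sup_right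
    (Ideal.mul_mem_mul (Ideal.mem_span_singleton_self Z) hw))

lemma linearMap_ext_of_mk (hK : K = (V + Ideal.span {Z} * W).map (Ideal.Quotient.mk I))
    {f g : K →ₗ[R ⧸ I] R ⧸ I}
    (hV : ∀ u : K, ∀ v ∈ V, (u : R ⧸ I) = Ideal.Quotient.mk I v → f u = g u)
    (hW : ∀ u : K, ∀ w ∈ W, (u : R ⧸ I) = Ideal.Quotient.mk I (Z * w) → f u = g u) : f = g := by
  ext u
  obtain ⟨v, hv, w, hw, huvw⟩ := exists_eq_mk_add_mul hK u
  obtain rfl : u = ⟨_, mk_mem_map_add hK hv⟩ + ⟨_, mk_mul_mem_map_add hK hw⟩ :=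
    Subtype.ext (huvw.trans (map_add _ _ _))
  rw [map_add, map_add, hV _ v hv rfl, hW _ w hw rfl]

lemma exists_linearMap_eq_comp_mk_mul (ψ : K →ₗ[R ⧸ I] R ⧸ I) (c : R) {M : Ideal R}
    (hM : ∀ x ∈ M, Ideal.Quotient.mk I (c * x) ∈ K) :
    ∃ f : M →ₗ[R] R ⧸ I, ∀ u : K, ∀ x : M, (u : R ⧸ I) = Ideal.Quotient.mk I (c * x) →
      f x = ψ u :=
  ⟨ψ.restrictScalars R ∘ₗ (((Ideal.Quotient.mkₐ R I).toLinearMap ∘ₗ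
    LinearMap.mulLeft R c) ∘ₗ M.subtype).codRestrict (K.restrictScalars R) fun x => hM x x.2,
    fun _ _ hux => congrArg ψ (Subtype.ext hux.symm)⟩

lemma exists_eq_mk_mul_of_vanishes (hK : K = (V + Ideal.span {Z} * W).map (Ideal.Quotient.mk I))
    (hW : ∀ f : W →ₗ[R] R ⧸ I, (∀ w : W, (w : R) ∈ I → f w = 0) →
      (∀ v ∈ V, ∀ w, v • f w = 0) → ∃ β, ∀ w, f w = Ideal.Quotient.mk I (β * (Y * w)))
    {ψ : K →ₗ[R ⧸ I] R ⧸ I}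
    (hψ : ∀ u : K, ∀ v ∈ V, (u : R ⧸ I) = Ideal.Quotient.mk I v → ψ u = 0) :
    ∃ β, ∀ u : K, ∀ w ∈ W, (u : R ⧸ I) = Ideal.Quotient.mk I (Z * w) →
      ψ u = Ideal.Quotient.mk I (β * (Y * w)) := by
  obtain ⟨f, hf⟩ := exists_linearMap_eq_comp_mk_mul ψ Z (M := W) fun _ => mk_mul_mem_map_add hK
  obtain ⟨β, hβ⟩ := hW f
    (fun w hw => (hf 0 w (Ideal.Quotient.eq_zero_iff_mem.2 (I.mul_mem_left Z hw)).symm).trans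
      (map_zero ψ))
    fun v hv w => by
      rw [← map_smul, hf ⟨_, mk_mul_mem_map_add hK (W.smul_mem v w.2)⟩ (v • w) rfl]
      exact hψ _ (Z * (v * w)) (V.mul_mem_left _ (V.mul_mem_right _ hv)) rfl
  exact ⟨β, fun u w hw hu => (hf u ⟨w, hw⟩ hu).symm.trans (hβ ⟨w, hw⟩)⟩

/-- `φ : K → R ⧸ I` kills the image of `V` and replaces the factor `Z` of `Z * w`, `w ∈ W`, by
`Y`. -/
def IsReplacement (V W : Ideal R) (Z Y : R) (φ : K →ₗ[R ⧸ I] R ⧸ I) : Prop :=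
  (∀ u : K, ∀ v ∈ V, (u : R ⧸ I) = Ideal.Quotient.mk I v → φ u = 0) ∧
    ∀ u : K, ∀ w ∈ W, (u : R ⧸ I) = Ideal.Quotient.mk I (Z * w) →
      φ u = Ideal.Quotient.mk I (Y * w)

lemma exists_isReplacement (hK : K = (V + Ideal.span {Z} * W).map (Ideal.Quotient.mk I))
    (hY : ∀ v ∈ V, ∀ w ∈ W, v + Z * w ∈ I → Y * w ∈ I) :
    ∃ φ : K →ₗ[R ⧸ I] R ⧸ I, IsReplacement V W Z Y φ := by
  obtain ⟨φ, hφ⟩ := exists_linearMap_mk_add_mul hK hY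
  refine ⟨φ, fun u v hv hu => ?_, fun u w hw hu => hφ u 0 V.zero_mem w hw (by rwa [zero_add])⟩
  rw [hφ u v hv 0 W.zero_mem (by rwa [mul_zero, add_zero]), mul_zero, map_zero]

lemma IsReplacement.eq (hK : K = (V + Ideal.span {Z} * W).map (Ideal.Quotient.mk I))
    {φ ψ : K →ₗ[R ⧸ I] R ⧸ I} (hφ : IsReplacement V W Z Y φ) (hψ : IsReplacement V W Z Y ψ) :
    ψ = φ :=
  linearMap_ext_of_mk hK (fun u v hv hu => (hψ.1 u v hv hu).trans (hφ.1 u v hv hu).symm)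
    fun u w hw hu => (hψ.2 u w hw hu).trans (hφ.2 u w hw hu).symm

lemma IsReplacement.span_eq_top (hK : K = (V + Ideal.span {Z} * W).map (Ideal.Quotient.mk I))
    (hV : ∀ f : V →ₗ[R] R ⧸ I, (∀ v : V, (v : R) ∈ I → f v = 0) →
      ∃ α, ∀ v, f v = Ideal.Quotient.mk I (α * v))
    (hW : ∀ f : W →ₗ[R] R ⧸ I, (∀ w : W, (w : R) ∈ I → f w = 0) →
      (∀ v ∈ V, ∀ w, v • f w = 0) → ∃ β, ∀ w, f w = Ideal.Quotient.mk I (β * (Y * w)))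
    {φ : K →ₗ[R ⧸ I] R ⧸ I} (hφ : IsReplacement V W Z Y φ) :
    Submodule.span (R ⧸ I) {K.subtype, φ} = ⊤ := by
  refine eq_top_iff.2 fun ψ _ => Submodule.mem_span_pair.2 ?_
  obtain ⟨f, hf⟩ := exists_linearMap_eq_comp_mk_mul ψ 1 (M := V) fun v hv => by
    rw [one_mul]
    exact mk_mem_map_add hK hv
  obtain ⟨α, hα⟩ := hV f fun v hv =>
    (hf 0 v (Ideal.Quotient.eq_zero_iff_mem.2 (I.mul_mem_left 1 hv)).symm).trans (map_zero ψ)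
  have hψV : ∀ u : K, ∀ v ∈ V, (u : R ⧸ I) = Ideal.Quotient.mk I v →
      ψ u = Ideal.Quotient.mk I α * u := by
    intro u v hv hu
    rw [hu, ← map_mul, ← hα ⟨v, hv⟩, hf u ⟨v, hv⟩ (by rwa [one_mul])]
  obtain ⟨β, hβ⟩ := exists_eq_mk_mul_of_vanishes hK hW (ψ := ψ - Ideal.Quotient.mk I α • K.subtype)
    fun u v hv hu => sub_eq_zero.2 (hψV u v hv hu)
  refine ⟨Ideal.Quotient.mk I α, Ideal.Quotient.mk I β, linearMap_ext_of_mk hK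
    (fun u v hv hu => ?_) fun u w hw hu => ?_⟩
  · rw [hψV u v hv hu, LinearMap.add_apply, LinearMap.smul_apply, LinearMap.smul_apply,
      hφ.1 u v hv hu, smul_zero, add_zero]
    rfl
  · have h_rest := hβ u w hw hu
    rw [map_mul, ← hφ.2 u w hw hu, LinearMap.sub_apply, sub_eq_iff_eq_add'] at h_rest
    exact h_rest.symm

end HomQuotient

section Generators

lemma add_two_le_of_step {t : ℕ → ℕ} {a : ℕ} (ht : ∀ j, j + 1 < a → t j + 2 ≤ t (j + 1)) {i j : ℕ}
    (hij : i < j) (hj : j < a) : t i + 2 ≤ t j := by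
  induction j, hij using Nat.le_induction with
  | base => exact ht i hj
  | succ j _ ih => exact (ih (by omega)).trans (by have := ht j hj; omega)

lemma injOn_of_step {t : ℕ → ℕ} {a : ℕ} (ht : ∀ j, j + 1 < a → t j + 2 ≤ t (j + 1)) :
    Set.InjOn t (range a) := by
  refine StrictMonoOn.injOn fun i _ j hj hij => ?_
  have := add_two_le_of_step ht hij (mem_range.1 hj)
  omega

lemma image_mem_sparseSets {t : ℕ → ℕ} {a p q : ℕ} (hp : p ≤ t 0) (hq : t (a - 1) ≤ q)
    (ht : ∀ j, j + 1 < a → t j + 2 ≤ t (j + 1)) : (range a).image t ∈ sparseSets p q a := by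
  have h_mono : MonotoneOn t (range a) := by
    refine StrictMonoOn.monotoneOn fun i _ j hj hij => ?_
    have := add_two_le_of_step ht hij (mem_range.1 hj)
    omega
  refine mem_sparseSets.2 ⟨⟨fun x hx => ?_, by
    rw [card_image_of_injOn (injOn_of_step ht), card_range]⟩, fun x hx hx' => ?_⟩
  · obtain ⟨j, hj, rfl⟩ := mem_image.1 hx
    rw [mem_range] at hj
    exact mem_Icc.2 ⟨hp.trans (h_mono (by simp; omega) (by simpa) (Nat.zero_le j)),
      (h_mono (by simpa) (by simp; omega) (by omega)).trans hq⟩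
  · obtain ⟨j, hj, rfl⟩ := mem_image.1 hx
    obtain ⟨i, hi, hij⟩ := mem_image.1 hx'
    rw [mem_range] at hi hj
    rcases lt_trichotomy i j with h | rfl | h
    · have := add_two_le_of_step ht h hj
      omega
    · omega
    · have := add_two_le_of_step ht h hi
      omega

lemma sparseSets_subset_Icc {p q n m : ℕ} (hp : 1 ≤ p) (hq : q ≤ m) {s : Finset ℕ}
    (hs : s ∈ sparseSets p q n) : s ⊆ Icc 1 m :=
  (mem_sparseSets.1 hs).1.1.trans (Icc_subset_Icc hp hq)

lemma disjoint_of_mem_sparseSets {s t : Finset ℕ} {p q n : ℕ} (hs : s ∈ sparseSets p q n)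
    (ht : ∀ x ∈ t, x < p ∨ q < x) : Disjoint t s :=
  disjoint_left.2 fun x hx hx' => by
    have := mem_Icc.1 ((mem_sparseSets.1 hs).1.1 hx')
    have := ht x hx
    omega

lemma exists_eq_image_of_mem_sparseSets {s : Finset ℕ} {a p q : ℕ} (ha : 0 < a)
    (hs : s ∈ sparseSets p q a) :
    ∃ t : ℕ → ℕ, p ≤ t 0 ∧ t (a - 1) ≤ q ∧ (∀ j, j + 1 < a → t j + 2 ≤ t (j + 1)) ∧
      (range a).image t = s := by
  obtain ⟨⟨hsm, rfl⟩, h_sparse⟩ := mem_sparseSets.1 hs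
  have h_fin : (Set.ofPred (· ∈ s)).Finite := s.finite_toSet
  have h_card : #h_fin.toFinset = #s := congrArg card (finite_toSet_toFinset s)
  have h_mem : ∀ j < #s, Nat.nth (· ∈ s) j ∈ s := fun j hj =>
    Nat.nth_mem_of_lt_card h_fin (h_card ▸ hj)
  refine ⟨Nat.nth (· ∈ s), (mem_Icc.1 (hsm (h_mem 0 ha))).1,
    (mem_Icc.1 (hsm (h_mem _ (by omega)))).2, fun j hj => ?_, ?_⟩
  · have h_lt := Nat.nth_strictMonoOn h_fin (a := j) (b := j + 1) (by simp; omega)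
      (by simpa [h_card]) (Nat.lt_succ_self j)
    have h_ne : Nat.nth (· ∈ s) j + 1 ≠ Nat.nth (· ∈ s) (j + 1) := fun h =>
      h_sparse _ (h_mem j (by omega)) (h ▸ h_mem (j + 1) hj)
    omega
  · rw [← Finset.coe_inj, coe_image, coe_range, ← h_card]
    exact Nat.image_nth_Iio_card h_fin

/-- The indices in `Fin n` of the variables `x_t` with `t ∈ s`. -/
def vertices (n : ℕ) (s : Finset ℕ) : Finset (Fin n) :=
  univ.filter fun i => i.1 + 1 ∈ s

variable {k : Type*} [Field k] {n : ℕ} {s t : Finset ℕ}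

lemma mem_vertices {i : Fin n} : i ∈ vertices n s ↔ i.1 + 1 ∈ s := by
  rw [vertices, mem_filter_univ]

lemma vertices_empty : vertices n ∅ = ∅ := by
  simp only [vertices, notMem_empty, filter_false]

lemma vertices_union : vertices n (s ∪ t) = vertices n s ∪ vertices n t := by
  ext i
  simp only [mem_vertices, mem_union]

lemma disjoint_vertices (hst : Disjoint s t) : Disjoint (vertices n s) (vertices n t) :=
  disjoint_left.2 fun _ hs ht => disjoint_left.1 hst (mem_vertices.1 hs) (mem_vertices.1 ht)

lemma prod_Xv (hs : s ⊆ Icc 1 n) : ∏ t ∈ s, Xv k n t = sqfreeMonomial k (vertices n s) := by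
  refine (prod_nbij (fun i => i.1 + 1) (fun i => mem_vertices.1)
    (Set.injOn_of_injective fun i j h => Fin.ext (Nat.succ_injective h)) (fun t ht => ?_)
    fun i _ => ?_).symm
  · have h_range := mem_Icc.1 (hs ht)
    refine ⟨⟨t - 1, by omega⟩, mem_vertices.2 ?_, Nat.sub_add_cancel h_range.1⟩
    rwa [Nat.sub_add_cancel h_range.1]
  · rw [Xv, dif_pos ⟨Nat.le_add_left 1 i, i.2⟩]
    rfl

lemma Xv_mul_Xv {i j : ℕ} (hij : i ≠ j) (h : {i, j} ⊆ Icc 1 n) :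
    Xv k n i * Xv k n j = sqfreeMonomial k (vertices n {i, j}) := by
  rw [← prod_Xv h, prod_pair hij]

lemma Xv_mul_Xv_mul_Xv {i j l : ℕ} (hij : i ≠ j) (hil : i ≠ l) (hjl : j ≠ l)
    (h : {i, j, l} ⊆ Icc 1 n) :
    Xv k n i * Xv k n j * Xv k n l = sqfreeMonomial k (vertices n {i, j, l}) := by
  rw [← prod_Xv h, prod_insert (by simp [hij, hil]), prod_pair hjl, mul_assoc]

lemma idealI_eq_span {a p q : ℕ} (ha : 0 < a) (hp : 0 < p) (hq : q ≤ n) :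
    idealI k n a p q = Ideal.span (sqfreeMonomial k '' (vertices n '' sparseSets p q a)) := by
  have h_prod : ∀ s ∈ sparseSets p q a, ∏ x ∈ s, Xv k n x = sqfreeMonomial k (vertices n s) :=
    fun s hs => prod_Xv ((mem_sparseSets.1 hs).1.1.trans (Icc_subset_Icc hp hq))
  rw [idealI]
  congr 1
  ext f
  constructor
  · rintro ⟨t, h0, h1, ht, rfl⟩
    have hs := image_mem_sparseSets h0 h1 ht
    refine ⟨_, ⟨_, hs, rfl⟩, ?_⟩
    rw [← h_prod _ hs, prod_image (injOn_of_step ht)]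
  · rintro ⟨_, ⟨s, hs, rfl⟩, rfl⟩
    obtain ⟨t, h0, h1, ht, rfl⟩ := exists_eq_image_of_mem_sparseSets ha hs
    exact ⟨t, h0, h1, ht, by rw [← h_prod _ hs, prod_image (injOn_of_step ht)]⟩

end Generators

section FaceComplex

variable {m n : ℕ} {B C : Finset (Fin (m + 2))} {s t : Finset ℕ}

/-- The subscripts of the variables `x_1, …, x_m` with index in `B`; the last two indices, of `z_1`
and `z_2`, are dropped. -/
def labels (m : ℕ) (B : Finset (Fin (m + 2))) : Finset ℕ :=
  (B.image fun i => i.1 + 1) ∩ Icc 1 m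

lemma labels_subset : labels m B ⊆ Icc 1 m :=
  inter_subset_right

lemma labels_mono (hBC : B ⊆ C) : labels m B ⊆ labels m C :=
  inter_subset_inter_right (image_subset_image hBC)

lemma labels_union : labels m (B ∪ C) = labels m B ∪ labels m C := by
  rw [labels, image_union, union_inter_distrib_right, labels, labels]

lemma labels_insert {u : Fin (m + 2)} (hu : u.1 + 1 ∈ Icc 1 m) :
    labels m (insert u B) = insert (u.1 + 1) (labels m B) := by
  rw [labels, image_insert, insert_inter_of_mem hu, labels]

lemma mem_labels {u : Fin (m + 2)} (hu : u.1 + 1 ∈ Icc 1 m) : u.1 + 1 ∈ labels m B ↔ u ∈ B := by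
  rw [labels, mem_inter, and_iff_left hu, mem_image]
  exact ⟨fun ⟨i, hi, hiu⟩ => Fin.ext (Nat.succ_injective hiu) ▸ hi, fun h => ⟨u, h, rfl⟩⟩

lemma labels_vertices (s : Finset ℕ) : labels m (vertices (m + 2) s) = s ∩ Icc 1 m := by
  ext x
  simp only [labels, mem_inter, mem_image, mem_vertices, mem_Icc]
  refine and_congr_left fun hx => ⟨fun ⟨_, hi, hix⟩ => hix ▸ hi, fun hs => ?_⟩
  exact ⟨⟨x - 1, by omega⟩, by rwa [Nat.sub_add_cancel hx.1], Nat.sub_add_cancel hx.1⟩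

lemma vertices_subset_iff (hs : s ⊆ Icc 1 m) : vertices (m + 2) s ⊆ B ↔ s ⊆ labels m B := by
  refine ⟨fun h => ?_, fun h i hi => ?_⟩
  · rw [← inter_eq_left.2 hs, ← labels_vertices]
    exact labels_mono h
  · rw [mem_vertices] at hi
    exact (mem_labels (hs hi)).1 (h hi)

/-- The complex on the indices of `x_1, …, x_m, z_1, z_2` whose faces are the sets that meet
`x_1, …, x_m` in a face; it is a cone over `z_1` and `z_2`. -/
def faceComplex (m n : ℕ) : LowerSet (Finset (Fin (m + 2))) where
  carrier := {B | IsFace m n (labels m B)}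
  lower' _ _ hCB hB := IsFace.mono hB (labels_mono hCB)

lemma mem_faceComplex : B ∈ faceComplex m n ↔ IsFace m n (labels m B) :=
  Iff.rfl

lemma union_vertices_mem_faceComplex (hs : s ⊆ Icc 1 m) :
    B ∪ vertices (m + 2) s ∈ faceComplex m n ↔ IsFace m n (labels m B ∪ s) := by
  rw [mem_faceComplex, labels_union, labels_vertices, inter_eq_left.2 hs]

lemma faceComplex_exists_insert_notMem (hm : 2 * n + 3 ≤ m) {u : Fin (m + 2)}
    (hu : u.1 + 1 ∈ Icc 1 m) (hB : B ∈ faceComplex m n) (huB : u ∉ B) :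
    ∃ C ∈ faceComplex m n, B ⊆ C ∧ insert u C ∉ faceComplex m n := by
  obtain ⟨C, hCm, hBC, hC, huC⟩ := IsFace.exists_not_isFace_insert hm hB labels_subset hu
    (mt (mem_labels hu).1 huB)
  have h_labels : labels m (B ∪ vertices (m + 2) C) = C := by
    rw [labels_union, labels_vertices, inter_eq_left.2 hCm, union_eq_right.2 hBC]
  refine ⟨_, mem_faceComplex.2 (h_labels.symm ▸ hC), subset_union_left, ?_⟩
  rwa [mem_faceComplex, labels_insert hu, h_labels]

variable {k : Type*} [Field k]

lemma idealI_add_eq_stanleyReisnerIdeal (hn : 0 < n) (hm : 2 * n + 3 ≤ m) :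
    idealI k (m + 2) (n + 1) 2 (m - 1) +
        Ideal.span {Xv k (m + 2) 1 * Xv k (m + 2) m} * idealI k (m + 2) n 3 (m - 2) =
      stanleyReisnerIdeal k (faceComplex m n) := by
  have h_disj : ∀ s ∈ sparseSets 3 (m - 2) n, Disjoint {1, m} s := fun s hs =>
    disjoint_of_mem_sparseSets hs (by simp; omega)
  rw [idealI_eq_span (by omega) (by omega) (by omega),
    idealI_eq_span hn (by omega) (by omega),
    Xv_mul_Xv (by omega) (by simp [insert_subset_iff]; omega),
    span_sqfreeMonomial_mul_span
      (Set.forall_mem_image.2 fun s hs => disjoint_vertices (h_disj s hs)),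
    Submodule.add_eq_sup, ← Ideal.span_union, ← Set.image_union]
  refine span_sqfreeMonomial_eq_stanleyReisnerIdeal fun B => ?_
  rw [mem_faceComplex, not_isFace_iff hm labels_subset]
  simp only [Set.mem_union, or_and_right, exists_or, Set.exists_mem_image, mem_coe]
  refine or_congr (exists_congr fun s => and_congr_right fun hs => ?_)
    (exists_congr fun s => and_congr_right fun hs => ?_)
  · rw [vertices_subset_iff (sparseSets_subset_Icc (by omega) (by omega) hs)]
  · rw [← vertices_union, vertices_subset_iff, insert_union, singleton_union]
    exact union_subset (by simp [insert_subset_iff]; omega)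
      (sparseSets_subset_Icc (by omega) (by omega) hs)

end FaceComplex

section InnerIdeals

variable {k : Type*} [Field k] {m n : ℕ}

lemma exists_eq_mk_mul_of_idealI {a p q : ℕ} {s : Finset ℕ} (hm : 2 * n + 3 ≤ m) (ha : 0 < a)
    (hp : 1 ≤ p) (hq : q ≤ m) (hsm : s ⊆ Icc 1 m) (hs : ∀ x ∈ s, x < p ∨ q < x)
    {f : idealI k (m + 2) a p q →ₗ[MvPolynomial (Fin (m + 2)) k]
      MvPolynomial (Fin (m + 2)) k ⧸ stanleyReisnerIdeal k (faceComplex m n)}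
    (hf : ∀ w : idealI k (m + 2) a p q,
      (w : MvPolynomial (Fin (m + 2)) k) ∈ stanleyReisnerIdeal k (faceComplex m n) → f w = 0)
    (hsf : ∀ x ∈ s, ∀ b ⊆ Icc 1 m, ¬ IsFace m n (insert x b) →
      ∃ v ⊆ b, ∀ w, sqfreeMonomial k (vertices (m + 2) v) • f w = 0)
    (h_connected : ∀ b, s ⊆ b → b ⊆ Icc 1 m → ∀ g : Finset ℕ → k,
      (∀ v ∈ sparseSets p q a, ∀ u ∈ sparseSets p q a, IsFace m n (b ∪ v ∪ u) → g v = g u) →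
      ∀ v ∈ sparseSets p q a, ∀ u ∈ sparseSets p q a,
        IsFace m n (b ∪ v) → IsFace m n (b ∪ u) → g v = g u) :
    ∃ β, ∀ w : idealI k (m + 2) a p q, f w =
      Ideal.Quotient.mk _ (β * (sqfreeMonomial k (vertices (m + 2) s) * w)) := by
  have h_range : ∀ v ∈ sparseSets p q a, v ⊆ Icc 1 m := fun v => sparseSets_subset_Icc hp hq
  refine exists_eq_mk_mul_of_connected (idealI_eq_span ha hp (by omega)) hf
    (fun v hv => disjoint_vertices (disjoint_of_mem_sparseSets hv hs)) (fun u hu C _ huC => ?_)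
    (fun v hv u hu B => ?_) fun B hB g hg v hv u hu hBv hBu => ?_
  · rw [mem_vertices] at hu
    rw [mem_faceComplex, labels_insert (hsm hu)] at huC
    obtain ⟨v, hvC, hv⟩ := hsf _ hu _ labels_subset huC
    exact ⟨_, (vertices_subset_iff (hvC.trans labels_subset)).2 hvC, hv⟩
  · rw [← vertices_union, mem_vertices] at hu
    exact faceComplex_exists_insert_notMem hm (union_subset hsm (h_range v hv) hu)
  · rw [union_vertices_mem_faceComplex (h_range _ ‹_›)] at hBv hBu
    refine h_connected _ ((vertices_subset_iff hsm).1 hB) labels_subset g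
      (fun v hv u hu h => hg v hv u hu ?_) v hv u hu hBv hBu
    rwa [union_vertices_mem_faceComplex (h_range u hu), labels_union, labels_vertices,
      inter_eq_left.2 (h_range v hv)]

lemma exists_eq_mk_mul_of_idealI_inner (hn : 0 < n) (hm : 2 * n + 3 ≤ m)
    {f : idealI k (m + 2) n 2 (m - 2) →ₗ[MvPolynomial (Fin (m + 2)) k]
      MvPolynomial (Fin (m + 2)) k ⧸ stanleyReisnerIdeal k (faceComplex m n)}
    (hf : ∀ v : idealI k (m + 2) n 2 (m - 2),
      (v : MvPolynomial (Fin (m + 2)) k) ∈ stanleyReisnerIdeal k (faceComplex m n) → f v = 0) :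
    ∃ α : MvPolynomial (Fin (m + 2)) k, ∀ v : idealI k (m + 2) n 2 (m - 2),
      f v = Ideal.Quotient.mk _ (α * v) := by
  obtain ⟨α, hα⟩ := exists_eq_mk_mul_of_idealI hm hn (by omega) (by omega) (empty_subset _)
    (by simp) hf (by simp) fun b _ _ g hg v hv u hu =>
      eq_of_isFace_union (by omega) hg hv hu
  exact ⟨α, fun v => by rw [hα v, vertices_empty, sqfreeMonomial_empty, one_mul]⟩

lemma exists_eq_mk_mul_of_idealI_corner (hn : 0 < n) (hm : 2 * (n + 1) + 3 ≤ m)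
    {f : idealI k (m + 2) n 3 (m - 3) →ₗ[MvPolynomial (Fin (m + 2)) k]
      MvPolynomial (Fin (m + 2)) k ⧸ stanleyReisnerIdeal k (faceComplex m (n + 1))}
    (hf : ∀ w : idealI k (m + 2) n 3 (m - 3),
      (w : MvPolynomial (Fin (m + 2)) k) ∈ stanleyReisnerIdeal k (faceComplex m (n + 1)) →
        f w = 0)
    (hf' : ∀ v ∈ idealI k (m + 2) (n + 1) 2 (m - 2), ∀ w, v • f w = 0) :
    ∃ β, ∀ w : idealI k (m + 2) n 3 (m - 3), f w = Ideal.Quotient.mk _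
      (β * (sqfreeMonomial k (vertices (m + 2) {1, m - 1, m}) * w)) := by
  have h_corner : ∀ x ∈ ({1, m - 1, m} : Finset ℕ), x < 2 ∨ m - 2 < x := by simp; omega
  have h_corner_subset : {1, m - 1, m} ⊆ Icc 1 m := by simp [insert_subset_iff]; omega
  refine exists_eq_mk_mul_of_idealI hm hn (by omega) (by omega) h_corner_subset
    (fun x hx => by have := h_corner x hx; omega) hf (fun x hx b hbm hxb => ?_)
    fun b hb hbm g hg v hv u hu => eq_of_isFace_corner_union (by omega) hb hbm hg hv hu
  obtain ⟨v, hv, hvb⟩ := exists_sparseSets_inner_of_not_isFace hm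
    (insert_subset (h_corner_subset hx) hbm) hxb
  have hxv : Disjoint {x} v := disjoint_of_mem_sparseSets hv (by simpa using h_corner x hx)
  refine ⟨v, (subset_insert_iff_of_notMem (disjoint_singleton_left.1 hxv)).1 hvb, hf' _ ?_⟩
  rw [idealI_eq_span (by omega) (by omega) (by omega)]
  exact Ideal.subset_span ⟨_, ⟨v, hv, rfl⟩, rfl⟩

lemma sqfreeMonomial_corner_mul_mem (hn : 0 < n) (hm : 4 ≤ m) {v w : MvPolynomial (Fin (m + 2)) k}
    (hv : v ∈ idealI k (m + 2) (n + 1) 2 (m - 2)) (hw : w ∈ idealI k (m + 2) n 3 (m - 3))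
    (hvw : v + sqfreeMonomial k (vertices (m + 2) {m + 1, m + 2}) * w ∈
      stanleyReisnerIdeal k (faceComplex m (n + 1))) :
    sqfreeMonomial k (vertices (m + 2) {1, m - 1, m}) * w ∈
      stanleyReisnerIdeal k (faceComplex m (n + 1)) := by
  have h_cone : ∀ B : Finset (Fin (m + 2)),
      labels m (B ∪ vertices (m + 2) {m + 1, m + 2}) = labels m B := fun B => by
    rw [labels_union, labels_vertices, disjoint_iff_inter_eq_empty.1, union_empty]
    simp
  rw [idealI_eq_span (by omega) (by omega) (by omega)] at hv hw
  refine sqfreeMonomial_mul_mem_of_add_mul_mem (fun B hB => ?_) ?_ hv hw hvw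
  · rwa [mem_faceComplex, h_cone]
  · rintro _ ⟨s, hs, rfl⟩ _ ⟨t, ht, rfl⟩ B hB hsB htB
    rw [vertices_subset_iff (by simp [insert_subset_iff]; omega)] at hB
    rw [vertices_subset_iff (sparseSets_subset_Icc (by omega) (by omega) hs), h_cone] at hsB
    rw [vertices_subset_iff (sparseSets_subset_Icc (by omega) (by omega) ht)] at htB
    exact not_isFace_of_corner_subset hm hs ht hB hsB htB

end InnerIdeals

end

/-- Lemma identifying the Hom module (d odd case). Let `d ≥ 5` be odd, `d + 1 < m`,
`a = (d+1)/2`. In `R = k[x_1,…,x_m,z_1,z_2]` (with `z_1, z_2` the last two variables) set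
`I = I_{a,2,m−1} + x_1x_m·I_{a−1,3,m−2}` and `J = I_{a−1,2,m−2} + z_1z_2·I_{a−2,3,m−3}`, and
let `J̄` be the image of `J` in `R/I`. Then there is a unique `R/I`-linear map
`φ : J̄ → R/I` with `φ(v) = 0` for `v ∈ I_{a−1,2,m−2}` and `φ(z_1z_2w) = x_1x_{m−1}x_m w`
for `w ∈ I_{a−2,3,m−3}`; moreover `Hom_{R/I}(J̄, R/I)` is generated as an `R/I`-module by
the inclusion `ι` and `φ`. -/
theorem hom_module_identification_odd (k : Type*) [Field k] (d m : ℕ)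
    (hd : Odd d) (hd5 : 5 ≤ d) (hm : d + 1 < m) (a : ℕ) (ha : a = (d + 1) / 2)
    (I J : Ideal (MvPolynomial (Fin (m + 2)) k))
    (hI : I = idealI k (m + 2) a 2 (m - 1) +
      Ideal.span {Xv k (m + 2) 1 * Xv k (m + 2) m} * idealI k (m + 2) (a - 1) 3 (m - 2))
    (hJ : J = idealI k (m + 2) (a - 1) 2 (m - 2) +
      Ideal.span {Xv k (m + 2) (m + 1) * Xv k (m + 2) (m + 2)} *
        idealI k (m + 2) (a - 2) 3 (m - 3))
    (Jbar : Ideal (MvPolynomial (Fin (m + 2)) k ⧸ I))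
    (hJbar : Jbar = J.map (Ideal.Quotient.mk I)) :
    ∃ φ : Jbar →ₗ[MvPolynomial (Fin (m + 2)) k ⧸ I] MvPolynomial (Fin (m + 2)) k ⧸ I,
      ((∀ u : Jbar, ∀ v ∈ idealI k (m + 2) (a - 1) 2 (m - 2),
          (u : MvPolynomial (Fin (m + 2)) k ⧸ I) = Ideal.Quotient.mk I v → φ u = 0) ∧
        (∀ u : Jbar, ∀ w ∈ idealI k (m + 2) (a - 2) 3 (m - 3),
          (u : MvPolynomial (Fin (m + 2)) k ⧸ I) =
            Ideal.Quotient.mk I (Xv k (m + 2) (m + 1) * Xv k (m + 2) (m + 2) * w) →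
          φ u = Ideal.Quotient.mk I
            (Xv k (m + 2) 1 * Xv k (m + 2) (m - 1) * Xv k (m + 2) m * w))) ∧
      (∀ ψ : Jbar →ₗ[MvPolynomial (Fin (m + 2)) k ⧸ I] MvPolynomial (Fin (m + 2)) k ⧸ I,
        ((∀ u : Jbar, ∀ v ∈ idealI k (m + 2) (a - 1) 2 (m - 2),
          (u : MvPolynomial (Fin (m + 2)) k ⧸ I) = Ideal.Quotient.mk I v → ψ u = 0) ∧
        (∀ u : Jbar, ∀ w ∈ idealI k (m + 2) (a - 2) 3 (m - 3),
          (u : MvPolynomial (Fin (m + 2)) k ⧸ I) =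
            Ideal.Quotient.mk I (Xv k (m + 2) (m + 1) * Xv k (m + 2) (m + 2) * w) →
          ψ u = Ideal.Quotient.mk I
            (Xv k (m + 2) 1 * Xv k (m + 2) (m - 1) * Xv k (m + 2) m * w))) → ψ = φ) ∧
      Submodule.span (MvPolynomial (Fin (m + 2)) k ⧸ I)
        {Submodule.subtype Jbar, φ} = ⊤ := by
  obtain ⟨n, hn, rfl⟩ : ∃ n, 0 < n ∧ d = 2 * n + 3 := by
    obtain ⟨c, rfl⟩ := hd
    exact ⟨c - 1, by omega, by omega⟩
  obtain rfl : a = n + 2 := by omega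
  obtain rfl : I = stanleyReisnerIdeal k (faceComplex m (n + 1)) :=
    hI.trans (idealI_add_eq_stanleyReisnerIdeal (by omega) (by omega))
  subst hJ
  rw [Xv_mul_Xv (by omega) (by simp [Finset.insert_subset_iff])] at hJbar ⊢
  rw [Xv_mul_Xv_mul_Xv (by omega) (by omega) (by omega)
    (by simp [Finset.insert_subset_iff]; omega)]
  obtain ⟨φ, hφ⟩ := exists_isReplacement hJbar fun v hv w hw =>
    sqfreeMonomial_corner_mul_mem hn (by omega) hv hw
  exact ⟨φ, hφ, fun ψ hψ => hφ.eq hJbar hψ, hφ.span_eq_top hJbar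
    (fun f hf => exists_eq_mk_mul_of_idealI_inner (by omega) (by omega) hf)
    fun f hf hf' => exists_eq_mk_mul_of_idealI_corner hn (by omega) hf hf'⟩
end

section
/- Let k be a field, d an odd integer with d ≥ 5, and m an integer with d+1 < m; set a = (d+1)/2. In k[x_1,…,x_m,z_1,z_2,T] let Q = I_{a,2,m−1} + x_1x_m·I_{a−1,3,m−2} + T·I_{a−1,2,m−2} + (z_1z_2T − x_1x_{m−1}x_m)·I_{a−2,3,m−3}, and set S = k[x_1,…,x_m,z_1,z_2,T]/Q. Then the images of z_1, z_2 form a regular sequence on S, and S/(z_1,z_2) is isomorphic as a k-algebra to k[x_1,…,x_{m+1}]/(I_{a,2,m} + x_1x_{m+1}·I_{a−1,3,m−1}), which is the Stanley–Reisner ring k[Δ(d,m+1)] of the boundary complex of the d-dimensional cyclic polytope with m+1 vertices. -/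
set_option synthInstance.maxHeartbeats 1000000
set_option maxHeartbeats 1000000

/-!
Every ideal in sight is generated by polynomials not involving `z₁` or `z₂`, except that the last
summand `(z₁z₂T - u) · N` of `Q`, with `u = x₁x_{m-1}x_m` and `N = I_{a-2,3,m-3}`, deforms `u · N`.
Write `M` for the sum of the other summands. If `z₁f = μ + (z₁z₂T - u)ν` then setting `z₁ = 0` shows
that `uν₀ ∈ M`, where `ν₀ = ν|_{z₁ = 0}`. Now `M` lies in `J = I_{a-1,2,m-2}`, which involves none
of `x₁, x_{m-1}, x_m`, so `ν₀ ∈ J` and hence `Tν₀ ∈ M`: the relation deforms along with `u · N`, and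
`z₁` is regular. Modulo `z₁` the ideal `Q` becomes `M + u · N`, which does not involve `z₂` at all.

Killing `z₁, z₂` and relabelling `T` as `x_m` and `x_m` as `x_{m+1}`, the four summands become
those obtained by splitting `I_{a,2,m}` and `I_{a-1,3,m-1}` according to whether a monomial
contains its last variable.
-/

namespace CyclicUnprojection

open MvPolynomial nonZeroDivisors

section KillCompl

variable {R σ τ : Type*} [CommSemiring R]

lemma killCompl_X_of_notMem_range {f : σ → τ} (hf : f.Injective) {j : τ} (hj : j ∉ Set.range f) :
    killCompl hf (X j : MvPolynomial τ R) = 0 := by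
  simp only [killCompl, aeval_X, dif_neg hj]

lemma killCompl_X_apply {f : σ → τ} (hf : f.Injective) (i : σ) :
    killCompl hf (X (f i) : MvPolynomial τ R) = X i := by
  rw [← rename_X f i, killCompl_rename_app]

lemma killCompl_surjective {f : σ → τ} (hf : f.Injective) :
    Function.Surjective (killCompl hf : MvPolynomial τ R →ₐ[R] MvPolynomial σ R) :=
  fun p => ⟨rename f p, killCompl_rename_app hf p⟩

end KillCompl

section KillVariables

variable {R σ τ : Type*} [CommRing R]

lemma sub_rename_killCompl_mem {f : σ → τ} (hf : f.Injective) (p : MvPolynomial τ R) :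
    p - rename f (killCompl hf p) ∈ Ideal.span (X '' (Set.range f)ᶜ) := by
  set I : Ideal (MvPolynomial τ R) := Ideal.span (X '' (Set.range f)ᶜ)
  have h : Ideal.Quotient.mkₐ R I =
      (Ideal.Quotient.mkₐ R I).comp ((rename f).comp (killCompl hf)) := by
    refine algHom_ext fun j => ?_
    by_cases hj : j ∈ Set.range f
    · obtain ⟨i, rfl⟩ := hj
      simp only [AlgHom.comp_apply, killCompl_X_apply, rename_X]
    · simp only [AlgHom.comp_apply, killCompl_X_of_notMem_range hf hj, map_zero]
      exact Ideal.Quotient.eq_zero_iff_mem.2 (Ideal.subset_span ⟨j, hj, rfl⟩)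
  exact Ideal.Quotient.eq.1 (DFunLike.congr_fun h p)

lemma ker_killCompl {f : σ → τ} (hf : f.Injective) :
    RingHom.ker (killCompl hf : MvPolynomial τ R →ₐ[R] MvPolynomial σ R) =
      Ideal.span (X '' (Set.range f)ᶜ) := by
  refine le_antisymm (fun p hp => ?_) (Ideal.span_le.2 ?_)
  · simpa only [RingHom.mem_ker.1 hp, map_zero, sub_zero] using sub_rename_killCompl_mem hf p
  · rintro _ ⟨j, hj, rfl⟩
    exact killCompl_X_of_notMem_range hf hj

variable (R) in
/-- The substitution `X i ↦ 0`, as an endomorphism of the polynomial ring. -/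
noncomputable def killVar (i : τ) : MvPolynomial τ R →ₐ[R] MvPolynomial τ R :=
  (rename Subtype.val).comp (killCompl (Subtype.val_injective (p := (· ≠ i))))

@[simp]
lemma killVar_X_self (i : τ) : killVar R i (X i) = 0 := by
  rw [killVar, AlgHom.comp_apply, killCompl_X_of_notMem_range _ (by simp), map_zero]

lemma killVar_X_of_ne {i j : τ} (h : j ≠ i) : killVar R i (X j) = X j := by
  rw [killVar, AlgHom.comp_apply, killCompl_X_apply _ (⟨j, h⟩ : {j // j ≠ i}), rename_X]

lemma X_dvd_sub_killVar (i : τ) (p : MvPolynomial τ R) : X i ∣ p - killVar R i p := by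
  have hrange : (Set.range (Subtype.val : {j // j ≠ i} → τ))ᶜ = {i} := by
    ext j
    simp
  have h := sub_rename_killCompl_mem (Subtype.val_injective (p := (· ≠ i))) p
  rwa [hrange, Set.image_singleton, Ideal.mem_span_singleton] at h

lemma killVar_killVar (i : τ) (p : MvPolynomial τ R) :
    killVar R i (killVar R i p) = killVar R i p := by
  simp only [killVar, AlgHom.comp_apply, killCompl_rename_app]

/-- `IsFreeOf i I` says that `I` is generated by polynomials not involving the variable `X i`,
encoded as invariance of `I` under the extension of ideals along `X i ↦ 0`. -/
def IsFreeOf (i : τ) (I : Ideal (MvPolynomial τ R)) : Prop :=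
  I.map (killVar R i) = I

namespace IsFreeOf

variable {i : τ} {I J : Ideal (MvPolynomial τ R)}

lemma span_singleton {p : MvPolynomial τ R} (hp : killVar R i p = p) :
    IsFreeOf i (Ideal.span {p}) := by
  rw [IsFreeOf, Ideal.map_span, Set.image_singleton, hp]

lemma add (hI : IsFreeOf i I) (hJ : IsFreeOf i J) : IsFreeOf i (I + J) := by
  rw [IsFreeOf, Ideal.add_eq_sup, Ideal.map_sup, hI, hJ]

lemma mul (hI : IsFreeOf i I) (hJ : IsFreeOf i J) : IsFreeOf i (I * J) := by
  rw [IsFreeOf, Ideal.map_mul, hI, hJ]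

lemma killVar_mem (hI : IsFreeOf i I) {p : MvPolynomial τ R} (hp : p ∈ I) :
    killVar R i p ∈ I :=
  hI.le (Ideal.mem_map_of_mem _ hp)

lemma exists_eq_add_X_mul (hI : IsFreeOf i I) {p : MvPolynomial τ R} (hp : p ∈ I) :
    ∃ q ∈ I, p = killVar R i p + X i * q := by
  suffices h : p - killVar R i p ∈ Ideal.span {X i} * I by
    obtain ⟨q, hq, e⟩ := Ideal.mem_span_singleton_mul.1 h
    exact ⟨q, hq, by rw [e, add_sub_cancel]⟩
  have hspan : p ∈ Ideal.span (killVar R i '' I) := hI.ge hp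
  clear hp
  induction hspan using Submodule.span_induction with
  | mem _ h =>
    obtain ⟨q, -, rfl⟩ := h
    simp only [killVar_killVar, sub_self, zero_mem]
  | zero => simp only [map_zero, sub_self, zero_mem]
  | add p q hp hq ihp ihq =>
    rw [map_add, add_sub_add_comm]
    exact add_mem ihp ihq
  | smul r p hp ih =>
    have e : r * p - killVar R i r * killVar R i p =
        (r - killVar R i r) * p + killVar R i r * (p - killVar R i p) := by ring
    rw [smul_eq_mul, map_mul, e]
    exact add_mem
      (Ideal.mul_mem_mul (Ideal.mem_span_singleton.2 (X_dvd_sub_killVar i r)) (hI.le hp))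
      (Ideal.mul_mem_left _ _ ih)

lemma mem_of_X_mul_mem (hI : IsFreeOf i I) {p : MvPolynomial τ R} (hp : X i * p ∈ I) :
    p ∈ I := by
  obtain ⟨q, hq, e⟩ := hI.exists_eq_add_X_mul hp
  rw [map_mul, killVar_X_self, zero_mul, zero_add, X_mul_cancel_left_iff] at e
  rwa [e]

/-- Passing from `u * N` to `(X i * t - u) * N` keeps `X i` regular if every relation `u * ν ∈ M`
lifts to `t * ν ∈ M`. -/
lemma mem_of_X_mul_mem_deformation {M N : Ideal (MvPolynomial τ R)} {u t p : MvPolynomial τ R}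
    (hM : IsFreeOf i M) (hN : IsFreeOf i N) (hu : killVar R i u = u)
    (hlift : ∀ ν ∈ N, u * ν ∈ M → t * ν ∈ M)
    (hp : X i * p ∈ M + Ideal.span {X i * t - u} * N) :
    p ∈ M + Ideal.span {X i * t - u} * N := by
  obtain ⟨μ, hμ, y, hy, e⟩ := Submodule.mem_sup.1 hp
  obtain ⟨ν, hν, rfl⟩ := Ideal.mem_span_singleton_mul.1 hy
  obtain ⟨μ', hμ', eμ⟩ := hM.exists_eq_add_X_mul hμ
  obtain ⟨ν', hν', eν⟩ := hN.exists_eq_add_X_mul hν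
  set μ₀ := killVar R i μ
  set ν₀ := killVar R i ν
  have e₀ : μ₀ - u * ν₀ = 0 := by
    simpa [hu, neg_mul, ← sub_eq_add_neg] using congrArg (killVar R i) e
  have huν₀ : u * ν₀ ∈ M := sub_eq_zero.1 e₀ ▸ hM.killVar_mem hμ
  have htν₀ : t * ν₀ ∈ M := hlift ν₀ (hN.killVar_mem hν) huν₀
  have e' : p = μ' + t * ν₀ + (X i * t - u) * ν' := by
    rw [← X_mul_cancel_left_iff (i := i)]
    linear_combination e₀ - e + eμ + (X i * t - u) * eν
  rw [e']
  exact Submodule.add_mem_sup (add_mem hμ' htν₀) (Ideal.mem_span_singleton_mul.2 ⟨ν', hν', rfl⟩)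

end IsFreeOf
end KillVariables

section QuotientRings

variable {A B : Type*} [CommRing A] [CommRing B]

lemma map_mem_nonZeroDivisors_iff {π : A →+* B} (hπ : Function.Surjective π) {x : A} :
    π x ∈ B⁰ ↔ ∀ p, x * p ∈ RingHom.ker π → p ∈ RingHom.ker π := by
  simp only [mem_nonZeroDivisors_iff_left, hπ.forall, ← map_mul, RingHom.mem_ker]

lemma mk_mem_nonZeroDivisors_iff {I : Ideal A} {x : A} :
    Ideal.Quotient.mk I x ∈ (A ⧸ I)⁰ ↔ ∀ p, x * p ∈ I → p ∈ I := by
  rw [map_mem_nonZeroDivisors_iff Ideal.Quotient.mk_surjective, Ideal.mk_ker]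

lemma ker_mk_comp_mk (I : Ideal A) (x : A) :
    RingHom.ker ((Ideal.Quotient.mk (Ideal.span {Ideal.Quotient.mk I x})).comp
      (Ideal.Quotient.mk I)) = I + Ideal.span {x} := by
  rw [← RingHom.comap_ker, Ideal.mk_ker, ← Set.image_singleton, ← Ideal.map_span,
    Ideal.comap_map_quotientMk, Ideal.add_eq_sup]

lemma mk_mk_mem_nonZeroDivisors_iff {I : Ideal A} {x y : A} :
    Ideal.Quotient.mk (Ideal.span {Ideal.Quotient.mk I x}) (Ideal.Quotient.mk I y) ∈
        ((A ⧸ I) ⧸ Ideal.span {Ideal.Quotient.mk I x})⁰ ↔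
      ∀ p, y * p ∈ I + Ideal.span {x} → p ∈ I + Ideal.span {x} := by
  rw [← ker_mk_comp_mk, ← map_mem_nonZeroDivisors_iff, RingHom.comp_apply]
  exact Ideal.Quotient.mk_surjective.comp Ideal.Quotient.mk_surjective

lemma span_singleton_mul_add_eq_of_sub_mem {I J : Ideal A} {x y : A} (h : x - y ∈ J) :
    Ideal.span {x} * I + J = Ideal.span {y} * I + J := by
  have hle : ∀ {x y : A}, x - y ∈ J → Ideal.span {x} * I + J ≤ Ideal.span {y} * I + J := by
    refine fun {x y} h => sup_le (Ideal.span_singleton_mul_le_iff.2 fun p hp => ?_) le_sup_right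
    have e : x * p = y * p + (x - y) * p := by ring
    rw [e]
    exact Submodule.add_mem_sup (Ideal.mem_span_singleton_mul.2 ⟨p, hp, rfl⟩)
      (Ideal.mul_mem_right _ _ h)
  exact (hle h).antisymm (hle (by rwa [← neg_sub, neg_mem_iff]))

variable {k : Type*} [CommRing k] [Algebra k A] [Algebra k B]

lemma ker_mkₐ_map_comp {φ : A →ₐ[k] B} (hφ : Function.Surjective φ) (I : Ideal A) :
    RingHom.ker ((Ideal.Quotient.mkₐ k (I.map φ)).comp φ) = I ⊔ RingHom.ker φ := by
  have hmk : RingHom.ker (Ideal.Quotient.mkₐ k (I.map φ)) = I.map φ := Ideal.Quotient.mkₐ_ker k _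
  rw [← AlgHom.comap_ker, hmk, Ideal.comap_map_of_surjective φ hφ]
  rfl

/-- If `s` generates the kernel of a surjection `φ : A → B`, then killing `s` in `A ⧸ I` gives the
quotient of `B` by the image of `I`. -/
noncomputable def quotQuotEquivQuotMap {φ : A →ₐ[k] B} (hφ : Function.Surjective φ) (I : Ideal A)
    {s : Set A} (hs : RingHom.ker φ = Ideal.span s) :
    ((A ⧸ I) ⧸ Ideal.span (Ideal.Quotient.mk I '' s)) ≃ₐ[k] B ⧸ I.map φ :=
  have hspan : Ideal.span (Ideal.Quotient.mk I '' s) =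
      (Ideal.span s).map (Ideal.Quotient.mkₐ k I) := (Ideal.map_span _ _).symm
  have hker : I ⊔ Ideal.span s = RingHom.ker ((Ideal.Quotient.mkₐ k (I.map φ)).comp φ) := by
    rw [ker_mkₐ_map_comp hφ, hs]
  (Ideal.quotientEquivAlgOfEq k hspan).trans <|
    (DoubleQuot.quotQuotEquivQuotSupₐ k I (Ideal.span s)).trans <|
    (Ideal.quotientEquivAlgOfEq k hker).trans <|
    Ideal.quotientKerAlgEquivOfSurjective ((Ideal.Quotient.mkₐ_surjective k _).comp hφ)

end QuotientRings

section SparseMonomials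

variable {k : Type*} [Field k] {n a p q : ℕ}

/-- The index sequences of the generators of `I_{a,p,q}`. Only the entries `t 0, …, t (a - 1)` are
meaningful. -/
def IsSparse (a p q : ℕ) (t : ℕ → ℕ) : Prop :=
  p ≤ t 0 ∧ t (a - 1) ≤ q ∧ ∀ j, j + 1 < a → t j + 2 ≤ t (j + 1)

namespace IsSparse

variable {t : ℕ → ℕ}

lemma le_apply (ht : IsSparse a p q t) {j : ℕ} (hj : j < a) : p ≤ t j := by
  induction j with
  | zero => exact ht.1
  | succ j ih =>
    have := ih (by lia)
    have := ht.2.2 j hj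
    lia

lemma apply_le (ht : IsSparse a p q t) {j : ℕ} (hj : j < a) : t j ≤ q := by
  induction Nat.le_sub_one_of_lt hj using Nat.decreasingInduction with
  | self => exact ht.2.1
  | of_succ j hlt ih =>
    have := ih (by lia)
    have := ht.2.2 j (by lia)
    lia

lemma mono (ht : IsSparse a p q t) {p' q' : ℕ} (hp : p' ≤ p) (hq : q ≤ q') :
    IsSparse a p' q' t :=
  ⟨hp.trans ht.1, ht.2.1.trans hq, ht.2.2⟩

lemma dropLast (ht : IsSparse a p q t) (ha : 2 ≤ a) : IsSparse (a - 1) p (q - 2) t := by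
  refine ⟨ht.1, ?_, fun j hj => ht.2.2 j (by lia)⟩
  have hstep := ht.2.2 (a - 2) (by lia)
  rw [show a - 2 + 1 = a - 1 by lia] at hstep
  rw [Nat.sub_sub]
  have := ht.2.1
  lia

lemma snoc (ht : IsSparse (a - 1) p (q - 2) t) (ha : 2 ≤ a) (hq : 2 ≤ q) :
    IsSparse a p q (Function.update t (a - 1) q) := by
  refine ⟨?_, by rw [Function.update_self], fun j hj => ?_⟩
  · rw [Function.update_of_ne (by lia)]
    exact ht.1
  · rw [Function.update_of_ne (by lia : j ≠ a - 1)]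
    obtain hj' | rfl : j + 1 < a - 1 ∨ j = a - 2 := by lia
    · rw [Function.update_of_ne hj'.ne]
      exact ht.2.2 j hj'
    · rw [show a - 2 + 1 = a - 1 by lia, Function.update_self]
      have := ht.apply_le (j := a - 2) (by lia)
      lia

end IsSparse

variable (k) in
/-- The product `x_{t_0} ⋯ x_{t_{a-1}}`. -/
noncomputable def prodXv (n a : ℕ) (t : ℕ → ℕ) : MvPolynomial (Fin n) k :=
  ∏ j ∈ Finset.range a, Xv k n (t j)

lemma prodXv_eq_mul (ha : 1 ≤ a) (t : ℕ → ℕ) :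
    prodXv k n a t = Xv k n (t (a - 1)) * prodXv k n (a - 1) t := by
  obtain ⟨b, rfl⟩ := Nat.exists_eq_add_of_le' ha
  rw [prodXv, Finset.prod_range_succ, mul_comm]
  rfl

lemma prodXv_congr {s t : ℕ → ℕ} (h : ∀ j < a, s j = t j) : prodXv k n a s = prodXv k n a t :=
  Finset.prod_congr rfl fun j hj => by rw [h j (Finset.mem_range.1 hj)]

lemma idealI_eq_span_image :
    idealI k n a p q = Ideal.span (prodXv k n a '' {t | IsSparse a p q t}) := by
  rw [idealI]
  congr 1
  ext f
  simp only [IsSparse, prodXv, Set.mem_image, Set.mem_ofPred_eq, and_assoc, eq_comm]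

lemma idealI_mono {p' q' : ℕ} (hp : p' ≤ p) (hq : q ≤ q') :
    idealI k n a p q ≤ idealI k n a p' q' := by
  simp only [idealI_eq_span_image]
  exact Ideal.span_mono (Set.image_mono fun t ht => ht.mono hp hq)

lemma idealI_le_pred (ha : 2 ≤ a) : idealI k n a p q ≤ idealI k n (a - 1) p (q - 2) := by
  rw [idealI_eq_span_image, Ideal.span_le]
  rintro _ ⟨t, ht, rfl⟩
  rw [prodXv_eq_mul (by lia), idealI_eq_span_image]
  exact Ideal.mul_mem_left _ _ (Ideal.subset_span ⟨t, ht.dropLast ha, rfl⟩)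

/-- A generator of `I_{a,p,q}` either avoids `x_q` or is `x_q` times a generator of
`I_{a-1,p,q-2}`. -/
lemma idealI_eq_add (ha : 2 ≤ a) (hq : 2 ≤ q) :
    idealI k n a p q = idealI k n a p (q - 1) +
      Ideal.span {Xv k n q} * idealI k n (a - 1) p (q - 2) := by
  refine le_antisymm ?_ (sup_le (idealI_mono le_rfl (by lia)) ?_)
  · rw [idealI_eq_span_image, Ideal.span_le]
    rintro _ ⟨t, ht, rfl⟩
    by_cases h : t (a - 1) ≤ q - 1
    · rw [idealI_eq_span_image]
      exact Submodule.mem_sup_left (Ideal.subset_span ⟨t, ⟨ht.1, h, ht.2.2⟩, rfl⟩)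
    · have hlast : t (a - 1) = q := by
        have := ht.2.1
        lia
      rw [prodXv_eq_mul (by lia), hlast, idealI_eq_span_image]
      refine Submodule.mem_sup_right (Ideal.mul_mem_mul (Ideal.mem_span_singleton_self _) ?_)
      rw [idealI_eq_span_image]
      exact Ideal.subset_span ⟨t, ht.dropLast ha, rfl⟩
  · rw [idealI_eq_span_image, Ideal.span_mul_span', Ideal.span_le, Set.singleton_mul]
    rintro _ ⟨_, ⟨t, ht, rfl⟩, rfl⟩
    rw [idealI_eq_span_image]
    refine Ideal.subset_span ⟨Function.update t (a - 1) q, ht.snoc ha hq, ?_⟩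
    rw [prodXv_eq_mul (by lia), Function.update_self]
    exact congrArg _ (prodXv_congr fun j hj => Function.update_of_ne hj.ne _ _)

lemma map_idealI {n' : ℕ} {φ : MvPolynomial (Fin n) k →ₐ[k] MvPolynomial (Fin n') k}
    (h : ∀ t, p ≤ t → t ≤ q → φ (Xv k n t) = Xv k n' t) :
    (idealI k n a p q).map φ = idealI k n' a p q := by
  rw [idealI_eq_span_image, Ideal.map_span, Set.image_image, idealI_eq_span_image]
  congr 1
  refine Set.image_congr fun t ht => ?_
  rw [prodXv, map_prod]
  exact Finset.prod_congr rfl fun j hj =>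
    h _ (ht.le_apply (Finset.mem_range.1 hj)) (ht.apply_le (Finset.mem_range.1 hj))

lemma Xv_eq_X (i : Fin n) {t : ℕ} (h : (i : ℕ) + 1 = t) : Xv k n t = X i := by
  subst h
  simp [Xv]

lemma killVar_Xv_of_ne {i : Fin n} {t : ℕ} (h : (i : ℕ) + 1 ≠ t) :
    killVar k i (Xv k n t) = Xv k n t := by
  by_cases ht : 1 ≤ t ∧ t ≤ n
  · rw [Xv_eq_X ⟨t - 1, by lia⟩ (by grind), killVar_X_of_ne (by grind)]
  · rw [Xv, dif_neg ht, map_zero]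

lemma isFreeOf_idealI {i : Fin n} (h : (i : ℕ) + 1 < p ∨ q < i + 1) :
    IsFreeOf i (idealI k n a p q) :=
  map_idealI fun _ _ _ => killVar_Xv_of_ne (by lia)

lemma mem_idealI_of_Xv_mul_mem {t : ℕ} (ht : 1 ≤ t ∧ t ≤ n) (h : t < p ∨ q < t)
    {f : MvPolynomial (Fin n) k} (hf : Xv k n t * f ∈ idealI k n a p q) :
    f ∈ idealI k n a p q := by
  have ht' : (⟨t - 1, by lia⟩ : Fin n) + 1 = t := Nat.sub_add_cancel ht.1
  rw [Xv_eq_X _ ht'] at hf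
  exact (isFreeOf_idealI (by rwa [ht'])).mem_of_X_mul_mem hf

end SparseMonomials

section Unprojection

variable (k : Type*) [Field k]

/-- The Stanley–Reisner ideal of the cyclic polytope `Δ(d, n)`, where `a = (d + 1) / 2` with `d`
odd, in a polynomial ring with `N` variables of which the first `n` correspond to the vertices. -/
noncomputable def cyclicIdeal (N n a : ℕ) : Ideal (MvPolynomial (Fin N) k) :=
  idealI k N a 2 (n - 1) + Ideal.span {Xv k N 1 * Xv k N n} * idealI k N (a - 1) 3 (n - 2)

/-- The sum of the relations of the unprojection ring that involve neither `z₁` nor `z₂`. -/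
noncomputable def baseIdeal (m a : ℕ) : Ideal (MvPolynomial (Fin (m + 3)) k) :=
  cyclicIdeal k (m + 3) m a +
    Ideal.span {Xv k (m + 3) (m + 3)} * idealI k (m + 3) (a - 1) 2 (m - 2)

/-- The ideal `Q` of relations of the unprojection ring `S`; the variables `z₁, z₂, T` are
`x_{m+1}, x_{m+2}, x_{m+3}`. -/
noncomputable def unprojectionIdeal (m a : ℕ) : Ideal (MvPolynomial (Fin (m + 3)) k) :=
  baseIdeal k m a +
    Ideal.span {Xv k (m + 3) (m + 1) * Xv k (m + 3) (m + 2) * Xv k (m + 3) (m + 3) -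
      Xv k (m + 3) 1 * Xv k (m + 3) (m - 1) * Xv k (m + 3) m} * idealI k (m + 3) (a - 2) 3 (m - 3)

variable {k} {m a : ℕ}

lemma baseIdeal_le_idealI (ha : 2 ≤ a) :
    baseIdeal k m a ≤ idealI k (m + 3) (a - 1) 2 (m - 2) := by
  refine sup_le (sup_le ?_ ?_) Ideal.mul_le_right
  · exact (idealI_mono le_rfl (by lia)).trans (idealI_le_pred (q := m) ha)
  · exact Ideal.mul_le_right.trans (idealI_mono (by lia) le_rfl)

lemma Xv_mul_mem_baseIdeal {f : MvPolynomial (Fin (m + 3)) k}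
    (hf : f ∈ idealI k (m + 3) (a - 1) 2 (m - 2)) :
    Xv k (m + 3) (m + 3) * f ∈ baseIdeal k m a :=
  Submodule.mem_sup_right (Ideal.mem_span_singleton_mul.2 ⟨f, hf, rfl⟩)

lemma isFreeOf_baseIdeal {i : Fin (m + 3)} (hm : 1 ≤ m) (hi : m ≤ i) (hi' : (i : ℕ) < m + 2) :
    IsFreeOf i (baseIdeal k m a) := by
  refine .add (.add (isFreeOf_idealI (by lia)) (.mul (.span_singleton ?_) (isFreeOf_idealI ?_)))
    (.mul (.span_singleton (killVar_Xv_of_ne (by lia))) (isFreeOf_idealI (by lia)))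
  · rw [map_mul, killVar_Xv_of_ne (by lia), killVar_Xv_of_ne (by lia)]
  · lia

lemma killVar_Xv_mul_Xv_mul_Xv {i : Fin (m + 3)} (hm : 1 ≤ m) (hi : m ≤ i) :
    killVar k i (Xv k (m + 3) 1 * Xv k (m + 3) (m - 1) * Xv k (m + 3) m) =
      Xv k (m + 3) 1 * Xv k (m + 3) (m - 1) * Xv k (m + 3) m := by
  rw [map_mul, map_mul, killVar_Xv_of_ne (by lia), killVar_Xv_of_ne (by lia),
    killVar_Xv_of_ne (by lia)]

lemma mem_idealI_of_Xv_mul_Xv_mul_Xv_mul_mem (hm : 2 ≤ m) {f : MvPolynomial (Fin (m + 3)) k}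
    (hf : Xv k (m + 3) 1 * Xv k (m + 3) (m - 1) * Xv k (m + 3) m * f ∈
      idealI k (m + 3) (a - 1) 2 (m - 2)) :
    f ∈ idealI k (m + 3) (a - 1) 2 (m - 2) := by
  rw [mul_assoc, mul_assoc] at hf
  have h₁ := mem_idealI_of_Xv_mul_mem (by lia) (by lia) hf
  have h₂ := mem_idealI_of_Xv_mul_mem (by lia) (by lia) h₁
  exact mem_idealI_of_Xv_mul_mem (by lia) (by lia) h₂

lemma mem_unprojectionIdeal_of_Xv_mul_mem (ha : 2 ≤ a) (hm : 2 ≤ m)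
    {f : MvPolynomial (Fin (m + 3)) k}
    (hf : Xv k (m + 3) (m + 1) * f ∈ unprojectionIdeal k m a) :
    f ∈ unprojectionIdeal k m a := by
  have hz₁ : Xv k (m + 3) (m + 1) = X ⟨m, by lia⟩ := Xv_eq_X _ rfl
  rw [unprojectionIdeal, hz₁, mul_assoc (X _)] at hf ⊢
  refine IsFreeOf.mem_of_X_mul_mem_deformation (isFreeOf_baseIdeal (by lia) le_rfl (by simp))
    (isFreeOf_idealI (Or.inr ?_)) (killVar_Xv_mul_Xv_mul_Xv (by lia) le_rfl) ?_ hf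
  · grind
  · intro ν _ hν
    rw [mul_assoc]
    exact Ideal.mul_mem_left _ _ <| Xv_mul_mem_baseIdeal <|
      mem_idealI_of_Xv_mul_Xv_mul_Xv_mul_mem hm (baseIdeal_le_idealI ha hν)

lemma unprojectionIdeal_add_span_eq :
    unprojectionIdeal k m a + Ideal.span {Xv k (m + 3) (m + 1)} = baseIdeal k m a +
      Ideal.span {Xv k (m + 3) 1 * Xv k (m + 3) (m - 1) * Xv k (m + 3) m} *
        idealI k (m + 3) (a - 2) 3 (m - 3) + Ideal.span {Xv k (m + 3) (m + 1)} := by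
  rw [unprojectionIdeal, add_assoc, add_assoc, ← neg_sub, Ideal.span_singleton_neg,
    span_singleton_mul_add_eq_of_sub_mem]
  rw [sub_sub_cancel_left, neg_mem_iff, mul_assoc]
  exact Ideal.mul_mem_right _ _ (Ideal.mem_span_singleton_self _)

lemma mem_unprojectionIdeal_add_span_of_Xv_mul_mem (hm : 1 ≤ m)
    {f : MvPolynomial (Fin (m + 3)) k}
    (hf : Xv k (m + 3) (m + 2) * f ∈
      unprojectionIdeal k m a + Ideal.span {Xv k (m + 3) (m + 1)}) :
    f ∈ unprojectionIdeal k m a + Ideal.span {Xv k (m + 3) (m + 1)} := by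
  rw [unprojectionIdeal_add_span_eq] at hf ⊢
  rw [Xv_eq_X (⟨m + 1, by lia⟩ : Fin (m + 3)) rfl] at hf
  refine IsFreeOf.mem_of_X_mul_mem (.add (.add (isFreeOf_baseIdeal hm ?_ ?_)
    (.mul (.span_singleton (killVar_Xv_mul_Xv_mul_Xv hm ?_)) (isFreeOf_idealI ?_)))
    (.span_singleton (killVar_Xv_of_ne ?_))) hf <;> grind

/-- The renumbering `x_t ↦ x_t` for `t < m`, `x_m ↦ T`, `x_{m+1} ↦ x_m` that embeds the variables of
`k[x_1, …, x_{m+1}]` in those of `k[x_1, …, x_m, z₁, z₂, T]`; as indices of `Fin` start at `0`,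
every index is one less. -/
def renumber (m : ℕ) (i : Fin (m + 1)) : Fin (m + 3) :=
  if i + 1 < m then ⟨i, by lia⟩ else if i + 1 = m then ⟨m + 2, by lia⟩ else ⟨m - 1, by lia⟩

lemma renumber_injective (m : ℕ) : Function.Injective (renumber m) := by
  intro i j h
  grind [renumber]

lemma compl_range_renumber (hm : 1 ≤ m) :
    (Set.range (renumber m))ᶜ = {⟨m, by lia⟩, ⟨m + 1, by lia⟩} := by
  ext j
  simp only [Set.mem_compl_iff, Set.mem_range, not_exists, Set.mem_insert_iff,
    Set.mem_singleton_iff, Fin.ext_iff]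
  refine ⟨fun h => ?_, fun h i => by grind [renumber]⟩
  by_contra! hj
  obtain hlt | heq | heq : (j : ℕ) + 1 < m ∨ (j : ℕ) = m - 1 ∨ (j : ℕ) = m + 2 := by lia
  · exact h ⟨j, by lia⟩ (by grind [renumber])
  · exact h (Fin.last m) (by grind [renumber])
  · exact h ⟨m - 1, by lia⟩ (by grind [renumber])

lemma killCompl_renumber_Xv {i : Fin (m + 1)} {s t : ℕ} (hs : (renumber m i : ℕ) + 1 = s)
    (ht : (i : ℕ) + 1 = t) :
    killCompl (renumber_injective m) (Xv k (m + 3) s) = Xv k (m + 1) t := by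
  rw [Xv_eq_X _ hs, Xv_eq_X _ ht, killCompl_X_apply]

lemma ker_killCompl_renumber (hm : 1 ≤ m) :
    RingHom.ker (killCompl (renumber_injective m) : _ →ₐ[k] _) =
      Ideal.span {Xv k (m + 3) (m + 1), Xv k (m + 3) (m + 2)} := by
  rw [ker_killCompl, compl_range_renumber hm, Set.image_pair, Xv_eq_X ⟨m, by lia⟩ rfl,
    Xv_eq_X ⟨m + 1, by lia⟩ rfl]

lemma killCompl_renumber_Xv_of_lt {t : ℕ} (ht : 1 ≤ t) (htm : t < m) :
    killCompl (renumber_injective m) (Xv k (m + 3) t) = Xv k (m + 1) t :=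
  killCompl_renumber_Xv (i := ⟨t - 1, by lia⟩) (by grind [renumber]) (by grind)

lemma map_killCompl_renumber_idealI {b p q : ℕ} (hp : 1 ≤ p) (hq : q < m) :
    (idealI k (m + 3) b p q).map (killCompl (renumber_injective m)) = idealI k (m + 1) b p q :=
  map_idealI fun _ hpt htq => killCompl_renumber_Xv_of_lt (hp.trans hpt) (htq.trans_lt hq)

lemma map_unprojectionIdeal (ha : 3 ≤ a) (hm : 3 ≤ m) :
    (unprojectionIdeal k m a).map (killCompl (renumber_injective m)) =
      cyclicIdeal k (m + 1) (m + 1) a := by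
  have hz₁ : killCompl (renumber_injective m) (Xv k (m + 3) (m + 1)) = 0 :=
    RingHom.mem_ker.1 <| (ker_killCompl_renumber (by lia : 1 ≤ m)).ge <|
      Ideal.subset_span (Set.mem_insert _ _)
  have hT : killCompl (renumber_injective m) (Xv k (m + 3) (m + 3)) = Xv k (m + 1) m :=
    killCompl_renumber_Xv (i := ⟨m - 1, by lia⟩) (by grind [renumber]) (by grind)
  have hx : killCompl (renumber_injective m) (Xv k (m + 3) m) = Xv k (m + 1) (m + 1) :=
    killCompl_renumber_Xv (i := Fin.last m) (by grind [renumber]) (by simp)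
  have hsplit : cyclicIdeal k (m + 1) (m + 1) a =
      idealI k (m + 1) a 2 (m - 1) +
        Ideal.span {Xv k (m + 1) m} * idealI k (m + 1) (a - 1) 2 (m - 2) +
      Ideal.span {Xv k (m + 1) 1 * Xv k (m + 1) (m + 1)} *
        (idealI k (m + 1) (a - 1) 3 (m - 2) +
          Ideal.span {Xv k (m + 1) (m - 1)} * idealI k (m + 1) (a - 2) 3 (m - 3)) :=
    congrArg₂ (· + Ideal.span {_} * ·) (idealI_eq_add (by lia) (by lia))
      (idealI_eq_add (q := m - 1) (by lia) (by lia))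
  rw [hsplit]
  simp only [unprojectionIdeal, baseIdeal, cyclicIdeal, Ideal.add_eq_sup, Ideal.map_sup,
    Ideal.map_mul, Ideal.map_span, Set.image_singleton]
  simp (discharger := lia) only [map_killCompl_renumber_idealI, map_mul, map_sub, hz₁, hT, hx,
    killCompl_renumber_Xv_of_lt, zero_mul, zero_sub, Ideal.span_singleton_neg]
  simp only [← Ideal.span_singleton_mul_span_singleton, ← Ideal.add_eq_sup]
  ring

end Unprojection

end CyclicUnprojection

open CyclicUnprojection in
theorem unprojection_cyclic_odd_general (k : Type*) [Field k] {a m : ℕ} (ha : 3 ≤ a) (hm : 3 ≤ m)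
    {Q : Ideal (MvPolynomial (Fin (m + 3)) k)} (hQ : Q = unprojectionIdeal k m a) :
    Ideal.Quotient.mk Q (Xv k (m + 3) (m + 1)) ∈
      nonZeroDivisors (MvPolynomial (Fin (m + 3)) k ⧸ Q) ∧
    Ideal.Quotient.mk (Ideal.span {Ideal.Quotient.mk Q (Xv k (m + 3) (m + 1))})
        (Ideal.Quotient.mk Q (Xv k (m + 3) (m + 2))) ∈
      nonZeroDivisors ((MvPolynomial (Fin (m + 3)) k ⧸ Q) ⧸
        Ideal.span {Ideal.Quotient.mk Q (Xv k (m + 3) (m + 1))}) ∧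
    Nonempty (((MvPolynomial (Fin (m + 3)) k ⧸ Q) ⧸
        Ideal.span {Ideal.Quotient.mk Q (Xv k (m + 3) (m + 1)),
          Ideal.Quotient.mk Q (Xv k (m + 3) (m + 2))}) ≃ₐ[k]
      (MvPolynomial (Fin (m + 1)) k ⧸ cyclicIdeal k (m + 1) (m + 1) a)) := by
  subst hQ
  refine ⟨mk_mem_nonZeroDivisors_iff.2 fun f => ?_, mk_mk_mem_nonZeroDivisors_iff.2 fun f => ?_, ?_⟩
  · exact mem_unprojectionIdeal_of_Xv_mul_mem (by lia) (by lia)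
  · exact mem_unprojectionIdeal_add_span_of_Xv_mul_mem (by lia)
  · rw [← map_unprojectionIdeal ha hm, ← Set.image_pair]
    exact ⟨quotQuotEquivQuotMap (killCompl_surjective _) _ (ker_killCompl_renumber (by lia))⟩

/-- Main theorem, `d` odd case. Let `d ≥ 5` be odd, `d + 1 < m`, `a = (d+1)/2`. In
`k[x_1,…,x_m,z_1,z_2,T]` (with `z_1, z_2, T` the last three variables) let
`Q = I_{a,2,m−1} + x_1x_m·I_{a−1,3,m−2} + T·I_{a−1,2,m−2} +
(z_1z_2T − x_1x_{m−1}x_m)·I_{a−2,3,m−3}` and `S = k[x_1,…,x_m,z_1,z_2,T]/Q`. Then the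
images of `z_1, z_2` form a regular sequence on `S` (`z_1` is a non-zero-divisor of `S` and
`z_2` is a non-zero-divisor of `S/(z_1)`), and
`S/(z_1,z_2) ≅ k[x_1,…,x_{m+1}]/(I_{a,2,m} + x_1x_{m+1}·I_{a−1,3,m−1}) = k[Δ(d,m+1)]`
as `k`-algebras. -/
theorem unprojection_cyclic_odd (k : Type*) [Field k] (d m : ℕ)
    (hd : Odd d) (hd5 : 5 ≤ d) (hm : d + 1 < m) (a : ℕ) (ha : a = (d + 1) / 2)
    (Q : Ideal (MvPolynomial (Fin (m + 3)) k))
    (hQ : Q = idealI k (m + 3) a 2 (m - 1) +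
      Ideal.span {Xv k (m + 3) 1 * Xv k (m + 3) m} * idealI k (m + 3) (a - 1) 3 (m - 2) +
      Ideal.span {Xv k (m + 3) (m + 3)} * idealI k (m + 3) (a - 1) 2 (m - 2) +
      Ideal.span {Xv k (m + 3) (m + 1) * Xv k (m + 3) (m + 2) * Xv k (m + 3) (m + 3) -
        Xv k (m + 3) 1 * Xv k (m + 3) (m - 1) * Xv k (m + 3) m} *
        idealI k (m + 3) (a - 2) 3 (m - 3)) :
    Ideal.Quotient.mk Q (Xv k (m + 3) (m + 1)) ∈
      nonZeroDivisors (MvPolynomial (Fin (m + 3)) k ⧸ Q) ∧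
    Ideal.Quotient.mk (Ideal.span {Ideal.Quotient.mk Q (Xv k (m + 3) (m + 1))})
        (Ideal.Quotient.mk Q (Xv k (m + 3) (m + 2))) ∈
      nonZeroDivisors ((MvPolynomial (Fin (m + 3)) k ⧸ Q) ⧸
        Ideal.span {Ideal.Quotient.mk Q (Xv k (m + 3) (m + 1))}) ∧
    Nonempty (((MvPolynomial (Fin (m + 3)) k ⧸ Q) ⧸
        Ideal.span {Ideal.Quotient.mk Q (Xv k (m + 3) (m + 1)),
          Ideal.Quotient.mk Q (Xv k (m + 3) (m + 2))}) ≃ₐ[k]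
      (MvPolynomial (Fin (m + 1)) k ⧸
        (idealI k (m + 1) a 2 m + Ideal.span {Xv k (m + 1) 1 * Xv k (m + 1) (m + 1)} *
          idealI k (m + 1) (a - 1) 3 (m - 1)))) :=
  unprojection_cyclic_odd_general k (by lia) (by lia) hQ
end

section
/- Let k be a field and m an integer with m ≥ 5. In k[x_1,…,x_m,z_1,z_2,T] let Q = I_{2,2,m−1} + x_1x_m·I_{1,3,m−2} + T·I_{1,2,m−2} + (z_1z_2T − x_1x_{m−1}x_m), and set S = k[x_1,…,x_m,z_1,z_2,T]/Q. Then the images of z_1, z_2 form a regular sequence on S, and S/(z_1,z_2) is isomorphic as a k-algebra to k[x_1,…,x_{m+1}]/(I_{2,2,m} + x_1x_{m+1}·I_{1,3,m−1}), which is the Stanley–Reisner ring k[Δ(3,m+1)] of the boundary complex of the 3-dimensional cyclic polytope with m+1 vertices. -/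
set_option synthInstance.maxHeartbeats 1000000
set_option maxHeartbeats 1000000

/-!
Write `Q = J + (g)` with `J` the monomial part of `Q` and `g = z₁z₂T − x₁x_{m−1}x_m`. Neither `z₁`
nor `z₂` occurs in the generators of `J`, so both are regular modulo `J`. If `z₁f = hg + j` with
`j ∈ J`, then `hg ∈ (z₁) + J`, which lies in the prime ideal `(z₁, x₂, …, x_{m−2})`. The binomial
`g` does not, so `h` does. Since each of `x₂, …, x_{m−2}` multiplies `g` into `J` (`x₂` because
`x₂x_{m−1}` is a generator of `I_{2,2,m−1}`), the equation can be divided by `z₁` modulo `Q`, and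
`z₁` is regular modulo `Q`.

Modulo `z₁` the binomial becomes the monomial `x₁x_{m−1}x_m`, so `z₂` is regular on the quotient,
and `J + (x₁x_{m−1}x_m)` is the Stanley–Reisner ideal of `Δ(3, m+1)` after renaming `x_m` to `T` and
`x_{m+1}` to `x_m`.
-/

section CommutativeAlgebra

variable {R S : Type*} [CommRing R] [CommRing S] [Algebra R S]

lemma algebraMap_mem_nonZeroDivisors_iff {r : R} :
    algebraMap R S r ∈ nonZeroDivisors S ↔ IsSMulRegular S r := by
  simp [isSMulRegular_iff_right_eq_zero_of_smul, mem_nonZeroDivisors_iff_left, Algebra.smul_def,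
    mul_comm]

lemma mk_mem_nonZeroDivisors_iff {I : Ideal R} {r : R} :
    Ideal.Quotient.mk I r ∈ nonZeroDivisors (R ⧸ I) ↔ IsSMulRegular (R ⧸ I) r :=
  algebraMap_mem_nonZeroDivisors_iff

lemma mk_mk_mem_nonZeroDivisors_iff {I J : Ideal R} {r : R} :
    Ideal.Quotient.mk (J.map (Ideal.Quotient.mk I)) (Ideal.Quotient.mk I r) ∈
        nonZeroDivisors ((R ⧸ I) ⧸ J.map (Ideal.Quotient.mk I)) ↔
      IsSMulRegular (R ⧸ I ⊔ J) r :=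
  algebraMap_mem_nonZeroDivisors_iff.trans <|
    (DoubleQuot.quotQuotEquivQuotSupₐ R I J).toLinearEquiv.isSMulRegular_congr r

lemma isSMulRegular_quotient_sup_span_singleton {J : Ideal R} {z g : R}
    (hz : IsSMulRegular (R ⧸ J) z)
    (hg : (Ideal.span {z} ⊔ J).colon {g} ≤ Ideal.span {z} ⊔ J.colon {g}) :
    IsSMulRegular (R ⧸ Ideal.span {g} ⊔ J) z := by
  simp only [isSMulRegular_quotient_iff_mem_of_smul_mem, smul_eq_mul,
    Ideal.mem_span_singleton_sup] at hz ⊢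
  rintro f ⟨h, j, hj, hjf⟩
  have hh : h ∈ (Ideal.span {z} ⊔ J).colon {g} :=
    Submodule.mem_colon_singleton.2 <|
      Ideal.mem_span_singleton_sup.2 ⟨f, -j, neg_mem hj, by linear_combination -hjf⟩
  obtain ⟨c, u, hu, rfl⟩ := Ideal.mem_span_singleton_sup.1 (hg hh)
  have hug : u * g ∈ J := Submodule.mem_colon_singleton.1 hu
  refine ⟨c, f - c * g, hz _ ?_, by ring⟩
  convert add_mem hug hj using 1
  linear_combination -hjf

lemma span_singleton_mul_sub_sup (z a b : R) :
    Ideal.span {z * a - b} ⊔ Ideal.span {z} = Ideal.span {b} ⊔ Ideal.span {z} := by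
  rw [← Ideal.span_singleton_neg b, sup_comm, sup_comm _ (Ideal.span {z}), ← Ideal.span_insert,
    ← Ideal.span_insert, ← Ideal.span_pair_add_mul_left z (-b) a]
  ring_nf

/-- The ideal `K` is extended from the subalgebra `A`, i.e. generated by elements of `A`. It is
stated through generators so that no inclusion `A → S` has to be carried around. -/
def IsExtendedFrom (A : Subalgebra R S) (K : Ideal S) : Prop :=
  ∃ G ⊆ (A : Set S), Ideal.span G = K

namespace IsExtendedFrom

variable {A : Subalgebra R S} {I J : Ideal S}

lemma span_singleton {g : S} (hg : g ∈ A) : IsExtendedFrom A (Ideal.span {g}) :=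
  ⟨{g}, Set.singleton_subset_iff.2 hg, rfl⟩

lemma sup (hI : IsExtendedFrom A I) (hJ : IsExtendedFrom A J) : IsExtendedFrom A (I ⊔ J) := by
  obtain ⟨G, hG, rfl⟩ := hI
  obtain ⟨H, hH, rfl⟩ := hJ
  exact ⟨G ∪ H, Set.union_subset hG hH, Ideal.span_union G H⟩

open scoped Pointwise in
lemma mul (hI : IsExtendedFrom A I) (hJ : IsExtendedFrom A J) : IsExtendedFrom A (I * J) := by
  obtain ⟨G, hG, rfl⟩ := hI
  obtain ⟨H, hH, rfl⟩ := hJ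
  exact ⟨G * H, Set.mul_subset_iff.2 fun g hg h hh => A.mul_mem (hG hg) (hH hh),
    (Ideal.span_mul_span' G H).symm⟩

end IsExtendedFrom

end CommutativeAlgebra

section PolynomialRings

open MvPolynomial

variable {R σ τ : Type*} [CommRing R]

lemma divMonomial_single_eq_zero {z : σ} {f : MvPolynomial σ R} (hf : f ∈ supported R {z}ᶜ) :
    f.divMonomial (Finsupp.single z 1) = 0 := by
  ext d
  rw [coeff_divMonomial, coeff_zero, ← notMem_support_iff]
  intro hd
  exact mem_supported.1 hf ((mem_vars_iff_mem_support z).2 ⟨_, hd, by simp⟩) rfl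

lemma modMonomial_single_mem_supported (z : σ) (f : MvPolynomial σ R) :
    f.modMonomial (Finsupp.single z 1) ∈ supported R {z}ᶜ := by
  rw [mem_supported]
  rintro i hi rfl
  obtain ⟨d, hd, hid⟩ := (mem_vars_iff_mem_support i).1 hi
  refine mem_support_iff.1 hd (coeff_modMonomial_of_le _ ?_)
  simpa [Nat.one_le_iff_ne_zero] using hid

lemma mul_divMonomial_single {z : σ} {g : MvPolynomial σ R} (hg : g ∈ supported R {z}ᶜ)
    (f : MvPolynomial σ R) :
    (f * g).divMonomial (Finsupp.single z 1) = f.divMonomial (Finsupp.single z 1) * g := by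
  conv_lhs => rw [← divMonomial_add_modMonomial_single f z]
  rw [add_mul, add_divMonomial, mul_assoc, X_mul_divMonomial,
    divMonomial_single_eq_zero (mul_mem (modMonomial_single_mem_supported z f) hg), add_zero]

lemma IsExtendedFrom.isSMulRegular_X {z : σ} {K : Ideal (MvPolynomial σ R)}
    (hK : IsExtendedFrom (supported R {z}ᶜ) K) :
    IsSMulRegular (MvPolynomial σ R ⧸ K) (X z : MvPolynomial σ R) := by
  obtain ⟨G, hG, rfl⟩ := hK
  have divMonomial_mem (f : MvPolynomial σ R) (hf : f ∈ Ideal.span G) :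
      f.divMonomial (Finsupp.single z 1) ∈ Ideal.span G := by
    induction hf using Submodule.closure_induction with
    | zero => simp
    | add f g _ _ hf hg => simpa only [add_divMonomial] using add_mem hf hg
    | smul_mem a g hg =>
      rw [smul_eq_mul, mul_divMonomial_single (hG hg)]
      exact Ideal.mul_mem_left _ _ (Ideal.subset_span hg)
  rw [isSMulRegular_quotient_iff_mem_of_smul_mem]
  intro f hf
  simpa [X_mul_divMonomial] using divMonomial_mem _ hf

lemma killCompl_surjective {e : σ → τ} (he : e.Injective) :
    Function.Surjective (killCompl he : MvPolynomial τ R →ₐ[R] MvPolynomial σ R) :=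
  Function.LeftInverse.surjective (killCompl_rename_app he)

lemma ker_killCompl {e : σ → τ} (he : e.Injective) :
    RingHom.ker (killCompl he : MvPolynomial τ R →ₐ[R] MvPolynomial σ R) =
      Ideal.span (X '' (Set.range e)ᶜ) := by
  apply le_antisymm
  · intro f hf
    rw [mem_ideal_span_X_image]
    intro d hd
    by_contra! hde
    have hsub : ↑d.support ⊆ Set.range e := fun i hi => by
      by_contra hie
      exact Finsupp.mem_support_iff.1 hi (hde i hie)
    have hcoeff := coeff_killCompl he (p := f) (s := d.comapDomain e he.injOn)
    rw [Finsupp.mapDomain_comapDomain e he d hsub, RingHom.mem_ker.1 hf, coeff_zero] at hcoeff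
    exact mem_support_iff.1 hd hcoeff.symm
  · rw [Ideal.span_le]
    rintro _ ⟨i, hi, rfl⟩
    simpa [killCompl] using fun j hj => (hi ⟨j, hj⟩).elim

lemma isPrime_span_X_image [IsDomain R] (s : Set σ) :
    (Ideal.span (X '' s : Set (MvPolynomial σ R))).IsPrime := by
  have hker := ker_killCompl (R := R) (Subtype.val_injective (p := (· ∈ sᶜ)))
  rw [Subtype.range_coe, compl_compl] at hker
  exact hker ▸ RingHom.ker_isPrime _

lemma ker_mkₐ_comp_killCompl {e : σ → τ} (he : e.Injective) (L : Ideal (MvPolynomial σ R)) :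
    RingHom.ker ((Ideal.Quotient.mkₐ R L).comp (killCompl he)) =
      L.map (rename (R := R) e) ⊔ Ideal.span (X '' (Set.range e)ᶜ) := by
  have hL : (L.map (rename (R := R) e)).map (killCompl he) = L := by
    rw [Ideal.map_mapₐ, killCompl_comp_rename]
    exact Ideal.map_id L
  have hker : RingHom.ker (Ideal.Quotient.mkₐ R L) = L := Ideal.mk_ker
  rw [← AlgHom.comap_ker, hker, ← ker_killCompl he,
    ← Ideal.comap_map_of_surjective' _ (killCompl_surjective he), hL]

/-- Adjoining new variables to `R[σ]` and then killing them again does not change a quotient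
of `R[σ]`. -/
noncomputable def quotientMapRenameSupEquiv {e : σ → τ} (he : e.Injective)
    (L : Ideal (MvPolynomial σ R)) :
    (MvPolynomial τ R ⧸ L.map (rename (R := R) e) ⊔ Ideal.span (X '' (Set.range e)ᶜ)) ≃ₐ[R]
      MvPolynomial σ R ⧸ L :=
  (Ideal.quotientEquivAlgOfEq R (ker_mkₐ_comp_killCompl he L).symm).trans
    (Ideal.quotientKerAlgEquivOfSurjective
      ((Ideal.Quotient.mkₐ_surjective R L).comp (killCompl_surjective he)))

end PolynomialRings

section SeparatedMonomials

open MvPolynomial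

variable {k : Type*} [Field k] {n a p q : ℕ}

lemma Xv_succ (i : Fin n) : Xv k n (i + 1) = X i := by
  simp [Xv]

lemma rename_Xv {n' s t : ℕ} {e : Fin n → Fin n'} (i : Fin n) (hs : i + 1 = s) (ht : e i + 1 = t) :
    rename e (Xv k n s) = Xv k n' t := by
  rw [← hs, ← ht, Xv_succ, Xv_succ, rename_X]

lemma Xv_mem_supported {z : Fin n} {t : ℕ} (ht : t ≠ z + 1) : Xv k n t ∈ supported k {z}ᶜ := by
  unfold Xv
  split_ifs with h
  · refine X_mem_supported.2 fun hz => ht ?_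
    have := congrArg Fin.val (Set.mem_singleton_iff.1 hz)
    grind
  · exact zero_mem _

lemma span_Xv_image (s : Set ℕ) :
    Ideal.span (Xv k n '' s) = Ideal.span (X '' {i : Fin n | (i : ℕ) + 1 ∈ s}) := by
  apply le_antisymm <;> rw [Ideal.span_le]
  · rintro _ ⟨t, ht, rfl⟩
    unfold Xv
    split_ifs with h
    · exact Ideal.subset_span ⟨_, by grind, rfl⟩
    · exact zero_mem _
  · rintro _ ⟨i, hi, rfl⟩
    exact Ideal.subset_span ⟨_, hi, Xv_succ i⟩

lemma isPrime_span_Xv_image (s : Set ℕ) : (Ideal.span (Xv k n '' s)).IsPrime :=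
  span_Xv_image (k := k) s ▸ isPrime_span_X_image _

lemma Xv_mem_span_Xv_image_iff {s : Set ℕ} {t : ℕ} (h1 : 1 ≤ t) (hn : t ≤ n) :
    Xv k n t ∈ Ideal.span (Xv k n '' s) ↔ t ∈ s := by
  obtain ⟨i, rfl⟩ : ∃ i : Fin n, (i : ℕ) + 1 = t := ⟨⟨t - 1, by omega⟩, by grind⟩
  simp [span_Xv_image, Xv_succ, mem_ideal_span_X_image, support_X, Finsupp.single_apply]

lemma mem_Icc_of_separated {t : ℕ → ℕ} (h0 : p ≤ t 0) (hlast : t (a - 1) ≤ q)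
    (hsep : ∀ j, j + 1 < a → t j + 2 ≤ t (j + 1)) {j : ℕ} (hj : j < a) : t j ∈ Set.Icc p q := by
  have mono {i j : ℕ} (hij : i ≤ j) (hja : j < a) : t i ≤ t j := by
    induction j, hij using Nat.le_induction with
    | base => rfl
    | succ j _ ih => exact (ih (by omega)).trans (by grind)
  exact ⟨h0.trans (mono j.zero_le hj), (mono (by omega) (by omega)).trans hlast⟩

lemma idealI_mono {p' q' : ℕ} (hp : p' ≤ p) (hq : q ≤ q') : idealI k n a p q ≤ idealI k n a p' q' :=
  Ideal.span_mono fun _ ⟨t, h0, hlast, ht⟩ => ⟨t, hp.trans h0, hlast.trans hq, ht⟩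

lemma prod_Xv_mem_idealI {t : ℕ → ℕ} (h0 : p ≤ t 0) (hlast : t (a - 1) ≤ q)
    (hsep : ∀ j, j + 1 < a → t j + 2 ≤ t (j + 1)) :
    ∏ j ∈ Finset.range a, Xv k n (t j) ∈ idealI k n a p q :=
  Ideal.subset_span ⟨t, h0, hlast, hsep, rfl⟩

lemma isExtendedFrom_idealI {A : Subalgebra k (MvPolynomial (Fin n) k)}
    (hA : ∀ t ∈ Set.Icc p q, Xv k n t ∈ A) : IsExtendedFrom A (idealI k n a p q) := by
  refine ⟨_, ?_, rfl⟩
  rintro _ ⟨t, h0, hlast, hsep, rfl⟩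
  exact A.prod_mem fun j hj =>
    hA _ (mem_Icc_of_separated h0 hlast hsep (Finset.mem_range.1 hj))

lemma map_idealI {n' : ℕ} (φ : MvPolynomial (Fin n) k →ₐ[k] MvPolynomial (Fin n') k)
    (hφ : ∀ t ∈ Set.Icc p q, φ (Xv k n t) = Xv k n' t) :
    (idealI k n a p q).map φ = idealI k n' a p q := by
  have map_prod {t : ℕ → ℕ} (h0 : p ≤ t 0) (hlast : t (a - 1) ≤ q)
      (hsep : ∀ j, j + 1 < a → t j + 2 ≤ t (j + 1)) :
      φ (∏ j ∈ Finset.range a, Xv k n (t j)) = ∏ j ∈ Finset.range a, Xv k n' (t j) := by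
    rw [_root_.map_prod]
    exact Finset.prod_congr rfl fun j hj =>
      hφ _ (mem_Icc_of_separated h0 hlast hsep (Finset.mem_range.1 hj))
  rw [idealI, Ideal.map_span, idealI]
  congr 1
  ext f
  constructor
  · rintro ⟨_, ⟨t, h0, hlast, hsep, rfl⟩, rfl⟩
    exact ⟨t, h0, hlast, hsep, map_prod h0 hlast hsep⟩
  · rintro ⟨t, h0, hlast, hsep, rfl⟩
    exact ⟨_, ⟨t, h0, hlast, hsep, rfl⟩, map_prod h0 hlast hsep⟩

lemma idealI_one : idealI k n 1 p q = Ideal.span (Xv k n '' Set.Icc p q) := by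
  rw [idealI]
  congr 1
  ext f
  constructor
  · rintro ⟨t, h0, hlast, -, rfl⟩
    exact ⟨t 0, ⟨h0, hlast⟩, by simp⟩
  · rintro ⟨t, ht, rfl⟩
    exact ⟨fun _ => t, ht.1, ht.2, by grind, by simp⟩

lemma span_singleton_sup_idealI_one (s : ℕ) :
    Ideal.span {Xv k n s} ⊔ idealI k n 1 p q =
      Ideal.span (Xv k n '' insert s (Set.Icc p q)) := by
  rw [idealI_one, ← Ideal.span_insert, Set.image_insert_eq]

lemma Xv_mem_idealI_one {t : ℕ} (ht : t ∈ Set.Icc p q) : Xv k n t ∈ idealI k n 1 p q :=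
  idealI_one (k := k) ▸ Ideal.subset_span ⟨t, ht, rfl⟩

lemma Xv_mul_Xv_mem_idealI_two {s t : ℕ} (hs : p ≤ s) (hst : s + 2 ≤ t) (ht : t ≤ q) :
    Xv k n s * Xv k n t ∈ idealI k n 2 p q := by
  have hmem : ∏ j ∈ Finset.range 2, Xv k n (s + j * (t - s)) ∈ idealI k n 2 p q :=
    prod_Xv_mem_idealI (by omega) (by omega) fun j hj => by
      obtain rfl : j = 0 := by omega
      omega
  rwa [Finset.prod_range_succ, Finset.prod_range_one, zero_mul, one_mul, add_zero,
    Nat.add_sub_cancel' (by omega)] at hmem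

lemma idealI_one_succ (hp : p ≤ q + 1) :
    idealI k n 1 p (q + 1) = idealI k n 1 p q ⊔ Ideal.span {Xv k n (q + 1)} := by
  simp only [idealI_one, ← Ideal.span_union, ← Set.image_singleton (f := Xv k n),
    ← Set.image_union]
  congr 2
  ext t
  simp only [Set.mem_Icc, Set.mem_union, Set.mem_singleton_iff]
  omega

lemma idealI_add_two_le : idealI k n (a + 2) p q ≤ idealI k n (a + 1) p (q - 2) := by
  refine Ideal.span_le.2 ?_
  rintro _ ⟨t, h0, hlast, hsep, rfl⟩
  rw [SetLike.mem_coe, Finset.prod_range_succ]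
  refine Ideal.mul_mem_right _ _ (prod_Xv_mem_idealI h0 ?_ fun j hj => hsep j (by omega))
  grind [hsep a (by omega)]

lemma idealI_add_two_add_two :
    idealI k n (a + 2) p (q + 2) =
      idealI k n (a + 2) p (q + 1) ⊔ Ideal.span {Xv k n (q + 2)} * idealI k n (a + 1) p q := by
  apply le_antisymm
  · refine Ideal.span_le.2 ?_
    rintro _ ⟨t, h0, hlast, hsep, rfl⟩
    rw [SetLike.mem_coe]
    obtain hq | hq : t (a + 1) ≤ q + 1 ∨ t (a + 1) = q + 2 := by grind
    · exact Ideal.mem_sup_left (prod_Xv_mem_idealI h0 hq hsep)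
    · rw [Finset.prod_range_succ, hq]
      have htail : ∏ j ∈ Finset.range (a + 1), Xv k n (t j) ∈ idealI k n (a + 1) p q :=
        prod_Xv_mem_idealI h0 (by grind [hsep a (by omega)]) fun j hj => hsep j (by omega)
      exact Ideal.mem_sup_right
        (Ideal.mul_mem_mul_rev (Ideal.mem_span_singleton_self _) htail)
  · refine sup_le (idealI_mono le_rfl (by omega)) ?_
    rw [idealI, Ideal.span_mul_span', Ideal.span_le]
    rintro _ ⟨_, rfl, _, ⟨t, h0, hlast, hsep, rfl⟩, rfl⟩
    have hprod : Xv k n (q + 2) * ∏ j ∈ Finset.range (a + 1), Xv k n (t j) =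
        ∏ j ∈ Finset.range (a + 2), Xv k n (if j ≤ a then t j else q + 2) := by
      rw [Finset.prod_range_succ _ (a + 1), mul_comm, if_neg (by omega)]
      congr 1
      exact Finset.prod_congr rfl fun j hj => by rw [if_pos (by grind)]
    dsimp only
    rw [SetLike.mem_coe, hprod]
    exact prod_Xv_mem_idealI (by simpa using h0) (by simp) (by grind)

end SeparatedMonomials

section Unprojection

open MvPolynomial

variable (k : Type*) [Field k] (m : ℕ)

/-- The ideal `I_{2,2,m} + x_1x_{m+1}·I_{1,3,m−1}` of `k[x_1, …, x_{m+1}]`, the Stanley–Reisner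
ideal of `Δ(3, m+1)`. -/
noncomputable def cyclicBoundaryIdeal : Ideal (MvPolynomial (Fin (m + 1)) k) :=
  idealI k (m + 1) 2 2 m ⊔
    Ideal.span {Xv k (m + 1) 1 * Xv k (m + 1) (m + 1)} * idealI k (m + 1) 1 3 (m - 1)

/-- The part `I_{2,2,m−1} + x_1x_m·I_{1,3,m−2} + T·I_{1,2,m−2}` of the unprojection ideal that is
generated by monomials. -/
noncomputable def unprojectionMonomialIdeal : Ideal (MvPolynomial (Fin (m + 3)) k) :=
  idealI k (m + 3) 2 2 (m - 1) ⊔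
    Ideal.span {Xv k (m + 3) 1 * Xv k (m + 3) m} * idealI k (m + 3) 1 3 (m - 2) ⊔
    Ideal.span {Xv k (m + 3) (m + 3)} * idealI k (m + 3) 1 2 (m - 2)

/-- The binomial `z_1z_2T − x_1x_{m−1}x_m`, where `z_1, z_2, T` are the last three variables. -/
noncomputable def unprojectionBinomial : MvPolynomial (Fin (m + 3)) k :=
  Xv k (m + 3) (m + 1) * Xv k (m + 3) (m + 2) * Xv k (m + 3) (m + 3) -
    Xv k (m + 3) 1 * Xv k (m + 3) (m - 1) * Xv k (m + 3) m

/-- The ideal `Q` of the unprojection ring `S`. -/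
noncomputable def unprojectionIdeal : Ideal (MvPolynomial (Fin (m + 3)) k) :=
  unprojectionMonomialIdeal k m ⊔ Ideal.span {unprojectionBinomial k m}

variable {k m}

lemma isExtendedFrom_unprojectionMonomialIdeal (hm : 1 ≤ m) {z : Fin (m + 3)} (hmz : m ≤ z)
    (hz : z < m + 2) : IsExtendedFrom (supported k {z}ᶜ) (unprojectionMonomialIdeal k m) := by
  have hI {a p q : ℕ} (hq : q < m) : IsExtendedFrom (supported k {z}ᶜ) (idealI k (m + 3) a p q) :=
    isExtendedFrom_idealI fun t ht => Xv_mem_supported (by grind)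
  refine ((hI (by omega)).sup (.mul (.span_singleton (mul_mem ?_ ?_)) (hI (by omega)))).sup
    (.mul (.span_singleton ?_) (hI (by omega)))
  all_goals exact Xv_mem_supported (by omega)

lemma unprojectionMonomialIdeal_le_idealI_one :
    unprojectionMonomialIdeal k m ≤ idealI k (m + 3) 1 2 (m - 2) := by
  have hsep : idealI k (m + 3) 2 2 (m - 1) ≤ idealI k (m + 3) 1 2 (m - 2) :=
    (idealI_add_two_le (a := 0)).trans (idealI_mono le_rfl (by omega))
  have hvars : idealI k (m + 3) 1 3 (m - 2) ≤ idealI k (m + 3) 1 2 (m - 2) :=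
    idealI_mono (by omega) le_rfl
  rw [unprojectionMonomialIdeal, sup_le_iff, sup_le_iff]
  exact ⟨⟨hsep, Ideal.mul_le_right.trans hvars⟩, Ideal.mul_le_right⟩

lemma mul_Xv_mem_unprojectionMonomialIdeal (hm : 5 ≤ m) {t : ℕ} (ht : t ∈ Set.Icc 2 (m - 2)) :
    Xv k (m + 3) 1 * Xv k (m + 3) (m - 1) * Xv k (m + 3) m * Xv k (m + 3) t ∈
      unprojectionMonomialIdeal k m := by
  rw [unprojectionMonomialIdeal]
  refine Ideal.mem_sup_left ?_
  obtain rfl | h3 := ht.1.eq_or_lt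
  · have hmem : Xv k (m + 3) 2 * Xv k (m + 3) (m - 1) ∈ idealI k (m + 3) 2 2 (m - 1) :=
      Xv_mul_Xv_mem_idealI_two le_rfl (by omega) le_rfl
    have hfactor : Xv k (m + 3) 1 * Xv k (m + 3) (m - 1) * Xv k (m + 3) m * Xv k (m + 3) 2 =
        Xv k (m + 3) 1 * Xv k (m + 3) m * (Xv k (m + 3) 2 * Xv k (m + 3) (m - 1)) := by ring
    rw [hfactor]
    exact Ideal.mem_sup_left (Ideal.mul_mem_left _ _ hmem)
  · have hmem : Xv k (m + 3) t ∈ idealI k (m + 3) 1 3 (m - 2) := Xv_mem_idealI_one ⟨h3, ht.2⟩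
    have hfactor : Xv k (m + 3) 1 * Xv k (m + 3) (m - 1) * Xv k (m + 3) m * Xv k (m + 3) t =
        Xv k (m + 3) (m - 1) * (Xv k (m + 3) 1 * Xv k (m + 3) m * Xv k (m + 3) t) := by ring
    rw [hfactor]
    exact Ideal.mem_sup_right (Ideal.mul_mem_left _ _
      (Ideal.mul_mem_mul (Ideal.mem_span_singleton_self _) hmem))

lemma idealI_one_le_colon_unprojectionBinomial (hm : 5 ≤ m) :
    idealI k (m + 3) 1 2 (m - 2) ≤ (unprojectionMonomialIdeal k m).colon
      {unprojectionBinomial k m} := by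
  rw [idealI_one, Ideal.span_le]
  rintro _ ⟨t, ht, rfl⟩
  have hT : Xv k (m + 3) (m + 3) * Xv k (m + 3) t ∈ unprojectionMonomialIdeal k m :=
    Ideal.mem_sup_right
      (Ideal.mul_mem_mul (Ideal.mem_span_singleton_self _) (Xv_mem_idealI_one ht))
  refine Submodule.mem_colon_singleton.2 ?_
  convert sub_mem (Ideal.mul_mem_left _ (Xv k (m + 3) (m + 1) * Xv k (m + 3) (m + 2)) hT)
    (mul_Xv_mem_unprojectionMonomialIdeal hm ht) using 1
  rw [smul_eq_mul, unprojectionBinomial]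
  ring

lemma unprojectionBinomial_notMem_span_Xv (hm : 2 ≤ m) :
    unprojectionBinomial k m ∉
      Ideal.span (Xv k (m + 3) '' insert (m + 1) (Set.Icc 2 (m - 2))) := by
  have hprime := isPrime_span_Xv_image (k := k) (n := m + 3) (insert (m + 1) (Set.Icc 2 (m - 2)))
  have hmem {t : ℕ} (h1 : 1 ≤ t) (ht : t ≤ m + 3) :=
    Xv_mem_span_Xv_image_iff (k := k) (s := insert (m + 1) (Set.Icc 2 (m - 2))) h1 ht
  rw [unprojectionBinomial, mul_assoc (Xv k (m + 3) (m + 1)), Submodule.sub_mem_iff_right _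
    (Ideal.mul_mem_right _ _ ((hmem (by omega) (by omega)).2 (by simp)))]
  simp only [hprime.mul_mem_iff_mem_or_mem]
  rw [hmem, hmem, hmem] <;> grind

lemma isSMulRegular_unprojectionIdeal (hm : 5 ≤ m) :
    IsSMulRegular (MvPolynomial (Fin (m + 3)) k ⧸ unprojectionIdeal k m)
      (Xv k (m + 3) (m + 1)) := by
  rw [unprojectionIdeal, sup_comm]
  refine isSMulRegular_quotient_sup_span_singleton ?_ ?_
  · rw [Xv_succ (⟨m, by omega⟩ : Fin (m + 3))]
    exact (isExtendedFrom_unprojectionMonomialIdeal (by omega) le_rfl (by simp)).isSMulRegular_X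
  · intro h hh
    have hprod := sup_le_sup_left unprojectionMonomialIdeal_le_idealI_one _
      (Submodule.mem_colon_singleton.1 hh)
    refine sup_le_sup_left (idealI_one_le_colon_unprojectionBinomial hm) _ ?_
    rw [span_singleton_sup_idealI_one] at hprod ⊢
    exact ((isPrime_span_Xv_image _).mem_or_mem hprod).resolve_right
      (unprojectionBinomial_notMem_span_Xv (by omega))

lemma unprojectionIdeal_sup_span :
    unprojectionIdeal k m ⊔ Ideal.span {Xv k (m + 3) (m + 1)} =
      unprojectionMonomialIdeal k m ⊔
        Ideal.span {Xv k (m + 3) 1 * Xv k (m + 3) (m - 1) * Xv k (m + 3) m} ⊔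
        Ideal.span {Xv k (m + 3) (m + 1)} := by
  rw [unprojectionIdeal, unprojectionBinomial, mul_assoc (Xv k (m + 3) (m + 1)), sup_assoc,
    span_singleton_mul_sub_sup, ← sup_assoc]

lemma isSMulRegular_unprojectionIdeal_sup_span (hm : 1 ≤ m) :
    IsSMulRegular (MvPolynomial (Fin (m + 3)) k ⧸ unprojectionIdeal k m ⊔
      Ideal.span {Xv k (m + 3) (m + 1)}) (Xv k (m + 3) (m + 2)) := by
  rw [unprojectionIdeal_sup_span, Xv_succ (⟨m + 1, by omega⟩ : Fin (m + 3))]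
  refine (((isExtendedFrom_unprojectionMonomialIdeal hm (by simp) (by simp)).sup
    (.span_singleton (mul_mem (mul_mem ?_ ?_) ?_))).sup (.span_singleton ?_)).isSMulRegular_X
  all_goals exact Xv_mem_supported (by grind)

/-- The embedding of the variables of `k[Δ(3, m+1)]` into those of `S` which misses `z_1, z_2`:
it sends `x_m ↦ T` and `x_{m+1} ↦ x_m`, and fixes the other variables. -/
def boundaryVariableEmbedding (m : ℕ) (i : Fin (m + 1)) : Fin (m + 3) :=
  if (i : ℕ) + 1 < m then ⟨i, by omega⟩
  else if (i : ℕ) + 1 = m then ⟨m + 2, by omega⟩ else ⟨m - 1, by omega⟩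

lemma boundaryVariableEmbedding_injective : (boundaryVariableEmbedding m).Injective := by
  intro i j hij
  unfold boundaryVariableEmbedding at hij
  grind

lemma X_image_compl_range_boundaryVariableEmbedding (hm : 1 ≤ m) :
    X '' (Set.range (boundaryVariableEmbedding m))ᶜ =
      {Xv k (m + 3) (m + 1), Xv k (m + 3) (m + 2)} := by
  have hrange : (Set.range (boundaryVariableEmbedding m))ᶜ =
      {⟨m, by omega⟩, ⟨m + 1, by omega⟩} := by
    ext i
    constructor
    · intro hi
      by_contra hne
      simp only [Set.mem_insert_iff, Set.mem_singleton_iff, Fin.ext_iff] at hne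
      refine hi ⟨⟨if i < m - 1 then i else if i = m - 1 then m else m - 1, by grind⟩, ?_⟩
      grind [boundaryVariableEmbedding]
    · rintro (rfl | rfl) ⟨j, hj⟩ <;> unfold boundaryVariableEmbedding at hj <;> grind
  rw [hrange, Set.image_pair, ← Xv_succ, ← Xv_succ]

lemma rename_boundaryVariableEmbedding_of_lt {t : ℕ} (h1 : 1 ≤ t) (ht : t < m) :
    rename (boundaryVariableEmbedding m) (Xv k (m + 1) t) = Xv k (m + 3) t :=
  rename_Xv ⟨t - 1, by omega⟩ (by grind) (by grind [boundaryVariableEmbedding])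

lemma rename_boundaryVariableEmbedding_self (hm : 1 ≤ m) :
    rename (boundaryVariableEmbedding m) (Xv k (m + 1) m) = Xv k (m + 3) (m + 3) :=
  rename_Xv ⟨m - 1, by omega⟩ (by grind) (by grind [boundaryVariableEmbedding])

lemma rename_boundaryVariableEmbedding_succ (hm : 1 ≤ m) :
    rename (boundaryVariableEmbedding m) (Xv k (m + 1) (m + 1)) = Xv k (m + 3) m :=
  rename_Xv (Fin.last m) rfl (by grind [boundaryVariableEmbedding])

lemma cyclicBoundaryIdeal_eq_sup (hm : 4 ≤ m) :
    cyclicBoundaryIdeal k m =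
      idealI k (m + 1) 2 2 (m - 1) ⊔
        Ideal.span {Xv k (m + 1) m} * idealI k (m + 1) 1 2 (m - 2) ⊔
        Ideal.span {Xv k (m + 1) 1 * Xv k (m + 1) (m + 1)} *
          (idealI k (m + 1) 1 3 (m - 2) ⊔ Ideal.span {Xv k (m + 1) (m - 1)}) := by
  obtain ⟨r, rfl⟩ := Nat.exists_eq_add_of_le' hm
  rw [cyclicBoundaryIdeal]
  congr 1
  · exact idealI_add_two_add_two (a := 0)
  · congr 1
    exact idealI_one_succ (by omega)

lemma map_cyclicBoundaryIdeal (hm : 4 ≤ m) :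
    (cyclicBoundaryIdeal k m).map (rename (R := k) (boundaryVariableEmbedding m)) =
      unprojectionMonomialIdeal k m ⊔
        Ideal.span {Xv k (m + 3) 1 * Xv k (m + 3) (m - 1) * Xv k (m + 3) m} := by
  have hfix {a p q : ℕ} (hp : 1 ≤ p) (hq : q < m) :
      (idealI k (m + 1) a p q).map (rename (R := k) (boundaryVariableEmbedding m)) =
        idealI k (m + 3) a p q :=
    map_idealI _ fun t ht =>
      rename_boundaryVariableEmbedding_of_lt (hp.trans ht.1) (ht.2.trans_lt hq)
  rw [cyclicBoundaryIdeal_eq_sup hm]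
  simp only [Ideal.map_sup, Ideal.map_mul, Ideal.map_span, Set.image_singleton, map_mul]
  rw [hfix, hfix, hfix, rename_boundaryVariableEmbedding_self,
    rename_boundaryVariableEmbedding_succ, rename_boundaryVariableEmbedding_of_lt,
    rename_boundaryVariableEmbedding_of_lt]
  · rw [Ideal.mul_sup, Ideal.span_singleton_mul_span_singleton, unprojectionMonomialIdeal,
      mul_right_comm (Xv k (m + 3) 1)]
    simp only [sup_assoc, sup_left_comm, sup_comm]
  all_goals omega

lemma unprojectionIdeal_sup_span_pair (hm : 4 ≤ m) :
    unprojectionIdeal k m ⊔ Ideal.span {Xv k (m + 3) (m + 1), Xv k (m + 3) (m + 2)} =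
      (cyclicBoundaryIdeal k m).map (rename (R := k) (boundaryVariableEmbedding m)) ⊔
        Ideal.span (X '' (Set.range (boundaryVariableEmbedding m))ᶜ) := by
  rw [X_image_compl_range_boundaryVariableEmbedding (by omega), Ideal.span_insert, ← sup_assoc,
    ← sup_assoc, unprojectionIdeal_sup_span, map_cyclicBoundaryIdeal hm]

/-- Killing `z_1` and `z_2` in the unprojection ring gives `k[Δ(3, m+1)]`, with `T` in the place
of `x_m` and `x_m` in the place of `x_{m+1}`. -/
noncomputable def unprojectionQuotientEquiv (hm : 4 ≤ m) :
    ((MvPolynomial (Fin (m + 3)) k ⧸ unprojectionIdeal k m) ⧸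
      (Ideal.span {Xv k (m + 3) (m + 1), Xv k (m + 3) (m + 2)}).map
        (Ideal.Quotient.mk (unprojectionIdeal k m))) ≃ₐ[k]
      MvPolynomial (Fin (m + 1)) k ⧸ cyclicBoundaryIdeal k m :=
  (DoubleQuot.quotQuotEquivQuotSupₐ k _ _).trans <|
    (Ideal.quotientEquivAlgOfEq k (unprojectionIdeal_sup_span_pair hm)).trans <|
      quotientMapRenameSupEquiv boundaryVariableEmbedding_injective _

end Unprojection

/-- Unprojection for `d = 3`. Let `m ≥ 5`. In `k[x_1,…,x_m,z_1,z_2,T]` (with `z_1, z_2, T`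
the last three variables) let
`Q = I_{2,2,m−1} + x_1x_m·I_{1,3,m−2} + T·I_{1,2,m−2} + (z_1z_2T − x_1x_{m−1}x_m)` and
`S = k[x_1,…,x_m,z_1,z_2,T]/Q`. Then the images of `z_1, z_2` form a regular sequence on
`S`, and `S/(z_1,z_2) ≅ k[x_1,…,x_{m+1}]/(I_{2,2,m} + x_1x_{m+1}·I_{1,3,m−1}) = k[Δ(3,m+1)]`
as `k`-algebras. -/
theorem unprojection_cyclic_three (k : Type*) [Field k] (m : ℕ) (hm : 5 ≤ m)
    (Q : Ideal (MvPolynomial (Fin (m + 3)) k))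
    (hQ : Q = idealI k (m + 3) 2 2 (m - 1) +
      Ideal.span {Xv k (m + 3) 1 * Xv k (m + 3) m} * idealI k (m + 3) 1 3 (m - 2) +
      Ideal.span {Xv k (m + 3) (m + 3)} * idealI k (m + 3) 1 2 (m - 2) +
      Ideal.span {Xv k (m + 3) (m + 1) * Xv k (m + 3) (m + 2) * Xv k (m + 3) (m + 3) -
        Xv k (m + 3) 1 * Xv k (m + 3) (m - 1) * Xv k (m + 3) m}) :
    Ideal.Quotient.mk Q (Xv k (m + 3) (m + 1)) ∈
      nonZeroDivisors (MvPolynomial (Fin (m + 3)) k ⧸ Q) ∧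
    Ideal.Quotient.mk (Ideal.span {Ideal.Quotient.mk Q (Xv k (m + 3) (m + 1))})
        (Ideal.Quotient.mk Q (Xv k (m + 3) (m + 2))) ∈
      nonZeroDivisors ((MvPolynomial (Fin (m + 3)) k ⧸ Q) ⧸
        Ideal.span {Ideal.Quotient.mk Q (Xv k (m + 3) (m + 1))}) ∧
    Nonempty (((MvPolynomial (Fin (m + 3)) k ⧸ Q) ⧸
        Ideal.span {Ideal.Quotient.mk Q (Xv k (m + 3) (m + 1)),
          Ideal.Quotient.mk Q (Xv k (m + 3) (m + 2))}) ≃ₐ[k]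
      (MvPolynomial (Fin (m + 1)) k ⧸
        (idealI k (m + 1) 2 2 m + Ideal.span {Xv k (m + 1) 1 * Xv k (m + 1) (m + 1)} *
          idealI k (m + 1) 1 3 (m - 1)))) := by
  obtain rfl : Q = unprojectionIdeal k m := hQ
  refine ⟨mk_mem_nonZeroDivisors_iff.2 (isSMulRegular_unprojectionIdeal hm), ?_, ?_⟩
  · rw [← Set.image_singleton, ← Ideal.map_span]
    exact mk_mk_mem_nonZeroDivisors_iff.2 (isSMulRegular_unprojectionIdeal_sup_span (by omega))
  · rw [← Set.image_pair, ← Ideal.map_span]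
    exact ⟨unprojectionQuotientEquiv (by omega)⟩
end
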